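/- Let U be a bounded connected open set in ℂ^m. Then there exist a sequence of injective holomorphic maps F_j : B^m(0,1) → U and numbers 0 < s_j < 1, j = 1,2,…, such that: (i) F_{j+1}(B^m(0,s_{j+1})) ⊇ F_j(B^m(0,s_j)) for all j ≥ 1, and (ii) vol(F_j(B^m(0,s_j))) → vol(U) as j → ∞. -/

import Mathlib

/-!
By iteration it suffices to enlarge the image of a ball until it has measure greater than any given
`c < μ U`. The Besicovitch covering theorem reduces this to engulfing finitely many disjoint closed
balls, which can be done one after the other: `U` minus a closed ball is still connected, so inside
the complement of a slightly larger ball the image can be led close to the next ball, and then made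
to swallow it.

The essential step is the last one. Let `F` embed the unit ball into `U`, let `d` be the distance
from `y` to `F (closedBall 0 a)`, and suppose that `ball y d ⊆ U`. At a nearest point `F (a e)` the
derivative of `F` carries outward normal directions into each other, so that a conformal affine map
`A` exists which agrees with `F` at `a e`, matches its normal derivative there, and carries a ball
beyond `a e` onto `ball y d`. On the skeleton consisting of a slightly smaller ball around `0`, a
segment through `a e` and a slightly smaller ball beyond it, `F` and `A` are interpolated with a
complex logistic function in place of the step function. For a steep enough step this gives an
embedding of a neighbourhood of the skeleton.

An explicit map `z e + w ↦ φ z e + μ z w`, the sum of a homothety, a thin logarithmic neck and a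
ball automorphism, embeds the unit ball in any given neighbourhood of the skeleton and covers almost
all of its two balls. The composition of both embeddings engulfs the ball.
-/

open Metric MeasureTheory

noncomputable instance {m : ℕ} : MeasurableSpace (EuclideanSpace ℂ (Fin m)) := borel _
instance {m : ℕ} : BorelSpace (EuclideanSpace ℂ (Fin m)) := ⟨rfl⟩
noncomputable instance {m : ℕ} : InnerProductSpace ℝ (EuclideanSpace ℂ (Fin m)) :=
  InnerProductSpace.rclikeToReal ℂ _

/-- Lebesgue measure on `ℂ^m ≅ ℝ^{2m}`. -/
noncomputable instance {m : ℕ} : MeasureSpace (EuclideanSpace ℂ (Fin m)) :=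
  measureSpaceOfInnerProductSpace

/-! ### Injective immersions and their images -/

section Immersion
open Set Filter Topology

variable {𝕜 E F : Type*} [RCLike 𝕜] [NormedAddCommGroup E] [NormedSpace 𝕜 E]
  [FiniteDimensional 𝕜 E] [NormedAddCommGroup F] [NormedSpace 𝕜 F]

lemma exists_pos_mul_norm_le_of_injective {L : E →L[𝕜] F} (hL : Function.Injective L) :
    ∃ c > 0, ∀ u, c * ‖u‖ ≤ ‖L u‖ := by
  obtain ⟨K, hK, hLK⟩ := (L : E →ₗ[𝕜] F).exists_antilipschitzWith (LinearMap.ker_eq_bot.2 hL)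
  refine ⟨(K : ℝ)⁻¹, by positivity, fun u => ?_⟩
  rw [inv_mul_le_iff₀ (by positivity)]
  simpa using hLK.le_mul_dist u 0

lemma exists_mem_nhds_injOn_of_injective_fderiv {G : E → F} {x : E} (hG : ContDiffAt 𝕜 1 G x)
    (hi : Function.Injective (fderiv 𝕜 G x)) : ∃ N ∈ 𝓝 x, InjOn G N := by
  obtain ⟨c, hc, hcG⟩ := exists_pos_mul_norm_le_of_injective hi
  have hlittle :=
    (hasStrictFDerivAt_iff_isLittleO.1 (hG.hasStrictFDerivAt one_ne_zero)).def (half_pos hc)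
  obtain ⟨S, hS, T, hT, hST⟩ := mem_nhds_prod_iff.1 hlittle
  refine ⟨S ∩ T, inter_mem hS hT, fun u hu v hv huv => ?_⟩
  have hle : ‖fderiv 𝕜 G x (u - v)‖ ≤ c / 2 * ‖u - v‖ := by
    simpa only [mem_ofPred_eq, huv, sub_self, zero_sub, norm_neg] using
      hST (show (u, v) ∈ S ×ˢ T from ⟨hu.1, hv.2⟩)
  have : ‖u - v‖ = 0 := by nlinarith [norm_nonneg (u - v), hcG (u - v)]
  exact sub_eq_zero.1 (norm_eq_zero.1 this)

lemma eventually_injective_fderiv {G : E → F} {x : E} (hG : ContDiffAt 𝕜 1 G x)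
    (hi : Function.Injective (fderiv 𝕜 G x)) :
    ∀ᶠ u in 𝓝 x, Function.Injective (fderiv 𝕜 G u) :=
  (hG.continuousAt_fderiv one_ne_zero).eventually_mem
    (ContinuousLinearMap.isOpen_injective.mem_nhds hi)

lemma isOpen_image_of_injective_fderiv {G : E → E} {S : Set E} (hS : IsOpen S)
    (hG : ∀ x ∈ S, ContDiffAt 𝕜 1 G x) (hi : ∀ x ∈ S, Function.Injective (fderiv 𝕜 G x)) :
    IsOpen (G '' S) := by
  rw [isOpen_iff_mem_nhds]
  rintro _ ⟨x, hx, rfl⟩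
  have : CompleteSpace E := FiniteDimensional.complete 𝕜 E
  have hsurj : Function.Surjective (fderiv 𝕜 G x : E →ₗ[𝕜] E) :=
    LinearMap.injective_iff_surjective.1 (hi x hx)
  rw [← ((hG x hx).hasStrictFDerivAt one_ne_zero).map_nhds_eq_of_surj
    (LinearMap.range_eq_top.2 hsurj)]
  exact image_mem_map (hS.mem_nhds hx)

end Immersion

section Covering
open Set Filter Topology

lemma subset_image_of_isPreconnected_of_isCompact {X Y : Type*} [TopologicalSpace X]
    [TopologicalSpace Y] [T2Space Y] {H : X → Y} {A : Set Y} {S K : Set X} (hA : IsPreconnected A)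
    (hK : IsCompact K) (hH : ContinuousOn H K) (hSK : S ⊆ K) (hopen : IsOpen (H '' S))
    (hbd : ∀ x ∈ K \ S, H x ∉ A) (hne : (A ∩ H '' S).Nonempty) : A ⊆ H '' S := by
  have hcl : IsClosed (H '' K) := (hK.image_of_continuousOn hH).isClosed
  refine hA.subset_left_of_subset_union hopen hcl.isOpen_compl
    (disjoint_compl_right_iff_subset.2 (image_mono hSK)) (fun y hy => ?_) hne
  by_contra hcon
  rw [mem_union, mem_compl_iff, not_or, not_not] at hcon
  obtain ⟨hyS, x, hx, rfl⟩ := hcon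
  exact hbd x ⟨hx, fun hxS => hyS (mem_image_of_mem H hxS)⟩ hy

lemma exists_forall_dist_lt_image_ball_subset {E Y : Type*} [NormedAddCommGroup E]
    [NormedSpace ℝ E] [ProperSpace E] [MetricSpace Y] {F : E → Y} {c : E} {r R : ℝ} (hr : 0 < r)
    (hrR : r < R) (hF : ContinuousOn F (closedBall c R)) (hinj : InjOn F (closedBall c R))
    (hopen : IsOpen (F '' ball c r)) :
    ∃ η > 0, ∀ H : E → Y, ContinuousOn H (closedBall c R) → IsOpen (H '' ball c R) →
      (∀ x ∈ closedBall c R, dist (H x) (F x) < η) → F '' ball c r ⊆ H '' ball c R := by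
  have hdisj : Disjoint (F '' closedBall c r) (F '' sphere c R) := by
    rw [disjoint_left]
    rintro _ ⟨x, hx, rfl⟩ ⟨y, hy, hxy⟩
    have := hinj (sphere_subset_closedBall hy) (closedBall_subset_closedBall hrR.le hx) hxy
    rw [mem_sphere, this] at hy
    exact absurd (mem_closedBall.1 hx) (by linarith)
  obtain ⟨η₁, hη₁, hη₁'⟩ := hdisj.exists_thickenings
    ((isCompact_closedBall c r).image_of_continuousOn
      (hF.mono (closedBall_subset_closedBall hrR.le)))
    ((isCompact_sphere c R).image_of_continuousOn (hF.mono sphere_subset_closedBall)).isClosed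
  obtain ⟨η₂, hη₂, hη₂'⟩ :=
    isOpen_iff.1 hopen (F c) (mem_image_of_mem F (mem_ball_self hr))
  have hcR : c ∈ ball c R := mem_ball_self (hr.trans hrR)
  refine ⟨min η₁ η₂, lt_min hη₁ hη₂, fun H hH hHopen hHF => ?_⟩
  refine subset_image_of_isPreconnected_of_isCompact
    ((convex_ball c r).isPreconnected.image F (hF.mono (ball_subset_closedBall.trans
      (closedBall_subset_closedBall hrR.le))))
    (isCompact_closedBall c R) hH ball_subset_closedBall hHopen ?_
    ⟨H c, hη₂' ((hHF c (ball_subset_closedBall hcR)).trans_le (min_le_right _ _)),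
      mem_image_of_mem H hcR⟩
  rintro x ⟨hx, hx'⟩ hxF
  have hxs : x ∈ sphere c R := mem_sphere.2 ((mem_closedBall.1 hx).antisymm (not_lt.1 hx'))
  refine disjoint_left.1 hη₁' (self_subset_thickening hη₁ _
    (image_mono ball_subset_closedBall hxF)) (mem_thickening_iff.2
      ⟨F x, mem_image_of_mem F hxs, (hHF x hx).trans_le (min_le_left _ _)⟩)

end Covering

section HolomorphicEmbedding
open Set Filter Topology

variable {V W X : Type*} [NormedAddCommGroup V] [NormedSpace ℂ V] [NormedAddCommGroup W]
  [NormedSpace ℂ W] [NormedAddCommGroup X] [NormedSpace ℂ X]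

/-- `F` restricts to an injective holomorphic immersion of `S` into `U`. Holomorphy is recorded as
continuous complex differentiability near each point of `S`. -/
structure IsHolomorphicEmbedding (F : V → W) (S : Set V) (U : Set W) : Prop where
  contDiffAt : ∀ x ∈ S, ContDiffAt ℂ 1 F x
  injOn : InjOn F S
  injective_fderiv : ∀ x ∈ S, Function.Injective (fderiv ℂ F x)
  mapsTo : MapsTo F S U

namespace IsHolomorphicEmbedding

lemma mono {F : V → W} {S S' : Set V} {U U' : Set W} (h : IsHolomorphicEmbedding F S U)
    (hS : S' ⊆ S) (hU : U ⊆ U') : IsHolomorphicEmbedding F S' U' :=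
  ⟨fun x hx => h.contDiffAt x (hS hx), h.injOn.mono hS, fun x hx => h.injective_fderiv x (hS hx),
    h.mapsTo.mono hS hU⟩

lemma continuousOn {F : V → W} {S : Set V} {U : Set W} (h : IsHolomorphicEmbedding F S U) :
    ContinuousOn F S :=
  fun x hx => (h.contDiffAt x hx).continuousAt.continuousWithinAt

lemma comp {G : W → X} {F : V → W} {S : Set V} {T : Set W} {U : Set X}
    (hG : IsHolomorphicEmbedding G T U) (hF : IsHolomorphicEmbedding F S T) :
    IsHolomorphicEmbedding (G ∘ F) S U := by
  refine ⟨fun x hx => (hG.contDiffAt _ (hF.mapsTo hx)).comp x (hF.contDiffAt x hx),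
    hG.injOn.comp hF.injOn hF.mapsTo, fun x hx => ?_, hG.mapsTo.comp hF.mapsTo⟩
  rw [fderiv_comp x ((hG.contDiffAt _ (hF.mapsTo hx)).differentiableAt one_ne_zero)
    ((hF.contDiffAt x hx).differentiableAt one_ne_zero)]
  exact (hG.injective_fderiv _ (hF.mapsTo hx)).comp (hF.injective_fderiv x hx)

lemma isOpen_image [FiniteDimensional ℂ V] {F : V → V} {S S' U : Set V}
    (h : IsHolomorphicEmbedding F S U) (hS' : IsOpen S') (hSS : S' ⊆ S) : IsOpen (F '' S') :=
  isOpen_image_of_injective_fderiv hS' (fun x hx => h.contDiffAt x (hSS hx))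
    (fun x hx => h.injective_fderiv x (hSS hx))

lemma exists_isOpen_superset [FiniteDimensional ℂ V] {F : V → W} {K : Set V} {U : Set W}
    (h : IsHolomorphicEmbedding F K U) (hK : IsCompact K) (hU : IsOpen U) :
    ∃ N, IsOpen N ∧ K ⊆ N ∧ IsHolomorphicEmbedding F N U := by
  obtain ⟨T, hT, hTinj⟩ := h.injOn.exists_mem_nhdsSet hK
    (fun x hx => (h.contDiffAt x hx).continuousAt)
    (fun x hx => exists_mem_nhds_injOn_of_injective_fderiv (h.contDiffAt x hx)
      (h.injective_fderiv x hx))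
  have hnear : ∀ᶠ x in 𝓝ˢ K,
      ContDiffAt ℂ 1 F x ∧ Function.Injective (fderiv ℂ F x) ∧ F x ∈ U := by
    rw [eventually_nhdsSet_iff_forall]
    intro x hx
    have hFx := h.contDiffAt x hx
    exact (hFx.eventually (by simp)).and ((eventually_injective_fderiv hFx
      (h.injective_fderiv x hx)).and (hFx.continuousAt.eventually_mem (hU.mem_nhds (h.mapsTo hx))))
  obtain ⟨N, hN, hKN, hNT⟩ := mem_nhdsSet_iff_exists.1 (inter_mem hT hnear)
  exact ⟨N, hN, hKN, fun x hx => (hNT hx).2.1, hTinj.mono fun x hx => (hNT hx).1,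
    fun x hx => (hNT hx).2.2.1, fun x hx => (hNT hx).2.2.2⟩

lemma exists_lt_one_subset_image_ball [FiniteDimensional ℂ V] {G : V → V} {U K : Set V}
    (hG : IsHolomorphicEmbedding G (ball 0 1) U) (hK : IsCompact K) (h : K ⊆ G '' ball 0 1) :
    ∃ t, 0 < t ∧ t < 1 ∧ K ⊆ G '' ball 0 t := by
  have : Nonempty (Ioo (0 : ℝ) 1) := ⟨⟨1 / 2, by norm_num, by norm_num⟩⟩
  obtain ⟨t, ht⟩ := hK.elim_directed_cover (fun t : Ioo (0 : ℝ) 1 => G '' ball 0 t)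
    (fun t => hG.isOpen_image isOpen_ball (ball_subset_ball t.2.2.le))
    (fun y hy => by
      obtain ⟨x, hx, rfl⟩ := h hy
      rw [mem_ball_zero_iff] at hx
      obtain ⟨t, hxt, ht⟩ := exists_between hx
      exact mem_iUnion.2 ⟨⟨t, (norm_nonneg x).trans_lt hxt, ht⟩, x, mem_ball_zero_iff.2 hxt, rfl⟩)
    (directed_of_isDirected_le fun s t hst => image_mono (ball_subset_ball hst))
  exact ⟨t, t.2.1, t.2.2, ht⟩

end IsHolomorphicEmbedding

lemma isHolomorphicEmbedding_add_apply_sub (y : W) (p : V) {M : V →L[ℂ] W}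
    (hM : Function.Injective M) (S : Set V) :
    IsHolomorphicEmbedding (fun x => y + M (x - p)) S univ := by
  refine ⟨fun x _ => by fun_prop, fun u _ v _ h => sub_left_injective (hM (add_left_cancel h)),
    fun x _ => ?_, mapsTo_univ _ S⟩
  have h : HasFDerivAt (fun x => y + M (x - p)) M x :=
    (M.hasFDerivAt.comp x ((hasFDerivAt_id x).sub_const p)).const_add y
  rwa [h.fderiv]

lemma image_ball_add_smul_linearIsometryEquiv (T : V ≃ₗᵢ[ℂ] W) {c : ℝ} (hc : 0 < c) (y : W)
    (p : V) (r : ℝ) :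
    (fun x => y + ((c : ℂ) • (T.toContinuousLinearEquiv : V →L[ℂ] W)) (x - p)) '' ball p r =
      ball y (c * r) := by
  have hcc : (c : ℂ) ≠ 0 := Complex.ofReal_ne_zero.2 hc.ne'
  have hdist : ∀ x, dist (y + (c : ℂ) • T (x - p)) y = c * dist x p := fun x => by
    rw [dist_self_add_left, norm_smul, T.norm_map, Complex.norm_of_nonneg hc.le, dist_eq_norm]
  refine Subset.antisymm ?_ fun v hv => ?_
  · rintro _ ⟨x, hx, rfl⟩
    exact mem_ball.2 ((hdist x).trans_lt (mul_lt_mul_of_pos_left (mem_ball.1 hx) hc))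
  · have hxv : y + (c : ℂ) • T (p + T.symm ((c : ℂ)⁻¹ • (v - y)) - p) = v := by
      rw [add_sub_cancel_left, T.apply_symm_apply, smul_inv_smul₀ hcc, add_sub_cancel]
    refine ⟨_, ?_, hxv⟩
    rw [← hxv, mem_ball, hdist] at hv
    exact mem_ball.2 (lt_of_mul_lt_mul_left hv hc.le)

end HolomorphicEmbedding

/-! ### Maps adapted to a complex line -/

section AxialMap
open Set

variable {V : Type*} [NormedAddCommGroup V] [InnerProductSpace ℂ V]

/-- The map `z e + w ↦ φ(z) e + μ(z) w` for `w ⊥ e`, where `z = ⟪e, x⟫`; it is the common form of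
the dumbbell maps and of the ball automorphisms below. -/
noncomputable def axialMap (e : V) (φ μ : ℂ → ℂ) (x : V) : V :=
  μ (inner ℂ e x) • (x - inner ℂ e x • e) + φ (inner ℂ e x) • e

variable {e : V} (he : ‖e‖ = 1)
include he

lemma inner_sub_inner_smul_eq_zero (x : V) : inner ℂ e (x - inner ℂ e x • e) = 0 := by
  simp [inner_self_eq_norm_sq_to_K, he]

lemma norm_sq_eq_norm_inner_sq_add (x : V) :
    ‖x‖ ^ 2 = ‖inner ℂ e x‖ ^ 2 + ‖x - inner ℂ e x • e‖ ^ 2 := by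
  have h : inner ℂ (inner ℂ e x • e) (x - inner ℂ e x • e) = 0 := by
    rw [inner_smul_left, inner_sub_inner_smul_eq_zero he, mul_zero]
  have := norm_add_sq_eq_norm_sq_add_norm_sq_of_inner_eq_zero _ _ h
  rw [add_sub_cancel, norm_smul, he, mul_one] at this
  nlinarith

lemma norm_inner_le_of_norm_eq_one (x : V) : ‖inner ℂ e x‖ ≤ ‖x‖ := by
  simpa [he] using norm_inner_le_norm (𝕜 := ℂ) e x

lemma inner_axialMap (φ μ : ℂ → ℂ) (x : V) :
    inner ℂ e (axialMap e φ μ x) = φ (inner ℂ e x) := by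
  simp only [axialMap, inner_add_right, inner_smul_right, inner_sub_inner_smul_eq_zero he]
  simp [inner_self_eq_norm_sq_to_K, he]

lemma axialMap_sub_inner_smul (φ μ : ℂ → ℂ) (x : V) :
    axialMap e φ μ x - inner ℂ e (axialMap e φ μ x) • e
      = μ (inner ℂ e x) • (x - inner ℂ e x • e) := by
  rw [inner_axialMap he, axialMap, add_sub_cancel_right]

lemma injOn_axialMap {φ μ : ℂ → ℂ} {D : Set ℂ} {S : Set V} (hS : ∀ x ∈ S, inner ℂ e x ∈ D)
    (hφ : InjOn φ D) (hμ : ∀ z ∈ D, μ z ≠ 0) : InjOn (axialMap e φ μ) S := by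
  intro x hx y hy hxy
  have hinner : inner ℂ e x = inner ℂ e y := by
    apply hφ (hS x hx) (hS y hy)
    rw [← inner_axialMap he φ μ x, ← inner_axialMap he φ μ y, hxy]
  have hperp := axialMap_sub_inner_smul he φ μ x
  rw [hxy, axialMap_sub_inner_smul he, hinner] at hperp
  simpa using (smul_right_injective V (hμ _ (hS y hy)) hperp).symm

lemma injective_fderiv_axialMap {φ μ : ℂ → ℂ} {x : V} {φ' μ' : ℂ}
    (hφ : HasDerivAt φ φ' (inner ℂ e x)) (hμ : HasDerivAt μ μ' (inner ℂ e x))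
    (hφ0 : φ' ≠ 0) (hμ0 : μ (inner ℂ e x) ≠ 0) :
    Function.Injective (fderiv ℂ (axialMap e φ μ) x) := by
  have hl : HasFDerivAt (fun x : V => inner ℂ e x) (innerSL ℂ e) x := (innerSL ℂ e).hasFDerivAt
  have hder : HasFDerivAt (axialMap e φ μ) _ x :=
    ((hμ.comp_hasFDerivAt x hl).smul ((hasFDerivAt_id x).sub (hl.smul_const e))).add
      ((hφ.comp_hasFDerivAt x hl).smul_const e)
  rw [hder.fderiv, injective_iff_map_eq_zero]
  intro u hu
  simp only [add_apply, smul_apply, sub_apply, ContinuousLinearMap.smulRight_apply,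
    ContinuousLinearMap.id_apply, innerSL_apply_apply, Function.comp] at hu
  have hz : inner ℂ e u = 0 := by
    have := congrArg (fun y => inner ℂ e y) hu
    simp only [inner_add_right, inner_smul_right, inner_sub_inner_smul_eq_zero he,
      inner_zero_right] at this
    simpa [inner_sub_inner_smul_eq_zero he, inner_self_eq_norm_sq_to_K, he, hφ0] using this
  simpa [hz, hμ0] using hu

omit he in
lemma contDiffAt_axialMap {φ μ : ℂ → ℂ} {x : V} (hφ : ContDiffAt ℂ 1 φ (inner ℂ e x))
    (hμ : ContDiffAt ℂ 1 μ (inner ℂ e x)) : ContDiffAt ℂ 1 (axialMap e φ μ) x := by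
  have hl : ContDiffAt ℂ 1 (fun x : V => inner ℂ e x) x := (innerSL ℂ e).contDiff.contDiffAt
  exact ((hμ.comp x hl).smul (contDiffAt_id.sub (hl.smul contDiffAt_const))).add
    ((hφ.comp x hl).smul contDiffAt_const)

end AxialMap

/-! ### A univalence criterion on the unit disc -/

section Univalence
open Set ComplexConjugate

/-- The Noshiro–Warschawski criterion, from the mean value theorem along a segment. -/
lemma injOn_of_re_deriv_pos {S : Set ℂ} (hS : Convex ℝ S) {f f' : ℂ → ℂ}
    (hf : ∀ z ∈ S, HasDerivAt f (f' z) z) (hpos : ∀ z ∈ S, 0 < (f' z).re) : InjOn f S := by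
  intro a ha b hb hab
  by_contra hne
  let g : ℝ → ℂ := fun t => a + t * (b - a)
  have hgS : ∀ t ∈ Icc (0 : ℝ) 1, g t ∈ S := fun t ht => by
    simpa [g] using hS.add_smul_sub_mem ha hb ht
  have hg : ∀ t, HasDerivAt g (b - a) t := fun t => by
    simpa [g] using ((Complex.ofRealCLM.hasDerivAt (x := t)).mul_const (b - a)).const_add a
  have hd : ∀ t ∈ Icc (0 : ℝ) 1,
      HasDerivAt (fun t => (conj (b - a) * f (g t)).re) (‖b - a‖ ^ 2 * (f' (g t)).re) t := by
    intro t ht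
    have hcomp := ((hf _ (hgS t ht)).scomp t (hg t)).const_mul (conj (b - a))
    refine HasDerivAt.congr_deriv (f := fun t => (conj (b - a) * f (g t)).re)
      (Complex.reCLM.hasFDerivAt.comp_hasDerivAt t hcomp) ?_
    change (conj (b - a) * ((b - a) * f' (g t))).re = _
    rw [← mul_assoc, Complex.conj_mul', ← Complex.ofReal_pow, Complex.re_ofReal_mul]
  obtain ⟨t, ht, hslope⟩ := exists_hasDerivAt_eq_slope _ _ (zero_lt_one (α := ℝ))
    (fun t ht => (hd t ht).continuousAt.continuousWithinAt)
    (fun t ht => hd t (Ioo_subset_Icc_self ht))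
  have hba : 0 < ‖b - a‖ := norm_pos_iff.2 (sub_ne_zero.2 (Ne.symm hne))
  have hre := hpos _ (hgS t (Ioo_subset_Icc_self ht))
  have hg0 : g 0 = a := by simp [g]
  have hg1 : g 1 = b := by simp [g]
  rw [hg0, hg1, hab, sub_self, zero_div] at hslope
  exact (mul_pos (pow_pos hba 2) hre).ne' hslope

lemma norm_sub_one_div_add_one_lt {p : ℂ} (hp : 0 < p.re) : ‖(p - 1) / (p + 1)‖ < 1 := by
  have hne : p + 1 ≠ 0 := fun h => by
    have := congrArg Complex.re h
    simp only [Complex.add_re, Complex.one_re, Complex.zero_re] at this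
    linarith
  rw [norm_div, div_lt_one (norm_pos_iff.2 hne)]
  refine lt_of_pow_lt_pow_left₀ 2 (norm_nonneg _) ?_
  rw [Complex.sq_norm, Complex.sq_norm, Complex.normSq_apply, Complex.normSq_apply]
  simp only [Complex.sub_re, Complex.sub_im, Complex.add_re, Complex.add_im, Complex.one_re,
    Complex.one_im]
  nlinarith

lemma exists_re_pos_sub_one_div_add_one_eq {z : ℂ} (hz : ‖z‖ < 1) :
    ∃ p : ℂ, 0 < p.re ∧ (p - 1) / (p + 1) = z := by
  have hne : 1 - z ≠ 0 := fun h => by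
    rw [sub_eq_zero] at h
    simp [← h] at hz
  refine ⟨(1 + z) / (1 - z), ?_, by field_simp; ring⟩
  rw [Complex.div_re, ← add_div]
  refine div_pos ?_ (Complex.normSq_pos.2 hne)
  have : ‖z‖ ^ 2 < 1 := by nlinarith [norm_nonneg z]
  rw [Complex.sq_norm, Complex.normSq_apply] at this
  simp only [Complex.add_re, Complex.sub_re, Complex.add_im, Complex.sub_im, Complex.one_re,
    Complex.one_im]
  nlinarith

/-- The Noshiro–Warschawski criterion in the coordinate `ζ` on the strip `|Im ζ| < π / 2`, where
`p = exp ζ` lies in the right half-plane and `z = (p - 1) / (p + 1)` in the disc. -/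
lemma injOn_ball_of_re_deriv_mul_pos {f f' : ℂ → ℂ} (hf : ∀ z ∈ ball 0 1, HasDerivAt f (f' z) z)
    (hpos : ∀ p : ℂ, 0 < p.re → 0 < (f' ((p - 1) / (p + 1)) * (2 * p / (p + 1) ^ 2)).re) :
    InjOn f (ball 0 1) := by
  let S : Set ℂ := Complex.imLm ⁻¹' Ioo (-(Real.pi / 2)) (Real.pi / 2)
  let c : ℂ → ℂ := fun ζ => (Complex.exp ζ - 1) / (Complex.exp ζ + 1)
  have hre : ∀ ζ ∈ S, 0 < (Complex.exp ζ).re := fun ζ hζ => by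
    rw [Complex.exp_re]
    exact mul_pos (Real.exp_pos _) (Real.cos_pos_of_mem_Ioo hζ)
  have hinj : InjOn (f ∘ c) S := by
    refine injOn_of_re_deriv_pos ((convex_Ioo _ _).linear_preimage _) (f' := fun ζ =>
      f' (c ζ) * (2 * Complex.exp ζ / (Complex.exp ζ + 1) ^ 2)) (fun ζ hζ => ?_)
      (fun ζ hζ => hpos _ (hre ζ hζ))
    have hne : Complex.exp ζ + 1 ≠ 0 := fun h => by
      have := congrArg Complex.re h
      rw [Complex.add_re, Complex.one_re, Complex.zero_re] at this
      linarith [hre ζ hζ]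
    refine (hf _ (mem_ball_zero_iff.2 (norm_sub_one_div_add_one_lt (hre ζ hζ)))).comp ζ ?_
    refine HasDerivAt.congr_deriv (f := c) (((Complex.hasDerivAt_exp ζ).sub_const 1).div
      ((Complex.hasDerivAt_exp ζ).add_const 1) hne) ?_
    field_simp
    ring
  have hsurj : ∀ z ∈ ball (0 : ℂ) 1, ∃ ζ ∈ S, c ζ = z := fun z hz => by
    obtain ⟨p, hp, rfl⟩ := exists_re_pos_sub_one_div_add_one_eq (mem_ball_zero_iff.1 hz)
    have hp0 : p ≠ 0 := fun h => by simp [h] at hp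
    refine ⟨Complex.log p, ?_, by simp only [c, Complex.exp_log hp0]⟩
    change (Complex.log p).im ∈ Ioo (-(Real.pi / 2)) (Real.pi / 2)
    rw [Complex.log_im]
    exact abs_lt.1 (Complex.abs_arg_lt_pi_div_two_iff.2 (Or.inl hp))
  intro z hz z' hz' h
  obtain ⟨ζ, hζ, rfl⟩ := hsurj z hz
  obtain ⟨ζ', hζ', rfl⟩ := hsurj z' hz'
  rw [hinj hζ hζ' h]

end Univalence

/-! ### The profile of the dumbbell map -/

section Profile
open Set

/-- The profile function of a dumbbell: a homothety onto the disc of radius `α`, plus a thin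
logarithmic neck, plus a Möbius map onto a disc of radius `β`. -/
noncomputable def dumbbellProfile (α ε β τ : ℝ) (z : ℂ) : ℂ :=
  α * z - ε * Complex.log (1 - τ * z) + β * ((1 - τ) * (1 + z) / (1 - τ * z))

/-- The transversal scaling factor that goes with `dumbbellProfile`. -/
noncomputable def dumbbellScale (α β τ : ℝ) (z : ℂ) : ℂ :=
  α + β * (√(1 - τ ^ 2) / (1 - τ * z))

/-- The derivative of `dumbbellProfile`. -/
noncomputable def dumbbellProfileDeriv (α ε β τ : ℝ) (z : ℂ) : ℂ :=
  α + ε * τ / (1 - τ * z) + β * (1 - τ ^ 2) / (1 - τ * z) ^ 2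

lemma re_one_sub_mul_pos {τ : ℝ} (hτ : |τ| < 1) {z : ℂ} (hz : ‖z‖ ≤ 1) :
    0 < (1 - τ * z).re := by
  have hle : (τ * z : ℂ).re ≤ ‖(τ * z : ℂ)‖ := Complex.re_le_norm _
  rw [norm_mul, Complex.norm_real, Real.norm_eq_abs] at hle
  simp only [Complex.sub_re, Complex.one_re]
  nlinarith [abs_nonneg τ, norm_nonneg z]

lemma one_sub_mul_ne_zero {τ : ℝ} (hτ : |τ| < 1) {z : ℂ} (hz : ‖z‖ ≤ 1) : (1 - τ * z : ℂ) ≠ 0 :=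
  fun h => by simpa [h] using re_one_sub_mul_pos hτ hz

lemma hasDerivAt_dumbbellProfile {α ε β τ : ℝ} (hτ : |τ| < 1) {z : ℂ} (hz : ‖z‖ ≤ 1) :
    HasDerivAt (dumbbellProfile α ε β τ) (dumbbellProfileDeriv α ε β τ z) z := by
  have hD : HasDerivAt (fun z : ℂ => 1 - τ * z) (-τ) z := by
    simpa using ((hasDerivAt_id z).const_mul (τ : ℂ)).const_sub 1
  have hne := one_sub_mul_ne_zero hτ hz
  have hlog := hD.clog (Or.inl (re_one_sub_mul_pos hτ hz))
  have hmob := (((hasDerivAt_id z).const_add 1).const_mul (1 - τ : ℂ)).div hD hne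
  refine HasDerivAt.congr_deriv (f := dumbbellProfile α ε β τ)
    ((((hasDerivAt_id z).const_mul (α : ℂ)).sub (hlog.const_mul (ε : ℂ))).add
      (hmob.const_mul (β : ℂ))) ?_
  simp only [dumbbellProfileDeriv, id]
  field_simp
  ring

lemma contDiffAt_dumbbellProfile {α ε β τ : ℝ} (hτ : |τ| < 1) {z : ℂ} (hz : ‖z‖ ≤ 1) :
    ContDiffAt ℂ 1 (dumbbellProfile α ε β τ) z := by
  have hD : ContDiffAt ℂ 1 (fun z : ℂ => 1 - τ * z) z := by fun_prop
  have hN : ContDiffAt ℂ 1 (fun z : ℂ => (1 - τ) * (1 + z)) z := by fun_prop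
  have hlog : ContDiffAt ℂ 1 (fun z : ℂ => Complex.log (1 - τ * z)) z :=
    ContDiffAt.comp (g := Complex.log) z
      (Complex.contDiffAt_log (Or.inl (re_one_sub_mul_pos hτ hz))) hD
  exact ((contDiffAt_const.mul contDiffAt_id).sub (contDiffAt_const.mul hlog)).add
    (contDiffAt_const.mul (hN.div hD (one_sub_mul_ne_zero hτ hz)))

lemma contDiffAt_dumbbellScale {α β τ : ℝ} (hτ : |τ| < 1) {z : ℂ} (hz : ‖z‖ ≤ 1) :
    ContDiffAt ℂ 1 (dumbbellScale α β τ) z :=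
  contDiffAt_const.add (contDiffAt_const.mul
    (contDiffAt_const.div (by fun_prop) (one_sub_mul_ne_zero hτ hz)))

lemma re_inv_pos {q : ℂ} (hq : 0 < q.re) : 0 < (q⁻¹).re := by
  rw [Complex.inv_re]
  exact div_pos hq (Complex.normSq_pos.2 fun h => by simp [h] at hq)

lemma re_div_add_inv_pos {c A B C : ℝ} (hc : 0 < c) (hA : 0 ≤ A) (hB : 0 < B) (hC : 0 ≤ C) {p : ℂ}
    (hp : 0 < p.re) : 0 < ((c : ℂ) / (A * p + B + C * p⁻¹)).re := by
  rw [div_eq_mul_inv, Complex.re_ofReal_mul]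
  refine mul_pos hc (re_inv_pos ?_)
  have := re_inv_pos hp
  simp only [Complex.add_re, Complex.re_ofReal_mul, Complex.ofReal_re]
  positivity

lemma dumbbellProfileDeriv_mul_eq {α ε β τ : ℝ} {p : ℂ} (hp : p ≠ 0) (hp1 : p + 1 ≠ 0)
    (hD : ((1 - τ) * p + (1 + τ) : ℂ) ≠ 0) :
    dumbbellProfileDeriv α ε β τ ((p - 1) / (p + 1)) * (2 * p / (p + 1) ^ 2)
      = ((2 * α : ℝ) : ℂ) / ((1 : ℝ) * p + (2 : ℝ) + (1 : ℝ) * p⁻¹)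
      + ((2 * ε * τ : ℝ) : ℂ) / ((1 - τ : ℝ) * p + (2 : ℝ) + (1 + τ : ℝ) * p⁻¹)
      + ((2 * β * (1 - τ ^ 2) : ℝ) : ℂ) /
        (((1 - τ) ^ 2 : ℝ) * p + (2 * (1 - τ ^ 2) : ℝ) + ((1 + τ) ^ 2 : ℝ) * p⁻¹) := by
  have hdenom : 1 - τ * ((p - 1) / (p + 1)) = ((1 - τ) * p + (1 + τ)) / (p + 1) := by
    field_simp; ring
  have hA : ((1 : ℝ) * p + (2 : ℝ) + (1 : ℝ) * p⁻¹ : ℂ) = (p + 1) ^ 2 / p := by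
    push_cast; field_simp; ring
  have hB : ((1 - τ : ℝ) * p + (2 : ℝ) + (1 + τ : ℝ) * p⁻¹ : ℂ)
      = (p + 1) * ((1 - τ) * p + (1 + τ)) / p := by
    push_cast; field_simp; ring
  have hC : (((1 - τ) ^ 2 : ℝ) * p + (2 * (1 - τ ^ 2) : ℝ) + ((1 + τ) ^ 2 : ℝ) * p⁻¹ : ℂ)
      = ((1 - τ) * p + (1 + τ)) ^ 2 / p := by
    push_cast; field_simp; ring
  rw [hA, hB, hC, dumbbellProfileDeriv, hdenom]
  push_cast
  generalize ((1 - τ) * p + (1 + τ) : ℂ) = D at hD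
  field_simp

variable {α ε β τ : ℝ} (hα : 0 < α) (hβ : 0 < β) (hτ0 : 0 < τ) (hτ1 : τ < 1)
include hα hβ hτ0 hτ1

lemma dumbbellScale_ne_zero {z : ℂ} (hz : ‖z‖ ≤ 1) : dumbbellScale α β τ z ≠ 0 := fun h => by
  have hinv := re_inv_pos (re_one_sub_mul_pos (by rwa [abs_of_pos hτ0]) hz)
  have hre : (dumbbellScale α β τ z).re = α + β * (√(1 - τ ^ 2) * ((1 - τ * z)⁻¹ : ℂ).re) := by
    rw [dumbbellScale, div_eq_mul_inv, Complex.add_re, Complex.re_ofReal_mul,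
      Complex.re_ofReal_mul, Complex.ofReal_re]
  rw [h, Complex.zero_re] at hre
  have : 0 ≤ β * (√(1 - τ ^ 2) * ((1 - τ * z)⁻¹ : ℂ).re) := by positivity
  linarith

variable (hε : 0 < ε)
include hε

lemma re_dumbbellProfileDeriv_mul_pos {p : ℂ} (hp : 0 < p.re) :
    0 < (dumbbellProfileDeriv α ε β τ ((p - 1) / (p + 1)) * (2 * p / (p + 1) ^ 2)).re := by
  have hp0 : p ≠ 0 := fun h => by simp [h] at hp
  have hp1 : p + 1 ≠ 0 := fun h => by
    have := congrArg Complex.re h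
    rw [Complex.add_re, Complex.one_re, Complex.zero_re] at this
    linarith
  have hD : ((1 - τ) * p + (1 + τ) : ℂ) ≠ 0 := fun h => by
    have hre : ((1 - τ) * p + (1 + τ) : ℂ).re = (1 - τ) * p.re + (1 + τ) := by simp
    rw [h, Complex.zero_re] at hre
    nlinarith
  have hcore := re_div_add_inv_pos (c := 2 * α) (A := 1) (B := 2) (C := 1) (by positivity)
    (by norm_num) (by norm_num) (by norm_num) hp
  have hneck := re_div_add_inv_pos (c := 2 * ε * τ) (A := 1 - τ) (B := 2) (C := 1 + τ)
    (by positivity) (by linarith) (by norm_num) (by linarith) hp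
  have hmob := re_div_add_inv_pos (c := 2 * β * (1 - τ ^ 2)) (A := (1 - τ) ^ 2)
    (B := 2 * (1 - τ ^ 2)) (C := (1 + τ) ^ 2) (mul_pos (by positivity) (by nlinarith))
    (by positivity) (by nlinarith) (by positivity) hp
  rw [dumbbellProfileDeriv_mul_eq hp0 hp1 hD, Complex.add_re, Complex.add_re]
  positivity

lemma dumbbellProfileDeriv_ne_zero {z : ℂ} (hz : ‖z‖ < 1) : dumbbellProfileDeriv α ε β τ z ≠ 0 :=
  fun h => by
    obtain ⟨p, hp, rfl⟩ := exists_re_pos_sub_one_div_add_one_eq hz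
    simpa [h] using re_dumbbellProfileDeriv_mul_pos hα hβ hτ0 hτ1 hε hp

lemma injOn_dumbbellProfile : InjOn (dumbbellProfile α ε β τ) (ball 0 1) :=
  injOn_ball_of_re_deriv_mul_pos
    (fun _ hz => hasDerivAt_dumbbellProfile (by rwa [abs_of_pos hτ0]) (mem_ball_zero_iff.1 hz).le)
    (fun _ hp => re_dumbbellProfileDeriv_mul_pos hα hβ hτ0 hτ1 hε hp)

end Profile

/-! ### Dumbbell maps of the ball -/

section BallAutomorphism
open Set

variable {V : Type*} [NormedAddCommGroup V] [InnerProductSpace ℂ V] {e : V}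

/-- The automorphism of the unit ball moving `τ e` to the origin. -/
noncomputable def ballAutomorphism (e : V) (τ : ℝ) : V → V :=
  axialMap e (fun z => (z - τ) / (1 - τ * z)) (fun z => √(1 - τ ^ 2) / (1 - τ * z))

/-- The modulus of the denominator of `ballAutomorphism e τ`. For `τ` near `1` it measures how far
a point of the ball is from `e`. -/
noncomputable def poleDist (e : V) (τ : ℝ) (x : V) : ℝ := ‖(1 - τ * inner ℂ e x : ℂ)‖

variable (he : ‖e‖ = 1) {τ : ℝ} (hτ : |τ| < 1)

lemma norm_sub_sq_add_eq_norm_one_sub_mul_sq (τ : ℝ) (z : ℂ) :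
    ‖z - τ‖ ^ 2 + (1 - τ ^ 2) * (1 - ‖z‖ ^ 2) = ‖(1 - τ * z : ℂ)‖ ^ 2 := by
  simp only [Complex.sq_norm, Complex.normSq_apply, Complex.sub_re, Complex.sub_im, Complex.one_re,
    Complex.one_im, Complex.ofReal_re, Complex.ofReal_im, Complex.mul_re, Complex.mul_im]
  ring

include he in
lemma norm_sub_inner_smul_sq_le {x : V} (hx : ‖x‖ ≤ 1) :
    ‖x - inner ℂ e x • e‖ ^ 2 ≤ 1 - ‖inner ℂ e x‖ ^ 2 := by
  have := norm_sq_eq_norm_inner_sq_add he x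
  nlinarith [norm_nonneg x]

include he in
lemma ballAutomorphism_smul_self (τ : ℝ) : ballAutomorphism e τ ((τ : ℂ) • e) = 0 := by
  simp [ballAutomorphism, axialMap, inner_self_eq_norm_sq_to_K, he]

include hτ

lemma one_sub_sq_pos_of_abs_lt_one : 0 < 1 - τ ^ 2 := by
  nlinarith [abs_nonneg τ, sq_abs τ]

include he

lemma poleDist_pos {x : V} (hx : ‖x‖ ≤ 1) : 0 < poleDist e τ x :=
  norm_pos_iff.2 (one_sub_mul_ne_zero hτ ((norm_inner_le_of_norm_eq_one he x).trans hx))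

lemma one_sub_norm_ballAutomorphism_sq {x : V} (hx : ‖x‖ ≤ 1) :
    1 - ‖ballAutomorphism e τ x‖ ^ 2 = (1 - τ ^ 2) * (1 - ‖x‖ ^ 2) / poleDist e τ x ^ 2 := by
  have hρ := poleDist_pos he hτ hx
  have hsq := one_sub_sq_pos_of_abs_lt_one hτ
  have hid := norm_sub_sq_add_eq_norm_one_sub_mul_sq τ (inner ℂ e x)
  have hnorm : ‖ballAutomorphism e τ x‖ ^ 2 = (‖inner ℂ e x - τ‖ ^ 2
      + (1 - τ ^ 2) * ‖x - inner ℂ e x • e‖ ^ 2) / poleDist e τ x ^ 2 := by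
    rw [norm_sq_eq_norm_inner_sq_add he, ballAutomorphism, axialMap_sub_inner_smul he,
      inner_axialMap he, norm_smul, norm_div, norm_div (√(1 - τ ^ 2) : ℂ), Complex.norm_real,
      Real.norm_eq_abs, abs_of_nonneg (Real.sqrt_nonneg _), mul_pow, div_pow, div_pow,
      Real.sq_sqrt hsq.le, poleDist]
    ring
  rw [hnorm, norm_sq_eq_norm_inner_sq_add he x, eq_div_iff (by positivity), sub_mul,
    div_mul_cancel₀ _ (by positivity), one_mul, poleDist, ← hid]
  ring

lemma norm_ballAutomorphism_lt_one {x : V} (hx : ‖x‖ < 1) : ‖ballAutomorphism e τ x‖ < 1 := by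
  have hρ := poleDist_pos he hτ hx.le
  have hsq := one_sub_sq_pos_of_abs_lt_one hτ
  have hx2 : 0 < 1 - ‖x‖ ^ 2 := by nlinarith [norm_nonneg x]
  have : 0 < 1 - ‖ballAutomorphism e τ x‖ ^ 2 := by
    rw [one_sub_norm_ballAutomorphism_sq he hτ hx.le]
    positivity
  nlinarith [norm_nonneg (ballAutomorphism e τ x)]

lemma norm_lt_one_of_norm_ballAutomorphism_lt_one {x : V} (hx : ‖x‖ ≤ 1)
    (h : ‖ballAutomorphism e τ x‖ < 1) : ‖x‖ < 1 := by
  refine hx.lt_of_ne fun h1 => ?_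
  have := one_sub_norm_ballAutomorphism_sq he hτ hx
  rw [h1, one_pow, sub_self, mul_zero, zero_div] at this
  nlinarith [norm_nonneg (ballAutomorphism e τ x)]

lemma continuousOn_ballAutomorphism : ContinuousOn (ballAutomorphism e τ) (closedBall 0 1) := by
  intro x hx
  have hne := one_sub_mul_ne_zero hτ
    ((norm_inner_le_of_norm_eq_one he x).trans (mem_closedBall_zero_iff.1 hx))
  refine (contDiffAt_axialMap (ContDiffAt.div ?_ ?_ hne)
    (contDiffAt_const.div ?_ hne)).continuousAt.continuousWithinAt <;> fun_prop

/-- From `1 + τ w = (1 - τ²) / (1 - τ z)`, where `w` and `z` are the coordinates along `e` of the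
image point and of the point. -/
lemma poleDist_mul_one_sub_norm_ballAutomorphism_le {x : V} (hx : ‖x‖ ≤ 1) :
    poleDist e τ x * (1 - ‖ballAutomorphism e τ x‖) ≤ 1 - τ ^ 2 := by
  have hne := one_sub_mul_ne_zero hτ ((norm_inner_le_of_norm_eq_one he x).trans hx)
  have hsq := one_sub_sq_pos_of_abs_lt_one hτ
  let w : ℂ := inner ℂ e (ballAutomorphism e τ x)
  have hw : ‖(τ * w : ℂ)‖ ≤ ‖ballAutomorphism e τ x‖ := by
    rw [norm_mul, Complex.norm_real, Real.norm_eq_abs]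
    exact (mul_le_of_le_one_left (norm_nonneg _) hτ.le).trans (norm_inner_le_of_norm_eq_one he _)
  have hprod : (1 - τ * inner ℂ e x) * (1 + τ * w) = ((1 - τ ^ 2 : ℝ) : ℂ) := by
    simp only [w, ballAutomorphism, inner_axialMap he]
    push_cast
    field_simp
    ring
  have hnorm := congrArg norm hprod
  rw [norm_mul, Complex.norm_real, Real.norm_eq_abs, abs_of_pos hsq] at hnorm
  rw [← hnorm]
  refine mul_le_mul_of_nonneg_left ?_ (norm_nonneg _)
  have := norm_sub_norm_le (1 : ℂ) (-(τ * w))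
  rw [norm_one, norm_neg, sub_neg_eq_add] at this
  linarith

end BallAutomorphism

section PoleEstimates

variable {V : Type*} [NormedAddCommGroup V] [InnerProductSpace ℂ V] {e : V} (he : ‖e‖ = 1)
  {τ : ℝ} (hτ : 1 / 2 < τ) (hτ1 : τ < 1)

include hτ hτ1 in
lemma one_sub_norm_inner_le_poleDist (e x : V) : 1 - ‖inner ℂ e x‖ ≤ poleDist e τ x := by
  have := norm_sub_norm_le (1 : ℂ) (τ * inner ℂ e x)
  rw [norm_mul, Complex.norm_real, Real.norm_eq_abs, abs_of_pos (by linarith), norm_one] at this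
  rw [poleDist]
  nlinarith [norm_nonneg (inner ℂ e x)]

variable {x : V} (hx : ‖x‖ ≤ 1)
include he hτ hτ1 hx

lemma one_sub_le_poleDist : 1 - τ ≤ poleDist e τ x := by
  have hz := (norm_inner_le_of_norm_eq_one he x).trans hx
  have := norm_sub_norm_le (1 : ℂ) (τ * inner ℂ e x)
  rw [norm_mul, Complex.norm_real, Real.norm_eq_abs, abs_of_pos (by linarith), norm_one] at this
  rw [poleDist]
  nlinarith

lemma poleDist_le_two : poleDist e τ x ≤ 2 := by
  have hz := (norm_inner_le_of_norm_eq_one he x).trans hx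
  have := norm_sub_le (1 : ℂ) (τ * inner ℂ e x)
  rw [norm_mul, Complex.norm_real, Real.norm_eq_abs, abs_of_pos (by linarith), norm_one] at this
  rw [poleDist]
  nlinarith

lemma norm_sub_inner_smul_le : ‖x - inner ℂ e x • e‖ ≤ 2 * √(poleDist e τ x) := by
  have hρ := one_sub_norm_inner_le_poleDist hτ hτ1 e x
  have hperp := norm_sub_inner_smul_sq_le he hx
  refine le_of_sq_le_sq ?_ (by positivity)
  rw [mul_pow, Real.sq_sqrt (show 0 ≤ poleDist e τ x from norm_nonneg _)]
  nlinarith [norm_nonneg (inner ℂ e x), (norm_inner_le_of_norm_eq_one he x).trans hx]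

lemma norm_sub_pole_le : ‖x - e‖ ≤ 4 * (poleDist e τ x + √(poleDist e τ x)) := by
  have hρ := one_sub_le_poleDist he hτ hτ1 hx
  have hperp := norm_sub_inner_smul_le he hτ hτ1 hx
  have haxis : ‖inner ℂ e x - 1‖ ≤ 4 * poleDist e τ x := by
    have heq : τ * (inner ℂ e x - 1) = ((1 - τ : ℝ) : ℂ) - (1 - τ * inner ℂ e x) := by
      push_cast; ring
    have hle := norm_sub_le ((1 - τ : ℝ) : ℂ) (1 - τ * inner ℂ e x)
    rw [← heq, norm_mul, Complex.norm_real, Complex.norm_real, Real.norm_eq_abs, Real.norm_eq_abs,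
      abs_of_pos (by linarith), abs_of_pos (by linarith), ← poleDist] at hle
    nlinarith [norm_nonneg (inner ℂ e x - 1)]
  calc ‖x - e‖ = ‖(inner ℂ e x - 1) • e + (x - inner ℂ e x • e)‖ := by congr 1; module
    _ ≤ ‖inner ℂ e x - 1‖ + ‖x - inner ℂ e x • e‖ := by
      simpa only [norm_smul, he, mul_one] using
        norm_add_le ((inner ℂ e x - 1) • e) (x - inner ℂ e x • e)
    _ ≤ 4 * (poleDist e τ x + √(poleDist e τ x)) := by
      linarith [Real.sqrt_nonneg (poleDist e τ x)]

lemma pole_add_ballAutomorphism_eq :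
    e + ballAutomorphism e τ x = ((1 - τ) * (1 + inner ℂ e x) / (1 - τ * inner ℂ e x)) • e
      + (√(1 - τ ^ 2) / (1 - τ * inner ℂ e x) : ℂ) • (x - inner ℂ e x • e) := by
  have hne := one_sub_mul_ne_zero (τ := τ) (by rw [abs_of_pos] <;> linarith)
    ((norm_inner_le_of_norm_eq_one he x).trans hx)
  have : (1 - τ) * (1 + inner ℂ e x) / (1 - τ * inner ℂ e x)
      = 1 + (inner ℂ e x - τ) / (1 - τ * inner ℂ e x) := by
    field_simp
    ring
  rw [this, ballAutomorphism, axialMap]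
  module

lemma norm_pole_add_ballAutomorphism_le : ‖e + ballAutomorphism e τ x‖
    ≤ 4 * ((1 - τ) / poleDist e τ x + √((1 - τ) / poleDist e τ x)) := by
  have hz := (norm_inner_le_of_norm_eq_one he x).trans hx
  have hperp := norm_sub_inner_smul_le he hτ hτ1 hx
  have hρ := one_sub_le_poleDist he hτ hτ1 hx
  have hτ0 : 0 < 1 - τ := by linarith
  have hρ0 : 0 < poleDist e τ x := by linarith
  have haxis : ‖((1 - τ) * (1 + inner ℂ e x) / (1 - τ * inner ℂ e x) : ℂ)‖
      ≤ 4 * ((1 - τ) / poleDist e τ x) := by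
    rw [norm_div, norm_mul, ← Complex.ofReal_one, ← Complex.ofReal_sub, Complex.norm_real,
      Real.norm_eq_abs, abs_of_pos hτ0, Complex.ofReal_one, ← poleDist, ← mul_div_assoc]
    have := norm_add_le (1 : ℂ) (inner ℂ e x)
    rw [norm_one] at this
    refine div_le_div_of_nonneg_right ?_ hρ0.le
    nlinarith
  have hsqrt : √(1 - τ ^ 2) ≤ 2 * √(1 - τ) := by
    rw [Real.sqrt_le_left (by positivity), mul_pow, Real.sq_sqrt hτ0.le]
    nlinarith
  have htrans : ‖(√(1 - τ ^ 2) / (1 - τ * inner ℂ e x) : ℂ)‖ * ‖x - inner ℂ e x • e‖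
      ≤ 4 * √((1 - τ) / poleDist e τ x) := by
    rw [norm_div, Complex.norm_real, Real.norm_eq_abs, ← poleDist,
      abs_of_nonneg (Real.sqrt_nonneg _)]
    calc √(1 - τ ^ 2) / poleDist e τ x * ‖x - inner ℂ e x • e‖
        ≤ 2 * √(1 - τ) / poleDist e τ x * (2 * √(poleDist e τ x)) := by gcongr
      _ = 4 * (√(1 - τ) * (√(poleDist e τ x) / poleDist e τ x)) := by ring
      _ = 4 * √((1 - τ) / poleDist e τ x) := by
        rw [Real.sqrt_div hτ0.le, Real.sqrt_div_self', mul_one_div]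
  rw [pole_add_ballAutomorphism_eq he hτ hτ1 hx]
  refine (norm_add_le _ _).trans ?_
  rw [norm_smul, norm_smul, he, mul_one]
  linarith

end PoleEstimates

section Dumbbell
open Set

variable {V : Type*} [NormedAddCommGroup V] [InnerProductSpace ℂ V] {e : V} {α ε β τ : ℝ}

/-- The dumbbell map: a homothety of ratio `α`, plus a logarithmic neck along `e`, plus `β` times a
translated ball automorphism, see `dumbbell_eq`. For `ε` small and `τ` close to `1` its image is
close to a ball of radius `α` and a ball of radius `β` joined by a segment in the direction `e`. -/
noncomputable def dumbbell (e : V) (α ε β τ : ℝ) : V → V :=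
  axialMap e (dumbbellProfile α ε β τ) (dumbbellScale α β τ)

lemma dumbbell_eq (he : ‖e‖ = 1) (hτ : |τ| < 1) {x : V} (hx : ‖x‖ ≤ 1) :
    dumbbell e α ε β τ x = (α : ℂ) • x - (ε * Complex.log (1 - τ * inner ℂ e x)) • e
      + (β : ℂ) • (e + ballAutomorphism e τ x) := by
  have hne := one_sub_mul_ne_zero hτ ((norm_inner_le_of_norm_eq_one he x).trans hx)
  have hprofile : dumbbellProfile α ε β τ (inner ℂ e x) =
      α * inner ℂ e x - ε * Complex.log (1 - τ * inner ℂ e x)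
        + β * (1 + (inner ℂ e x - τ) / (1 - τ * inner ℂ e x)) := by
    rw [dumbbellProfile]
    congr 2
    field_simp
    ring
  simp only [dumbbell, ballAutomorphism, axialMap, hprofile, dumbbellScale]
  module

lemma isHolomorphicEmbedding_dumbbell (he : ‖e‖ = 1) (hα : 0 < α) (hε : 0 < ε) (hβ : 0 < β)
    (hτ0 : 0 < τ) (hτ1 : τ < 1) {N : Set V} (hN : MapsTo (dumbbell e α ε β τ) (ball 0 1) N) :
    IsHolomorphicEmbedding (dumbbell e α ε β τ) (ball 0 1) N := by
  have hτ : |τ| < 1 := by rwa [abs_of_pos hτ0]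
  have hinner : ∀ x ∈ ball (0 : V) 1, ‖inner ℂ e x‖ < 1 := fun x hx =>
    (norm_inner_le_of_norm_eq_one he x).trans_lt (mem_ball_zero_iff.1 hx)
  have hscale : ∀ x ∈ ball (0 : V) 1, ContDiffAt ℂ 1 (dumbbellScale α β τ) (inner ℂ e x) :=
    fun x hx => contDiffAt_dumbbellScale hτ (hinner x hx).le
  exact {
    contDiffAt := fun x hx => contDiffAt_axialMap
      (contDiffAt_dumbbellProfile hτ (hinner x hx).le) (hscale x hx)
    injOn := injOn_axialMap he (fun x hx => mem_ball_zero_iff.2 (hinner x hx))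
      (injOn_dumbbellProfile hα hβ hτ0 hτ1 hε)
      (fun z hz => dumbbellScale_ne_zero hα hβ hτ0 hτ1 (mem_ball_zero_iff.1 hz).le)
    injective_fderiv := fun x hx => injective_fderiv_axialMap he
      (hasDerivAt_dumbbellProfile hτ (hinner x hx).le)
      ((hscale x hx).differentiableAt one_ne_zero).hasDerivAt
      (dumbbellProfileDeriv_ne_zero hα hβ hτ0 hτ1 hε (hinner x hx))
      (dumbbellScale_ne_zero hα hβ hτ0 hτ1 (hinner x hx).le)
    mapsTo := hN }

end Dumbbell

section DumbbellEstimates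
open Set Filter Topology

lemma norm_log_sub_log_norm_le (D : ℂ) : ‖Complex.log D - Real.log ‖D‖‖ ≤ Real.pi := by
  have : Complex.log D - Real.log ‖D‖ = D.arg * Complex.I := by
    rw [Complex.log, add_sub_cancel_left]
  rw [this, norm_mul, Complex.norm_I, mul_one, Complex.norm_real, Real.norm_eq_abs]
  exact Complex.abs_arg_le_pi D

lemma norm_log_sub_ofReal_le (D : ℂ) (t : ℝ) :
    ‖Complex.log D - t‖ ≤ |Real.log ‖D‖ - t| + Real.pi := by
  calc ‖Complex.log D - t‖ = ‖((Real.log ‖D‖ - t : ℝ) : ℂ) + (Complex.log D - Real.log ‖D‖)‖ := by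
        congr 1; push_cast; ring
    _ ≤ |Real.log ‖D‖ - t| + Real.pi := by
        refine (norm_add_le _ _).trans (add_le_add ?_ (norm_log_sub_log_norm_le D))
        rw [Complex.norm_real, Real.norm_eq_abs]

variable {V : Type*} [NormedAddCommGroup V] [InnerProductSpace ℂ V] {e : V} {α ε β τ ρ₀ : ℝ}
  (he : ‖e‖ = 1) (hα : 0 ≤ α) (hε : 0 ≤ ε) (hβ : 0 ≤ β) (hτ : 1 / 2 < τ) (hτ1 : τ < 1)
  (hρ₀ : 0 < ρ₀) {x : V} (hx : ‖x‖ ≤ 1)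

include he hε hβ hτ hτ1 hρ₀ hx in
lemma norm_dumbbell_sub_smul_le (hρ₀1 : ρ₀ ≤ 1) (hρ : ρ₀ ≤ poleDist e τ x) :
    ‖dumbbell e α ε β τ x - (α : ℂ) • x‖ ≤
      ε * (-Real.log ρ₀ + 1 + Real.pi) + β * (4 * ((1 - τ) / ρ₀ + √((1 - τ) / ρ₀))) := by
  have : 0 < 1 - τ := by linarith
  have hlog : ‖Complex.log (1 - τ * inner ℂ e x)‖ ≤ -Real.log ρ₀ + 1 + Real.pi := by
    have hlow := Real.log_le_log hρ₀ hρ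
    have hupp := Real.log_le_sub_one_of_pos (hρ₀.trans_le hρ)
    have hneg := Real.log_nonpos hρ₀.le hρ₀1
    have htwo := poleDist_le_two he hτ hτ1 hx
    have habs : |Real.log (poleDist e τ x)| ≤ -Real.log ρ₀ + 1 :=
      abs_le.2 (by constructor <;> linarith)
    have hsub := norm_log_sub_ofReal_le (1 - τ * inner ℂ e x) 0
    rw [Complex.ofReal_zero, sub_zero, sub_zero, ← poleDist] at hsub
    linarith
  have hball : ‖e + ballAutomorphism e τ x‖ ≤ 4 * ((1 - τ) / ρ₀ + √((1 - τ) / ρ₀)) := by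
    refine (norm_pole_add_ballAutomorphism_le he hτ hτ1 hx).trans ?_
    gcongr
  rw [dumbbell_eq he (by rw [abs_of_pos] <;> linarith) hx]
  calc _ = ‖(β : ℂ) • (e + ballAutomorphism e τ x)
        - (ε * Complex.log (1 - τ * inner ℂ e x)) • e‖ := by congr 1; module
    _ ≤ ε * ‖Complex.log (1 - τ * inner ℂ e x)‖ + β * ‖e + ballAutomorphism e τ x‖ := by
      refine (norm_sub_le _ _).trans_eq ?_
      rw [norm_smul, norm_smul, he, norm_mul, Complex.norm_real, Complex.norm_real,
        Real.norm_eq_abs, Real.norm_eq_abs, abs_of_nonneg hβ, abs_of_nonneg hε]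
      ring
    _ ≤ _ := by gcongr

include he hα hε hβ hτ hτ1 hρ₀ hx in
lemma norm_dumbbell_sub_smul_pole_le (hρ : poleDist e τ x ≤ ρ₀)
    (hρ' : (1 - τ) / ρ₀ ≤ poleDist e τ x) :
    ‖dumbbell e α ε β τ x - ((α - ε * Real.log (poleDist e τ x) : ℝ) : ℂ) • e‖ ≤
      (α + β) * (4 * (ρ₀ + √ρ₀)) + ε * Real.pi := by
  have hpos : 0 < poleDist e τ x := (div_pos (by linarith) hρ₀).trans_le hρ'
  have hpole : ‖x - e‖ ≤ 4 * (ρ₀ + √ρ₀) := by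
    refine (norm_sub_pole_le he hτ hτ1 hx).trans ?_
    gcongr
  have hball : ‖e + ballAutomorphism e τ x‖ ≤ 4 * (ρ₀ + √ρ₀) := by
    have : (1 - τ) / poleDist e τ x ≤ ρ₀ := by
      rw [div_le_iff₀ hρ₀] at hρ'
      rw [div_le_iff₀ hpos]
      linarith
    refine (norm_pole_add_ballAutomorphism_le he hτ hτ1 hx).trans ?_
    gcongr
  have hlog := norm_log_sub_log_norm_le (1 - τ * inner ℂ e x)
  rw [← poleDist] at hlog
  rw [dumbbell_eq he (by rw [abs_of_pos] <;> linarith) hx]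
  calc _ = ‖(α : ℂ) • (x - e) + (β : ℂ) • (e + ballAutomorphism e τ x)
        - (ε * (Complex.log (1 - τ * inner ℂ e x) - Real.log (poleDist e τ x))) • e‖ := by
        congr 1; push_cast; module
    _ ≤ α * ‖x - e‖ + β * ‖e + ballAutomorphism e τ x‖
        + ε * ‖Complex.log (1 - τ * inner ℂ e x) - Real.log (poleDist e τ x)‖ := by
      refine (norm_sub_le _ _).trans ((add_le_add_left (norm_add_le _ _) _).trans_eq ?_)
      rw [norm_smul, norm_smul, norm_smul, he, norm_mul, Complex.norm_real, Complex.norm_real,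
        Complex.norm_real, Real.norm_eq_abs, Real.norm_eq_abs, Real.norm_eq_abs, abs_of_nonneg hα,
        abs_of_nonneg hβ, abs_of_nonneg hε, mul_one]
    _ ≤ α * (4 * (ρ₀ + √ρ₀)) + β * (4 * (ρ₀ + √ρ₀)) + ε * Real.pi := by gcongr
    _ = _ := by ring

include he hα hε hτ hτ1 hρ₀ hx in
lemma norm_dumbbell_sub_ballAutomorphism_le (hρ : poleDist e τ x ≤ (1 - τ) / ρ₀) :
    ‖dumbbell e α ε β τ x - (((α - ε * Real.log (1 - τ) + β : ℝ) : ℂ) • e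
      + (β : ℂ) • ballAutomorphism e τ x)‖ ≤
      α * (4 * ((1 - τ) / ρ₀ + √((1 - τ) / ρ₀))) + ε * (-Real.log ρ₀ + Real.pi) := by
  have hτ0 : 0 < 1 - τ := by linarith
  have hlow := one_sub_le_poleDist he hτ hτ1 hx
  have hpole : ‖x - e‖ ≤ 4 * ((1 - τ) / ρ₀ + √((1 - τ) / ρ₀)) := by
    refine (norm_sub_pole_le he hτ hτ1 hx).trans ?_
    gcongr
  have hlog : ‖Complex.log (1 - τ * inner ℂ e x) - Real.log (1 - τ)‖
      ≤ -Real.log ρ₀ + Real.pi := by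
    have hl := Real.log_le_log hτ0 hlow
    have hu := Real.log_le_log (hτ0.trans_le hlow) hρ
    rw [Real.log_div hτ0.ne' hρ₀.ne'] at hu
    have := norm_log_sub_ofReal_le (1 - τ * inner ℂ e x) (Real.log (1 - τ))
    rw [← poleDist, abs_of_nonneg (by linarith)] at this
    linarith
  rw [dumbbell_eq he (by rw [abs_of_pos] <;> linarith) hx]
  calc _ = ‖(α : ℂ) • (x - e)
        - (ε * (Complex.log (1 - τ * inner ℂ e x) - Real.log (1 - τ))) • e‖ := by
        congr 1; push_cast; module
    _ ≤ α * ‖x - e‖ + ε * ‖Complex.log (1 - τ * inner ℂ e x) - Real.log (1 - τ)‖ := by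
      refine (norm_sub_le _ _).trans_eq ?_
      rw [norm_smul, norm_smul, he, norm_mul, Complex.norm_real, Complex.norm_real,
        Real.norm_eq_abs, Real.norm_eq_abs, abs_of_nonneg hα, abs_of_nonneg hε, mul_one]
    _ ≤ _ := by gcongr

end DumbbellEstimates

section DumbbellParameters
open Set Filter Topology

lemma tendsto_mul_add_sqrt_nhds_zero (c : ℝ) :
    Tendsto (fun ρ : ℝ => c * (4 * (ρ + √ρ))) (𝓝 0) (𝓝 0) := by
  have : Continuous fun ρ : ℝ => c * (4 * (ρ + √ρ)) := by fun_prop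
  simpa using this.tendsto 0

lemma exists_mul_add_sqrt_lt (c : ℝ) {δ ρ₁ : ℝ} (hδ : 0 < δ) (hρ₁ : 0 < ρ₁) :
    ∃ ρ₀, 0 < ρ₀ ∧ ρ₀ < ρ₁ ∧ c * (4 * (ρ₀ + √ρ₀)) < δ := by
  have hsmall := (tendsto_mul_add_sqrt_nhds_zero c).mono_left (nhdsWithin_le_nhds (s := Ioi 0))
  obtain ⟨ρ₀, ⟨h0, h1⟩, h⟩ := ((show ∀ᶠ ρ : ℝ in 𝓝[>] 0, ρ ∈ Ioo 0 ρ₁ from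
    Ioo_mem_nhdsGT hρ₁).and (hsmall.eventually_lt_const hδ)).exists
  exact ⟨ρ₀, h0, h1, h⟩

/-- The width of the neck is `ℓ / -log κ`, which makes its length at the pole equal to `ℓ`. -/
lemma exists_neck_width_lt (c ℓ A : ℝ) {δ ρ₀ : ℝ} (hδ : 0 < δ) :
    ∃ κ, 0 < κ ∧ κ < 1 / 2 ∧
      c * (4 * (κ / ρ₀ + √(κ / ρ₀))) + ℓ / (-Real.log κ) * A < δ := by
  have hε : Tendsto (fun κ : ℝ => ℓ / (-Real.log κ)) (𝓝[>] 0) (𝓝 0) := by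
    have := (tendsto_inv_atTop_zero.comp
      (tendsto_neg_atBot_atTop.comp Real.tendsto_log_nhdsGT_zero)).const_mul ℓ
    simpa only [div_eq_mul_inv, Function.comp_def, mul_zero] using this
  have hκ : Tendsto (fun κ : ℝ => κ / ρ₀) (𝓝[>] 0) (𝓝 0) := by
    simpa using ((continuous_id.div_const ρ₀).tendsto 0).mono_left
      (nhdsWithin_le_nhds (s := Ioi 0))
  have hsum := ((tendsto_mul_add_sqrt_nhds_zero c).comp hκ).add (hε.mul_const A)
  rw [zero_mul, add_zero] at hsum
  obtain ⟨κ, ⟨h0, h1⟩, h⟩ := ((show ∀ᶠ κ : ℝ in 𝓝[>] 0, κ ∈ Ioo (0 : ℝ) (1 / 2) from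
    Ioo_mem_nhdsGT (by norm_num)).and (hsum.eventually_lt_const hδ)).exists
  exact ⟨κ, h0, h1, h⟩

variable {V : Type*} [NormedAddCommGroup V] [InnerProductSpace ℂ V] {e : V}

/-- The three regimes are the two balls and the neck: the dumbbell map is close to a homothety away
from the pole `e`, close to a segment near `e`, and close to an affine copy of a ball automorphism
very near `e`. -/
lemma exists_dumbbell_close (he : ‖e‖ = 1) {a b β δ ρ₁ : ℝ} (ha : 0 < a) (hab : a < b) (hβ : 0 < β)
    (hδ : 0 < δ) (hρ₁ : 0 < ρ₁) :
    ∃ ε τ ρ₀, 0 < ε ∧ 1 / 2 < τ ∧ τ < 1 ∧ 0 < ρ₀ ∧ ρ₀ < ρ₁ ∧ ∀ x : V, ‖x‖ ≤ 1 →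
      (ρ₀ ≤ poleDist e τ x → ‖dumbbell e a ε β τ x - (a : ℂ) • x‖ < δ) ∧
      ((1 - τ) / ρ₀ ≤ poleDist e τ x → poleDist e τ x ≤ ρ₀ →
        ∃ t ∈ Icc a b, ‖dumbbell e a ε β τ x - (t : ℂ) • e‖ < δ) ∧
      (poleDist e τ x ≤ (1 - τ) / ρ₀ → ‖dumbbell e a ε β τ x
        - (((b + β : ℝ) : ℂ) • e + (β : ℂ) • ballAutomorphism e τ x)‖ < δ) := by
  obtain ⟨ρ₀, hρ₀, hρ₀', hsmall⟩ := exists_mul_add_sqrt_lt (a + β) (half_pos hδ)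
    (lt_min hρ₁ one_pos)
  obtain ⟨hρ₀1, hρ₀2⟩ := lt_min_iff.1 hρ₀'
  obtain ⟨κ, hκ0, hκ1, hsmall'⟩ := exists_neck_width_lt (a + β) (b - a)
    (-Real.log ρ₀ + 1 + Real.pi) (ρ₀ := ρ₀) (half_pos hδ)
  have hlogκ : Real.log κ < 0 := Real.log_neg hκ0 (by linarith)
  have hlogρ₀ : Real.log ρ₀ < 0 := Real.log_neg hρ₀ hρ₀2
  have hε : 0 < (b - a) / (-Real.log κ) := div_pos (by linarith) (by linarith)
  have hεκ : (b - a) / (-Real.log κ) * (-Real.log κ) = b - a := div_mul_cancel₀ _ (by linarith)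
  set ε := (b - a) / (-Real.log κ)
  have hτ : 1 / 2 < 1 - κ := by linarith
  have hτ1 : 1 - κ < 1 := by linarith
  have hω : 0 ≤ 4 * (κ / ρ₀ + √(κ / ρ₀)) := by positivity
  refine ⟨ε, 1 - κ, ρ₀, hε, hτ, hτ1, hρ₀, hρ₀1, fun x hx => ⟨fun hρ => ?_, fun hρ hρ' => ?_,
    fun hρ => ?_⟩⟩
  · have := norm_dumbbell_sub_smul_le (α := a) he hε.le hβ.le hτ hτ1 hρ₀ hx hρ₀2.le hρ
    rw [sub_sub_cancel] at this
    nlinarith [Real.pi_pos]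
  · have hclose := norm_dumbbell_sub_smul_pole_le he ha.le hε.le hβ.le hτ hτ1 hρ₀ hx hρ' hρ
    rw [sub_sub_cancel] at hρ
    have hlow := Real.log_le_log hκ0 (by simpa using one_sub_le_poleDist he hτ hτ1 hx)
    have hupp := Real.log_le_log ((div_pos hκ0 hρ₀).trans_le hρ) hρ'
    exact ⟨_, ⟨by nlinarith, by nlinarith⟩, hclose.trans_lt (by nlinarith [Real.pi_pos])⟩
  · have := norm_dumbbell_sub_ballAutomorphism_le (β := β) he ha.le hε.le hτ hτ1 hρ₀ hx hρ
    rw [sub_sub_cancel, show a - ε * Real.log κ = b by linarith] at this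
    exact this.trans_lt (by nlinarith [Real.pi_pos])

end DumbbellParameters

section DumbbellCovering
open Set

variable {V : Type*} [NormedAddCommGroup V] [InnerProductSpace ℂ V] {e : V}

lemma closedBall_subset_image_of_norm_sub_lt {X : Type*} [TopologicalSpace X] {K S : Set X}
    {H M : X → V} {c : V} {a δ r r' : ℝ} (hK : IsCompact K) (hH : ContinuousOn H K) (hSK : S ⊆ K)
    (hopen : IsOpen (H '' S)) (hclose : ∀ x ∈ K, ‖H x - (c + (a : ℂ) • M x)‖ < δ)
    (ha : 0 ≤ a) (hr : δ ≤ a * r) (hr' : δ ≤ a * (r' - r)) (hM : ∀ x ∈ K \ S, r' ≤ ‖M x‖)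
    (hM0 : ∃ x ∈ S, M x = 0) : closedBall c (a * r) ⊆ H '' S := by
  refine subset_image_of_isPreconnected_of_isCompact (convex_closedBall c (a * r)).isPreconnected
    hK hH hSK hopen (fun x hx hmem => ?_) ?_
  · have hlow := norm_sub_norm_le ((a : ℂ) • M x) (c + (a : ℂ) • M x - H x)
    rw [norm_smul, Complex.norm_real, Real.norm_eq_abs, abs_of_nonneg ha, norm_sub_rev _ (H x),
      show (a : ℂ) • M x - (c + (a : ℂ) • M x - H x) = H x - c by abel] at hlow
    have := hclose x hx.1
    rw [mem_closedBall, dist_eq_norm] at hmem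
    nlinarith [mul_le_mul_of_nonneg_left (hM x hx) ha]
  · obtain ⟨x, hx, h0⟩ := hM0
    refine ⟨H x, ?_, mem_image_of_mem H hx⟩
    have := hclose x (hSK hx)
    rw [h0, smul_zero, add_zero] at this
    rw [mem_closedBall, dist_eq_norm]
    linarith

variable [FiniteDimensional ℂ V] (he : ‖e‖ = 1) {a b β δ r r' ε τ ρ₀ : ℝ} {N : Set V}
  (hemb : IsHolomorphicEmbedding (dumbbell e a ε β τ) (ball 0 1) N) (hτ : 1 / 2 < τ) (hτ1 : τ < 1)

include he hemb hτ hτ1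

lemma closedBall_zero_subset_image_dumbbell
    (hclose : ∀ x, ‖x‖ ≤ 1 → ρ₀ ≤ poleDist e τ x → ‖dumbbell e a ε β τ x - (a : ℂ) • x‖ < δ)
    (ha : 0 ≤ a) (hr'0 : 0 < r') (hr'1 : r' < 1) (hρ₀ : ρ₀ ≤ 1 - r') (hr : δ ≤ a * r)
    (hr' : δ ≤ a * (r' - r)) :
    closedBall 0 (a * r) ⊆ dumbbell e a ε β τ '' ball 0 1 := by
  have : ProperSpace V := FiniteDimensional.proper ℂ V
  have hsub : closedBall (0 : V) r' ⊆ ball 0 1 := closedBall_subset_ball hr'1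
  refine (closedBall_subset_image_of_norm_sub_lt (M := id) (isCompact_closedBall 0 r')
    (hemb.continuousOn.mono hsub) ball_subset_closedBall
    (hemb.isOpen_image isOpen_ball (ball_subset_closedBall.trans hsub)) (fun x hx => ?_) ha hr hr'
    (fun x hx => ?_) ⟨0, mem_ball_self hr'0, rfl⟩).trans
    (image_mono (ball_subset_closedBall.trans hsub))
  · have hx' := mem_closedBall_zero_iff.1 hx
    rw [id, zero_add]
    refine hclose x (hx'.trans hr'1.le) ?_
    linarith [one_sub_norm_inner_le_poleDist hτ hτ1 e x, norm_inner_le_of_norm_eq_one he x]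
  · simpa only [mem_ball_zero_iff, not_lt, id] using hx.2

lemma closedBall_smul_subset_image_dumbbell
    (hclose : ∀ x, ‖x‖ ≤ 1 → poleDist e τ x ≤ (1 - τ) / ρ₀ → ‖dumbbell e a ε β τ x
      - (((b + β : ℝ) : ℂ) • e + (β : ℂ) • ballAutomorphism e τ x)‖ < δ)
    (hβ : 0 ≤ β) (hr'0 : 0 < r') (hr'1 : r' < 1) (hρ₀0 : 0 < ρ₀) (hρ₀ : ρ₀ ≤ (1 - r') / 2)
    (hr : δ ≤ β * r) (hr' : δ ≤ β * (r' - r)) :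
    closedBall (((b + β : ℝ) : ℂ) • e) (β * r) ⊆ dumbbell e a ε β τ '' ball 0 1 := by
  have : ProperSpace V := FiniteDimensional.proper ℂ V
  have hτ' : |τ| < 1 := by rw [abs_of_pos] <;> linarith
  have hcont := continuousOn_ballAutomorphism he hτ'
  let K := closedBall 0 1 ∩ ballAutomorphism e τ ⁻¹' closedBall 0 r'
  let S := ball 0 1 ∩ ballAutomorphism e τ ⁻¹' ball 0 r'
  have hKball : K ⊆ ball 0 1 := fun x hx => mem_ball_zero_iff.2 <|
    norm_lt_one_of_norm_ballAutomorphism_lt_one he hτ' (mem_closedBall_zero_iff.1 hx.1)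
      ((mem_closedBall_zero_iff.1 hx.2).trans_lt hr'1)
  have hK : IsCompact K := (isCompact_closedBall 0 1).of_isClosed_subset
    (hcont.preimage_isClosed_of_isClosed isClosed_closedBall isClosed_closedBall) inter_subset_left
  have hS : IsOpen S := (hcont.mono ball_subset_closedBall).isOpen_inter_preimage isOpen_ball
    isOpen_ball
  have hSK : S ⊆ K := inter_subset_inter ball_subset_closedBall
    (preimage_mono ball_subset_closedBall)
  refine (closedBall_subset_image_of_norm_sub_lt hK (hemb.continuousOn.mono hKball) hSK
    (hemb.isOpen_image hS inter_subset_left) (fun x hx => ?_) hβ hr hr' (fun x hx => ?_)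
    ⟨(τ : ℂ) • e, ?_, ballAutomorphism_smul_self he τ⟩).trans (image_mono inter_subset_left)
  · have hx1 := mem_closedBall_zero_iff.1 hx.1
    have hxr := mem_closedBall_zero_iff.1 hx.2
    refine hclose x hx1 ((le_div_iff₀ hρ₀0).2 ?_)
    have := poleDist_mul_one_sub_norm_ballAutomorphism_le he hτ' hx1
    nlinarith [poleDist_pos he hτ' hx1]
  · by_contra! hlt
    exact hx.2 ⟨hKball hx.1, mem_ball_zero_iff.2 hlt⟩
  · refine ⟨mem_ball_zero_iff.2 ?_, ?_⟩
    · rwa [norm_smul, he, mul_one, Complex.norm_real]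
    · rw [mem_preimage, ballAutomorphism_smul_self he]
      exact mem_ball_self hr'0

end DumbbellCovering

section DumbbellEmbedding
open Set

variable {V : Type*} [NormedAddCommGroup V] [InnerProductSpace ℂ V] [FiniteDimensional ℂ V] {e : V}

/-- Two closed balls, of radius `a` around `0` and of radius `β` around `(b + β) e`, joined by the
segment from `a e` to `b e`. -/
def dumbbellSkeleton (e : V) (a b β : ℝ) : Set V :=
  closedBall 0 a ∪ ((fun t : ℝ => (t : ℂ) • e) '' Icc a b ∪ closedBall (((b + β : ℝ) : ℂ) • e) β)

lemma isCompact_dumbbellSkeleton (e : V) (a b β : ℝ) : IsCompact (dumbbellSkeleton e a b β) := by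
  have : ProperSpace V := FiniteDimensional.proper ℂ V
  refine (isCompact_closedBall _ _).union
    ((isCompact_Icc.image ?_).union (isCompact_closedBall _ _))
  fun_prop

lemma exists_dumbbell (he : ‖e‖ = 1) {a b β r : ℝ} (ha : 0 < a) (hab : a < b) (hβ : 0 < β)
    (hr0 : 0 < r) (hr1 : r < 1) {N : Set V} (hN : IsOpen N)
    (hsub : dumbbellSkeleton e a b β ⊆ N) :
    ∃ Φ : V → V, IsHolomorphicEmbedding Φ (ball 0 1) N ∧ closedBall 0 (a * r) ⊆ Φ '' ball 0 1 ∧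
      closedBall (((b + β : ℝ) : ℂ) • e) (β * r) ⊆ Φ '' ball 0 1 := by
  obtain ⟨δ₀, hδ₀, hthick⟩ :=
    (isCompact_dumbbellSkeleton e a b β).exists_thickening_subset_open hN hsub
  obtain ⟨r', hr, hr'⟩ := exists_between hr1
  obtain ⟨δ, hδ, hδ'⟩ : ∃ δ, 0 < δ ∧
      δ < min δ₀ (min (min (a * r) (a * (r' - r))) (min (β * r) (β * (r' - r)))) := by
    have : 0 < r' - r := sub_pos.2 hr
    exact exists_between (by positivity)
  simp only [lt_min_iff] at hδ'
  obtain ⟨hδδ₀, ⟨har, har'⟩, hβr, hβr'⟩ := hδ'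
  obtain ⟨ε, τ, ρ₀, hε, hτ, hτ1, hρ₀, hρ₀', hclose⟩ := exists_dumbbell_close he ha hab hβ hδ
    (ρ₁ := (1 - r') / 2) (by linarith)
  have hτ' : |τ| < 1 := by rw [abs_of_pos] <;> linarith
  have hmaps : MapsTo (dumbbell e a ε β τ) (ball 0 1) N := by
    intro x hx
    rw [mem_ball_zero_iff] at hx
    obtain ⟨hcore, hneck, hbulb⟩ := hclose x hx.le
    apply hthick
    simp only [mem_thickening_iff, dist_eq_norm]
    rcases le_total ρ₀ (poleDist e τ x) with hρ | hρ
    · refine ⟨_, Or.inl ?_, (hcore hρ).trans hδδ₀⟩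
      rw [mem_closedBall_zero_iff, norm_smul, Complex.norm_real, Real.norm_eq_abs, abs_of_pos ha]
      nlinarith
    rcases le_total ((1 - τ) / ρ₀) (poleDist e τ x) with hρ' | hρ'
    · obtain ⟨t, ht, hlt⟩ := hneck hρ' hρ
      exact ⟨_, Or.inr (Or.inl ⟨t, ht, rfl⟩), hlt.trans hδδ₀⟩
    · refine ⟨_, Or.inr (Or.inr ?_), (hbulb hρ').trans hδδ₀⟩
      rw [mem_closedBall, dist_eq_norm, add_sub_cancel_left, norm_smul, Complex.norm_real,
        Real.norm_eq_abs, abs_of_pos hβ]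
      nlinarith [norm_ballAutomorphism_lt_one he hτ' hx]
  have hemb := isHolomorphicEmbedding_dumbbell he ha hε hβ (by linarith) hτ1 hmaps
  exact ⟨_, hemb, closedBall_zero_subset_image_dumbbell he hemb hτ hτ1
      (fun x hx => (hclose x hx).1) ha.le (hr0.trans hr) hr' (by linarith) har.le har'.le,
    closedBall_smul_subset_image_dumbbell he hemb hτ hτ1 (fun x hx => (hclose x hx).2.2) hβ.le
      (hr0.trans hr) hr' hρ₀ hρ₀'.le hβr.le hβr'.le⟩

end DumbbellEmbedding

/-! ### The complex logistic function -/

section Sigmoid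
open Set Filter Topology

/-- The complex logistic function. Along `k → ∞`, the functions `ζ ↦ complexSigmoid (k ζ)` are
holomorphic approximations of the step function `0` on `Re ζ < 0`, `1` on `Re ζ > 0`. -/
noncomputable def complexSigmoid (ζ : ℂ) : ℂ := (1 + Complex.exp (-ζ))⁻¹

/-- The derivative of `complexSigmoid`. -/
noncomputable def complexSigmoidDeriv (ζ : ℂ) : ℂ :=
  Complex.exp (-ζ) / (1 + Complex.exp (-ζ)) ^ 2

lemma hasDerivAt_complexSigmoid {ζ : ℂ} (h : 1 + Complex.exp (-ζ) ≠ 0) :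
    HasDerivAt complexSigmoid (complexSigmoidDeriv ζ) ζ := by
  have hdenom : HasDerivAt (fun ζ : ℂ => 1 + Complex.exp (-ζ)) (-Complex.exp (-ζ)) ζ := by
    simpa using (hasDerivAt_neg ζ).cexp.const_add 1
  refine (hdenom.inv h).congr_deriv ?_
  rw [complexSigmoidDeriv, neg_neg]

lemma contDiffAt_complexSigmoid {ζ : ℂ} (h : 1 + Complex.exp (-ζ) ≠ 0) :
    ContDiffAt ℂ 1 complexSigmoid ζ := by
  have hdenom : ContDiffAt ℂ 1 (fun ζ : ℂ => 1 + Complex.exp (-ζ)) ζ := by fun_prop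
  exact hdenom.inv h

lemma norm_exp_neg (ζ : ℂ) : ‖Complex.exp (-ζ)‖ = Real.exp (-ζ.re) := by
  rw [Complex.norm_exp, Complex.neg_re]

lemma one_add_exp_neg_ne_zero {ζ : ℂ} (h : ζ.re ≠ 0) : 1 + Complex.exp (-ζ) ≠ 0 := by
  intro h0
  apply h
  have hnorm := norm_exp_neg ζ
  rw [eq_neg_of_add_eq_zero_right h0, norm_neg, norm_one] at hnorm
  simpa using hnorm.symm

lemma one_add_exp_neg_ofReal_ne_zero (t : ℝ) : 1 + Complex.exp (-(t : ℂ)) ≠ 0 := by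
  have : (1 + Real.exp (-t) : ℝ) ≠ 0 := by positivity
  exact_mod_cast this

lemma exp_neg_re_div_two_le_norm {ζ : ℂ} (h : ζ.re ≤ -1) :
    Real.exp (-ζ.re) / 2 ≤ ‖1 + Complex.exp (-ζ)‖ := by
  have hexp := Real.add_one_le_exp (-ζ.re)
  have htri := norm_sub_norm_le (Complex.exp (-ζ)) (-1)
  rw [norm_exp_neg, norm_neg, norm_one, sub_neg_eq_add, add_comm (Complex.exp (-ζ))] at htri
  linarith

lemma norm_complexSigmoid_le {ζ : ℂ} (h : ζ.re ≤ -1) :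
    ‖complexSigmoid ζ‖ ≤ 2 * Real.exp ζ.re := by
  rw [complexSigmoid, norm_inv]
  calc ‖1 + Complex.exp (-ζ)‖⁻¹ ≤ (Real.exp (-ζ.re) / 2)⁻¹ :=
        inv_anti₀ (by positivity) (exp_neg_re_div_two_le_norm h)
    _ = 2 * Real.exp ζ.re := by rw [Real.exp_neg]; field_simp

lemma norm_complexSigmoidDeriv_le {ζ : ℂ} (h : ζ.re ≤ -1) :
    ‖complexSigmoidDeriv ζ‖ ≤ 4 * Real.exp ζ.re := by
  have hdenom := exp_neg_re_div_two_le_norm h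
  rw [complexSigmoidDeriv, norm_div, norm_pow, norm_exp_neg]
  calc Real.exp (-ζ.re) / ‖1 + Complex.exp (-ζ)‖ ^ 2
      ≤ Real.exp (-ζ.re) / (Real.exp (-ζ.re) / 2) ^ 2 := by gcongr
    _ = 4 * Real.exp ζ.re := by rw [Real.exp_neg]; field_simp; ring

lemma one_add_exp_neg_neg (ζ : ℂ) :
    1 + Complex.exp (- -ζ) = Complex.exp ζ * (1 + Complex.exp (-ζ)) := by
  rw [neg_neg, mul_add, ← Complex.exp_add, add_neg_cancel, Complex.exp_zero]
  ring

lemma one_sub_complexSigmoid {ζ : ℂ} (h : 1 + Complex.exp (-ζ) ≠ 0) :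
    1 - complexSigmoid ζ = complexSigmoid (-ζ) := by
  rw [complexSigmoid, complexSigmoid, one_add_exp_neg_neg]
  have hexp := Complex.exp_ne_zero ζ
  have hmul : Complex.exp ζ * Complex.exp (-ζ) = 1 := by
    rw [← Complex.exp_add, add_neg_cancel, Complex.exp_zero]
  field_simp
  linear_combination hmul

lemma complexSigmoidDeriv_neg (ζ : ℂ) : complexSigmoidDeriv (-ζ) = complexSigmoidDeriv ζ := by
  rw [complexSigmoidDeriv, complexSigmoidDeriv, one_add_exp_neg_neg, neg_neg, mul_pow,
    Complex.exp_neg]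
  have := Complex.exp_ne_zero ζ
  rw [pow_two, pow_two, mul_assoc, div_mul_eq_div_div, div_self this, one_div,
    mul_inv, div_eq_mul_inv]

lemma tendsto_natCast_mul_atTop_prod {δ : ℝ} (hδ : 0 < δ) (l : Filter ℂ) :
    Tendsto (fun z : ℕ × ℂ => (z.1 : ℝ) * δ) (atTop ×ˢ l) atTop :=
  (tendsto_natCast_atTop_atTop.atTop_mul_const hδ).comp tendsto_fst

lemma eventually_natCast_mul_re_le {ζ₀ : ℂ} {δ : ℝ} (hδ : 0 < δ) (h : ζ₀.re < -δ) :
    ∀ᶠ z : ℕ × ℂ in atTop ×ˢ 𝓝 ζ₀,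
      ((z.1 : ℂ) * z.2).re ≤ -((z.1 : ℝ) * δ) ∧ 1 ≤ (z.1 : ℝ) * δ := by
  have hre : ∀ᶠ z : ℕ × ℂ in atTop ×ˢ 𝓝 ζ₀, z.2.re < -δ :=
    tendsto_snd.eventually (Complex.continuous_re.continuousAt.eventually_lt_const h)
  filter_upwards [hre, (tendsto_natCast_mul_atTop_prod hδ _).eventually_ge_atTop 1] with z hz hk
  refine ⟨?_, hk⟩
  rw [← Complex.ofReal_natCast, Complex.re_ofReal_mul]
  nlinarith [(Nat.cast_nonneg z.1 : (0 : ℝ) ≤ z.1)]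

lemma eventually_one_add_exp_neg_mul_ne_zero {ζ₀ : ℂ} (h : ζ₀.re ≠ 0) :
    ∀ᶠ z : ℕ × ℂ in atTop ×ˢ 𝓝 ζ₀, 1 + Complex.exp (-(z.1 * z.2)) ≠ 0 := by
  have hre : ∀ᶠ z : ℕ × ℂ in atTop ×ˢ 𝓝 ζ₀, z.2.re ≠ 0 :=
    tendsto_snd.eventually (Complex.continuous_re.continuousAt.eventually_ne h)
  filter_upwards [hre, tendsto_fst.eventually (eventually_ne_atTop 0)] with z hz hk
  apply one_add_exp_neg_ne_zero
  rw [← Complex.ofReal_natCast, Complex.re_ofReal_mul]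
  exact mul_ne_zero (Nat.cast_ne_zero.2 hk) hz

lemma tendsto_complexSigmoid_of_re_neg {ζ₀ : ℂ} (h : ζ₀.re < 0) :
    Tendsto (fun z : ℕ × ℂ => complexSigmoid (z.1 * z.2)) (atTop ×ˢ 𝓝 ζ₀) (𝓝 0) := by
  obtain ⟨δ, hδ0, hδ⟩ := exists_between (neg_pos.2 h)
  have hlim : Tendsto (fun z : ℕ × ℂ => 2 * Real.exp (-((z.1 : ℝ) * δ))) (atTop ×ˢ 𝓝 ζ₀) (𝓝 0) := by
    simpa using (Real.tendsto_exp_neg_atTop_nhds_zero.comp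
      (tendsto_natCast_mul_atTop_prod hδ0 (𝓝 ζ₀))).const_mul 2
  refine squeeze_zero_norm' ?_ hlim
  filter_upwards [eventually_natCast_mul_re_le hδ0 (lt_neg_of_lt_neg hδ)] with z ⟨hre, hk⟩
  refine (norm_complexSigmoid_le (by linarith)).trans ?_
  gcongr

lemma tendsto_mul_complexSigmoidDeriv_of_re_neg {ζ₀ : ℂ} (h : ζ₀.re < 0) :
    Tendsto (fun z : ℕ × ℂ => z.1 * complexSigmoidDeriv (z.1 * z.2)) (atTop ×ˢ 𝓝 ζ₀) (𝓝 0) := by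
  obtain ⟨δ, hδ0, hδ⟩ := exists_between (neg_pos.2 h)
  have hlim : Tendsto
      (fun z : ℕ × ℂ => 4 / δ * (((z.1 : ℝ) * δ) ^ 1 * Real.exp (-((z.1 : ℝ) * δ))))
      (atTop ×ˢ 𝓝 ζ₀) (𝓝 0) := by
    simpa using ((Real.tendsto_pow_mul_exp_neg_atTop_nhds_zero 1).comp
      (tendsto_natCast_mul_atTop_prod hδ0 (𝓝 ζ₀))).const_mul (4 / δ)
  refine squeeze_zero_norm' ?_ hlim
  filter_upwards [eventually_natCast_mul_re_le hδ0 (lt_neg_of_lt_neg hδ)] with z ⟨hre, hk⟩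
  rw [norm_mul, Complex.norm_natCast]
  calc (z.1 : ℝ) * ‖complexSigmoidDeriv (z.1 * z.2)‖
      ≤ z.1 * (4 * Real.exp ((z.1 : ℂ) * z.2).re) := by
        gcongr; exact norm_complexSigmoidDeriv_le (by linarith)
    _ ≤ z.1 * (4 * Real.exp (-((z.1 : ℝ) * δ))) := by gcongr
    _ = 4 / δ * (((z.1 : ℝ) * δ) ^ 1 * Real.exp (-((z.1 : ℝ) * δ))) := by field_simp

lemma tendsto_prod_neg (ζ₀ : ℂ) :
    Tendsto (fun z : ℕ × ℂ => (z.1, -z.2)) (atTop ×ˢ 𝓝 ζ₀) (atTop ×ˢ 𝓝 (-ζ₀)) :=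
  tendsto_id.prodMap (tendsto_neg ζ₀)

lemma tendsto_one_sub_complexSigmoid_of_re_pos {ζ₀ : ℂ} (h : 0 < ζ₀.re) :
    Tendsto (fun z : ℕ × ℂ => 1 - complexSigmoid (z.1 * z.2)) (atTop ×ˢ 𝓝 ζ₀) (𝓝 0) := by
  have hneg := tendsto_complexSigmoid_of_re_neg (ζ₀ := -ζ₀) (by simpa using h)
  refine (hneg.comp (tendsto_prod_neg ζ₀)).congr' ?_
  filter_upwards [eventually_one_add_exp_neg_mul_ne_zero h.ne'] with z hz
  simp only [Function.comp, mul_neg, one_sub_complexSigmoid hz]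

lemma tendsto_mul_complexSigmoidDeriv_of_re_pos {ζ₀ : ℂ} (h : 0 < ζ₀.re) :
    Tendsto (fun z : ℕ × ℂ => z.1 * complexSigmoidDeriv (z.1 * z.2)) (atTop ×ˢ 𝓝 ζ₀) (𝓝 0) := by
  have hneg := tendsto_mul_complexSigmoidDeriv_of_re_neg (ζ₀ := -ζ₀) (by simpa using h)
  refine (hneg.comp (tendsto_prod_neg ζ₀)).congr fun z => ?_
  simp only [Function.comp, mul_neg, complexSigmoidDeriv_neg]

lemma complexSigmoid_ofReal (t : ℝ) : complexSigmoid t = (Real.sigmoid t : ℝ) := by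
  rw [complexSigmoid, Real.sigmoid]
  push_cast
  rfl

lemma complexSigmoidDeriv_ofReal (t : ℝ) :
    complexSigmoidDeriv t = (Real.sigmoid t * (1 - Real.sigmoid t) : ℝ) := by
  rw [complexSigmoidDeriv, Real.sigmoid]
  have := one_add_exp_neg_ofReal_ne_zero t
  push_cast
  field_simp
  ring

lemma mul_sigmoid_mul_one_sub_sigmoid_le {t : ℝ} (ht : 0 ≤ t) :
    t * (Real.sigmoid t * (1 - Real.sigmoid t)) ≤ 1 := by
  have hone_sub : 1 - Real.sigmoid t ≤ Real.exp (-t) := by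
    rw [← Real.sigmoid_neg, ← Real.sigmoid_mul_rexp_neg]
    exact mul_le_of_le_one_left (Real.exp_pos _).le (Real.sigmoid_lt_one t).le
  have hexp : t * Real.exp (-t) ≤ 1 := by
    rw [Real.exp_neg, ← div_eq_mul_inv, div_le_one (Real.exp_pos t)]
    linarith [Real.add_one_le_exp t]
  refine le_trans (mul_le_mul_of_nonneg_left (le_trans ?_ hone_sub) ht) hexp
  exact mul_le_of_le_one_left (by linarith [Real.sigmoid_lt_one t]) (Real.sigmoid_lt_one t).le

lemma abs_mul_sigmoid_mul_one_sub_sigmoid_le (t : ℝ) :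
    |t * (Real.sigmoid t * (1 - Real.sigmoid t))| ≤ 1 := by
  have hprod : 0 ≤ Real.sigmoid t * (1 - Real.sigmoid t) :=
    mul_nonneg (Real.sigmoid_pos t).le (sub_nonneg.2 (Real.sigmoid_lt_one t).le)
  rw [abs_mul, abs_of_nonneg hprod]
  rcases le_total 0 t with ht | ht
  · rw [abs_of_nonneg ht]
    exact mul_sigmoid_mul_one_sub_sigmoid_le ht
  · have hneg := mul_sigmoid_mul_one_sub_sigmoid_le (neg_nonneg.2 ht)
    rwa [Real.sigmoid_neg, sub_sub_cancel, mul_comm (1 - _), ← abs_of_nonpos ht] at hneg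

end Sigmoid

/-! ### Gluing an embedding to an affine map -/

section Gluing
open Set Filter Topology

variable {V W : Type*} [NormedAddCommGroup V] [NormedSpace ℂ V] [NormedAddCommGroup W]
  [NormedSpace ℂ W]

lemma eventually_forall_mem_of_isCompact {ι X : Type*} [TopologicalSpace X] {l : Filter ι}
    {K : Set X} (hK : IsCompact K) {P : ι → X → Prop}
    (h : ∀ x ∈ K, ∀ᶠ z in l ×ˢ 𝓝[K] x, P z.1 z.2) : ∀ᶠ k in l, ∀ x ∈ K, P k x := by
  have hmem : {z : ι × X | z.2 ∈ K → P z.1 z.2} ∈ l ×ˢ 𝓝ˢ K := by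
    refine hK.mem_prod_nhdsSet_of_forall fun x hx => ?_
    obtain ⟨A, hA, B, hB, hAB⟩ := mem_prod_iff.1 (h x hx)
    refine mem_prod_iff.2 ⟨A, hA, _, mem_nhdsWithin_iff_eventually.1 hB, ?_⟩
    rintro ⟨k, y⟩ ⟨hk, hyB⟩ hyK
    exact hAB (mk_mem_prod hk (hyB hyK))
  obtain ⟨A, hA, B, hB, hAB⟩ := mem_prod_iff.1 hmem
  filter_upwards [hA] with k hk x hx
  exact hAB (mk_mem_prod hk (subset_of_mem_nhdsSet hB hx)) hx

lemma tendsto_prod_fst_nhdsWithin {ι X : Type*} [TopologicalSpace X] (l : Filter ι) (K : Set X)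
    (x y : X) :
    Tendsto (fun z : ι × X × X => (z.1, z.2.1)) (l ×ˢ 𝓝[K ×ˢ K] (x, y)) (l ×ˢ 𝓝[K] x) := by
  rw [nhdsWithin_prod_eq]
  exact tendsto_fst.prodMk (tendsto_fst.comp tendsto_snd)

lemma tendsto_prod_snd_nhdsWithin {ι X : Type*} [TopologicalSpace X] (l : Filter ι) (K : Set X)
    (x y : X) :
    Tendsto (fun z : ι × X × X => (z.1, z.2.2)) (l ×ˢ 𝓝[K ×ˢ K] (x, y)) (l ×ˢ 𝓝[K] y) := by
  rw [nhdsWithin_prod_eq]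
  exact tendsto_fst.prodMk (tendsto_snd.comp tendsto_snd)

/-- The map `u ↦ F (p u) + M (u - p u)`, which is `F` where `p = id` and an affine map where `p` is
constant. -/
def glue (F : V → W) (M : V →L[ℂ] W) (p : V → V) (u : V) : W := F (p u) + M (u - p u)

/-- Local nondegeneracy at `x ∈ K` of a sequence of interpolating maps `p k` with limit `y` at `x`;
`L` stands for the derivative at `y` of the map `F` to be glued. Both the infinitesimal and the
finite increments of `L ∘ p + M ∘ (id - p)` are bounded below. -/
structure IsLocallyGluable (p : ℕ → V → V) (L M : V →L[ℂ] W) (K : Set V) (x y : V) (c C : ℝ) :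
    Prop where
  tendsto : Tendsto (fun z : ℕ × V => p z.1 z.2) (atTop ×ˢ 𝓝[K] x) (𝓝 y)
  contDiffAt : ∀ᶠ z : ℕ × V in atTop ×ˢ 𝓝[K] x, ContDiffAt ℂ 1 (p z.1) z.2
  lower_pos : 0 < c
  upper_pos : 0 < C
  fderiv_bounds : ∀ᶠ z : ℕ × V in atTop ×ˢ 𝓝[K] x, ∀ v,
    c * ‖v‖ ≤ ‖L (fderiv ℂ (p z.1) z.2 v) + M (v - fderiv ℂ (p z.1) z.2 v)‖ ∧
    ‖fderiv ℂ (p z.1) z.2 v‖ ≤ C * ‖v‖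
  sub_bounds : ∀ᶠ z : ℕ × V × V in atTop ×ˢ 𝓝[K ×ˢ K] (x, x),
    c * ‖z.2.1 - z.2.2‖ ≤ ‖L (p z.1 z.2.1 - p z.1 z.2.2) +
      M ((z.2.1 - z.2.2) - (p z.1 z.2.1 - p z.1 z.2.2))‖ ∧
    ‖p z.1 z.2.1 - p z.1 z.2.2‖ ≤ C * ‖z.2.1 - z.2.2‖

variable {p : ℕ → V → V} {M : V →L[ℂ] W} {K : Set V} {x y : V} {F : V → W} {c C : ℝ}

lemma tendsto_glue (hF : ContinuousAt F y)
    (h : Tendsto (fun z : ℕ × V => p z.1 z.2) (atTop ×ˢ 𝓝[K] x) (𝓝 y)) :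
    Tendsto (fun z : ℕ × V => glue F M (p z.1) z.2) (atTop ×ˢ 𝓝[K] x) (𝓝 (F y + M (x - y))) := by
  have hsnd : Tendsto (fun z : ℕ × V => z.2) (atTop ×ˢ 𝓝[K] x) (𝓝 x) :=
    tendsto_snd.mono_right nhdsWithin_le_nhds
  exact (hF.tendsto.comp h).add ((M.continuous.tendsto _).comp (hsnd.sub h))

lemma contDiffAt_glue {q : V → V} (hF : ContDiffAt ℂ 1 F (q x)) (hq : ContDiffAt ℂ 1 q x) :
    ContDiffAt ℂ 1 (glue F M q) x :=
  (hF.comp x hq).add (M.contDiff.contDiffAt.comp x (contDiffAt_id.sub hq))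

lemma fderiv_glue_apply {q : V → V} (hF : DifferentiableAt ℂ F (q x))
    (hq : DifferentiableAt ℂ q x) (v : V) :
    fderiv ℂ (glue F M q) x v = fderiv ℂ F (q x) (fderiv ℂ q x v) + M (v - fderiv ℂ q x v) := by
  have hderiv : HasFDerivAt (glue F M q) _ x := (hF.hasFDerivAt.comp x hq.hasFDerivAt).add
    (M.hasFDerivAt.comp x ((hasFDerivAt_id x).sub hq.hasFDerivAt))
  simp [hderiv.fderiv]

namespace IsLocallyGluable

lemma eq_zero_of_norm_le {L : V →L[ℂ] W} (h : IsLocallyGluable p L M K x y c C) {v w : V} {d : W}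
    (hd : c * ‖v‖ ≤ ‖d‖) (hdw : ‖d‖ ≤ c / (2 * C) * ‖w‖) (hw : ‖w‖ ≤ C * ‖v‖) : v = 0 := by
  have hc := h.lower_pos
  have hC := h.upper_pos
  have hv : c * ‖v‖ ≤ c / 2 * ‖v‖ := calc
    c * ‖v‖ ≤ c / (2 * C) * ‖w‖ := hd.trans hdw
    _ ≤ c / (2 * C) * (C * ‖v‖) := by gcongr
    _ = c / 2 * ‖v‖ := by field_simp
  exact norm_le_zero_iff.1 (by nlinarith [norm_nonneg v])

lemma eventually_injective_fderiv_glue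
    (h : IsLocallyGluable p (fderiv ℂ F y) M K x y c C) (hF : ContDiffAt ℂ 1 F y) :
    ∀ᶠ z : ℕ × V in atTop ×ˢ 𝓝[K] x, ContDiffAt ℂ 1 (glue F M (p z.1)) z.2 ∧
      Function.Injective (fderiv ℂ (glue F M (p z.1)) z.2) := by
  have hε : 0 < c / (2 * C) := div_pos h.lower_pos (mul_pos two_pos h.upper_pos)
  have hnear := h.tendsto.eventually
    (Metric.continuousAt_iff'.1 (hF.continuousAt_fderiv one_ne_zero) _ hε)
  have hsmooth := h.tendsto.eventually (hF.eventually (by simp))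
  filter_upwards [hnear, hsmooth, h.contDiffAt, h.fderiv_bounds] with z hz hFz hpz hbounds
  refine ⟨contDiffAt_glue hFz hpz, ?_⟩
  rw [injective_iff_map_eq_zero]
  intro v hv
  rw [fderiv_glue_apply (hFz.differentiableAt one_ne_zero) (hpz.differentiableAt one_ne_zero)] at hv
  obtain ⟨hlower, hupper⟩ := hbounds v
  set w := fderiv ℂ (p z.1) z.2 v
  have herror : fderiv ℂ F y w + M (v - w) = -(fderiv ℂ F (p z.1 z.2) - fderiv ℂ F y) w := by
    rw [sub_apply, ← sub_eq_zero, ← hv]; abel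
  rw [herror, norm_neg] at hlower
  rw [dist_eq_norm] at hz
  exact h.eq_zero_of_norm_le hlower (ContinuousLinearMap.le_of_opNorm_le _ hz.le w) hupper

lemma eventually_eq_of_glue_eq
    (h : IsLocallyGluable p (fderiv ℂ F y) M K x y c C) (hF : ContDiffAt ℂ 1 F y) :
    ∀ᶠ z : ℕ × V × V in atTop ×ˢ 𝓝[K ×ˢ K] (x, x),
      glue F M (p z.1) z.2.1 = glue F M (p z.1) z.2.2 → z.2.1 = z.2.2 := by
  have hε : 0 < c / (2 * C) := div_pos h.lower_pos (mul_pos two_pos h.upper_pos)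
  have hstrict :=
    (hasStrictFDerivAt_iff_isLittleO.1 (hF.hasStrictFDerivAt one_ne_zero)).def hε
  have hlim := (h.tendsto.comp (tendsto_prod_fst_nhdsWithin atTop K x x)).prodMk_nhds
    (h.tendsto.comp (tendsto_prod_snd_nhdsWithin atTop K x x))
  filter_upwards [hlim.eventually hstrict, h.sub_bounds] with z hz ⟨hlower, hupper⟩ heq
  simp only [Function.comp] at hz
  simp only [glue] at heq
  set w := p z.1 z.2.1 - p z.1 z.2.2 with hw
  have herror : fderiv ℂ F y w + M ((z.2.1 - z.2.2) - w) =
      -(F (p z.1 z.2.1) - F (p z.1 z.2.2) - fderiv ℂ F y w) := by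
    have hsub : (z.2.1 - z.2.2) - w = (z.2.1 - p z.1 z.2.1) - (z.2.2 - p z.1 z.2.2) := by
      rw [hw]; abel
    rw [hsub, M.map_sub, ← sub_eq_zero, ← sub_eq_zero.2 heq]; abel
  rw [herror, norm_neg] at hlower
  exact sub_eq_zero.1 (h.eq_zero_of_norm_le hlower hz hupper)

end IsLocallyGluable

variable {P : V → V}

lemma eventually_injOn_glue (hK : IsCompact K) (hF : ∀ x ∈ K, ContDiffAt ℂ 1 F (P x))
    (h : ∀ x ∈ K, ∃ c C, IsLocallyGluable p (fderiv ℂ F (P x)) M K x (P x) c C)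
    (hinj : InjOn (glue F M P) K) : ∀ᶠ k in atTop, InjOn (glue F M (p k)) K := by
  have htendsto : ∀ x ∈ K, Tendsto (fun z : ℕ × V => glue F M (p z.1) z.2) (atTop ×ˢ 𝓝[K] x)
      (𝓝 (glue F M P x)) := fun x hx => by
    obtain ⟨c, C, hx'⟩ := h x hx
    exact tendsto_glue (hF x hx).continuousAt hx'.tendsto
  have hpairs : ∀ᶠ k in atTop, ∀ w ∈ K ×ˢ K,
      glue F M (p k) w.1 = glue F M (p k) w.2 → w.1 = w.2 := by
    refine eventually_forall_mem_of_isCompact (hK.prod hK) ?_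
    rintro ⟨x, y⟩ ⟨hx, hy⟩
    by_cases hxy : x = y
    · subst hxy
      obtain ⟨c, C, hx'⟩ := h x hx
      exact hx'.eventually_eq_of_glue_eq (hF x hx)
    · have hne : glue F M P x ≠ glue F M P y := fun heq => hxy (hinj hx hy heq)
      have hsub := ((htendsto x hx).comp (tendsto_prod_fst_nhdsWithin atTop K x y)).sub
        ((htendsto y hy).comp (tendsto_prod_snd_nhdsWithin atTop K x y))
      filter_upwards [hsub.eventually_ne (sub_ne_zero.2 hne)] with z hz heq
      exact absurd (sub_eq_zero.2 heq) hz
  filter_upwards [hpairs] with k hk x hx y hy hxy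
  exact hk (x, y) ⟨hx, hy⟩ hxy

lemma eventually_isHolomorphicEmbedding_glue {U : Set W} (hK : IsCompact K) (hU : IsOpen U)
    (hF : ∀ x ∈ K, ContDiffAt ℂ 1 F (P x))
    (h : ∀ x ∈ K, ∃ c C, IsLocallyGluable p (fderiv ℂ F (P x)) M K x (P x) c C)
    (hinj : InjOn (glue F M P) K) (hmaps : MapsTo (glue F M P) K U) :
    ∀ᶠ k in atTop, IsHolomorphicEmbedding (glue F M (p k)) K U := by
  have hlocal : ∀ᶠ k in atTop, ∀ x ∈ K, (ContDiffAt ℂ 1 (glue F M (p k)) x ∧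
      Function.Injective (fderiv ℂ (glue F M (p k)) x)) ∧ glue F M (p k) x ∈ U := by
    refine eventually_forall_mem_of_isCompact hK fun x hx => ?_
    obtain ⟨c, C, hx'⟩ := h x hx
    exact (hx'.eventually_injective_fderiv_glue (hF x hx)).and
      ((tendsto_glue (hF x hx).continuousAt hx'.tendsto).eventually (hU.mem_nhds (hmaps hx)))
  filter_upwards [hlocal, eventually_injOn_glue hK hF h hinj] with k hk hinjk
  exact ⟨fun x hx => (hk x hx).1.1, hinjk, fun x hx => (hk x hx).1.2, fun x hx => (hk x hx).2⟩

lemma eventually_norm_glue_sub_lt {S : Set V} {G : V → W} {η : ℝ} (hη : 0 < η)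
    (hS : IsCompact S) (hSK : S ⊆ K) (hF : ∀ x ∈ S, ContinuousAt F (P x))
    (h : ∀ x ∈ S, Tendsto (fun z : ℕ × V => p z.1 z.2) (atTop ×ˢ 𝓝[K] x) (𝓝 (P x)))
    (hG : ContinuousOn G S) (hGP : ∀ x ∈ S, glue F M P x = G x) :
    ∀ᶠ k in atTop, ∀ x ∈ S, ‖glue F M (p k) x - G x‖ < η := by
  refine eventually_forall_mem_of_isCompact hS fun x hx => ?_
  have hglue : Tendsto (fun z : ℕ × V => glue F M (p z.1) z.2) (atTop ×ˢ 𝓝[S] x)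
      (𝓝 (glue F M P x)) :=
    (tendsto_glue (hF x hx) (h x hx)).mono_left (prod_mono_right atTop (nhdsWithin_mono x hSK))
  have hlim : Tendsto (fun z : ℕ × V => G z.2) (atTop ×ˢ 𝓝[S] x) (𝓝 (G x)) :=
    (hG x hx).tendsto.comp tendsto_snd
  have hdiff := (hglue.sub hlim).norm
  rw [hGP x hx, sub_self, norm_zero] at hdiff
  exact hdiff.eventually (gt_mem_nhds hη)

end Gluing

/-! ### The logistic interpolation satisfies the gluing conditions -/

section LocalGluing
open Set Filter Topology

variable {V W : Type*} [NormedAddCommGroup V] [NormedSpace ℂ V] [NormedAddCommGroup W]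
  [NormedSpace ℂ W]

lemma eventually_norm_sub_sub_le_of_fderiv {f : ℕ → V → W} {A : V →L[ℂ] W} {x : V} {η : ℝ}
    (h : ∀ᶠ z : ℕ × V in atTop ×ˢ 𝓝 x, DifferentiableAt ℂ (f z.1) z.2 ∧
      ‖fderiv ℂ (f z.1) z.2 - A‖ ≤ η) :
    ∀ᶠ z : ℕ × V × V in atTop ×ˢ 𝓝 (x, x),
      ‖f z.1 z.2.1 - f z.1 z.2.2 - A (z.2.1 - z.2.2)‖ ≤ η * ‖z.2.1 - z.2.2‖ := by
  obtain ⟨S, hS, T, hT, hST⟩ := mem_prod_iff.1 h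
  obtain ⟨ε, hε, hεT⟩ := Metric.mem_nhds_iff.1 hT
  have hball := ball_mem_nhds x hε
  filter_upwards [prod_mem_prod hS (prod_mem_nhds hball hball)]
  rintro ⟨k, u, v⟩ ⟨hk, hu, hv⟩
  have hderiv : ∀ y ∈ ball x ε, DifferentiableAt ℂ (f k) y ∧ ‖fderiv ℂ (f k) y - A‖ ≤ η :=
    fun y hy => hST (mk_mem_prod hk (hεT hy))
  exact (convex_ball x ε).norm_image_sub_le_of_norm_fderiv_le' (𝕜 := ℂ)
    (fun y hy => (hderiv y hy).1) (fun y hy => (hderiv y hy).2) hv hu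

lemma half_mul_norm_le_of_norm_sub_le {L M : V →L[ℂ] W} {A : V →L[ℂ] V} {c η : ℝ} {v w : V}
    (hv : c * ‖v‖ ≤ ‖(L.comp A + M.comp (ContinuousLinearMap.id ℂ V - A)) v‖)
    (hη : ‖L - M‖ * η ≤ c / 2) (hw : ‖w - A v‖ ≤ η * ‖v‖) :
    c / 2 * ‖v‖ ≤ ‖L w + M (v - w)‖ := by
  have hsplit : L w + M (v - w) =
      (L.comp A + M.comp (ContinuousLinearMap.id ℂ V - A)) v + (L - M) (w - A v) := by
    simp only [add_apply, ContinuousLinearMap.comp_apply, sub_apply,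
      ContinuousLinearMap.id_apply, map_sub]
    abel
  have herror : ‖(L - M) (w - A v)‖ ≤ c / 2 * ‖v‖ := calc
    ‖(L - M) (w - A v)‖ ≤ ‖L - M‖ * (η * ‖v‖) := (L - M).le_opNorm_of_le hw
    _ = ‖L - M‖ * η * ‖v‖ := (mul_assoc _ _ _).symm
    _ ≤ c / 2 * ‖v‖ := by gcongr
  rw [hsplit]
  linarith [norm_sub_le_norm_add ((L.comp A + M.comp (ContinuousLinearMap.id ℂ V - A)) v)
    ((L - M) (w - A v))]

lemma exists_isLocallyGluable_of_tendsto_fderiv [FiniteDimensional ℂ V] {p : ℕ → V → V}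
    {L M : V →L[ℂ] W} {A : V →L[ℂ] V} (K : Set V) {x y : V}
    (hp : Tendsto (fun z : ℕ × V => p z.1 z.2) (atTop ×ˢ 𝓝 x) (𝓝 y))
    (hsmooth : ∀ᶠ z : ℕ × V in atTop ×ˢ 𝓝 x, ContDiffAt ℂ 1 (p z.1) z.2)
    (hderiv : Tendsto (fun z : ℕ × V => fderiv ℂ (p z.1) z.2) (atTop ×ˢ 𝓝 x) (𝓝 A))
    (hinj : Function.Injective (L.comp A + M.comp (ContinuousLinearMap.id ℂ V - A))) :
    ∃ c C, IsLocallyGluable p L M K x y c C := by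
  obtain ⟨c, hc, hlower⟩ := exists_pos_mul_norm_le_of_injective hinj
  obtain ⟨η, hη, hηc⟩ : ∃ η > 0, ‖L - M‖ * η ≤ c / 2 := by
    refine ⟨c / (2 * (‖L - M‖ + 1)), by positivity, ?_⟩
    rw [mul_div_assoc', div_le_div_iff₀ (by positivity) two_pos]
    nlinarith [norm_nonneg (L - M)]
  have hupper : ∀ {v w : V}, ‖w - A v‖ ≤ η * ‖v‖ → ‖w‖ ≤ (‖A‖ + η) * ‖v‖ := fun {v w} hw => by
    linarith [norm_sub_norm_le w (A v), A.le_opNorm v]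
  have hle : (atTop : Filter ℕ) ×ˢ 𝓝[K] x ≤ atTop ×ˢ 𝓝 x := prod_mono_right _ nhdsWithin_le_nhds
  have hnear : ∀ᶠ z : ℕ × V in atTop ×ˢ 𝓝 x, ‖fderiv ℂ (p z.1) z.2 - A‖ ≤ η := by
    filter_upwards [Metric.tendsto_nhds.1 hderiv η hη] with z hz
    exact (dist_eq_norm _ A).symm.trans_le hz.le
  have hincrement := eventually_norm_sub_sub_le_of_fderiv ((hsmooth.and hnear).mono fun z hz =>
    ⟨hz.1.differentiableAt one_ne_zero, hz.2⟩)
  refine ⟨c / 2, ‖A‖ + η, hp.mono_left hle, hle hsmooth, by positivity, by positivity, hle ?_,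
    prod_mono_right _ nhdsWithin_le_nhds ?_⟩
  · filter_upwards [hnear] with z hz v
    have hv := ContinuousLinearMap.le_of_opNorm_le _ hz v
    exact ⟨half_mul_norm_le_of_norm_sub_le (hlower v) hηc hv, hupper hv⟩
  · filter_upwards [hincrement] with z hz
    exact ⟨half_mul_norm_le_of_norm_sub_le (hlower _) hηc hz, hupper hz⟩

lemma exists_pos_forall_mul_norm_le_of_isCompact [FiniteDimensional ℂ V] {X : Type*}
    [TopologicalSpace X] {S : Set X} (hS : IsCompact S) {T : X → V →L[ℂ] W} (hT : Continuous T)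
    (hinj : ∀ t ∈ S, Function.Injective (T t)) : ∃ c > 0, ∀ t ∈ S, ∀ u, c * ‖u‖ ≤ ‖T t u‖ := by
  have : ProperSpace V := FiniteDimensional.proper ℂ V
  have hcont : Continuous fun w : X × V => ‖T w.1 w.2‖ := by fun_prop
  have hpos : ∀ w ∈ S ×ˢ sphere (0 : V) 1, 0 < ‖T w.1 w.2‖ := by
    rintro ⟨t, u⟩ ⟨ht, hu⟩
    refine norm_pos_iff.2 fun h0 => ne_zero_of_mem_unit_sphere ⟨u, hu⟩ ?_
    exact (injective_iff_map_eq_zero _).1 (hinj t ht) u h0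
  obtain ⟨c, hc, hlower⟩ :=
    (hS.prod (isCompact_sphere (0 : V) 1)).exists_forall_le' hcont.continuousOn hpos
  refine ⟨c, hc, fun t ht u => ?_⟩
  rcases eq_or_ne u 0 with rfl | hu
  · simp
  have hu' := norm_pos_iff.2 hu
  have hunit : ((‖u‖⁻¹ : ℝ) : ℂ) • u ∈ sphere (0 : V) 1 := by
    rw [mem_sphere_zero_iff_norm, norm_smul, Complex.norm_real, norm_inv, norm_norm,
      inv_mul_cancel₀ hu'.ne']
  have hscaled := hlower (t, _) ⟨ht, hunit⟩
  rwa [map_smul, norm_smul, Complex.norm_real, norm_inv, norm_norm, ← div_eq_inv_mul,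
    le_div_iff₀ hu'] at hscaled

end LocalGluing

section AxialCollapse
open Set Filter Topology

variable {V : Type*} [NormedAddCommGroup V] [InnerProductSpace ℂ V]

/-- A holomorphic map which for `k → ∞` tends to the identity on `Re ⟪e, u⟫ < a` and to the constant
`a e` on `Re ⟪e, u⟫ > a`. -/
noncomputable def axialCollapse (e : V) (a : ℝ) (k : ℕ) (u : V) : V :=
  u - complexSigmoid (k * (inner ℂ e u - a)) • (u - (a : ℂ) • e)

/-- The identity minus the derivative of `axialCollapse e a k` at `u`. -/
noncomputable def axialCollapseDefect (e : V) (a : ℝ) (k : ℕ) (u : V) : V →L[ℂ] V :=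
  complexSigmoid (k * (inner ℂ e u - a)) • ContinuousLinearMap.id ℂ V +
    (k * complexSigmoidDeriv (k * (inner ℂ e u - a))) •
      ContinuousLinearMap.smulRightL ℂ V V (innerSL ℂ e) (u - (a : ℂ) • e)

/-- The values of `axialCollapseDefect e a k` at real multiples of `e`. -/
noncomputable def junctionDefect (e : V) (χ κ : ℝ) : V →L[ℂ] V :=
  (χ : ℂ) • ContinuousLinearMap.id ℂ V + (κ : ℂ) • (innerSL ℂ e).smulRight e

variable {e : V} {a : ℝ} {k : ℕ} {u : V}

lemma hasFDerivAt_axialCollapse (h : 1 + Complex.exp (-(k * (inner ℂ e u - a))) ≠ 0) :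
    HasFDerivAt (axialCollapse e a k)
      (ContinuousLinearMap.id ℂ V - axialCollapseDefect e a k u) u := by
  have harg : HasFDerivAt (fun u : V => (k : ℂ) * (inner ℂ e u - a)) ((k : ℂ) • innerSL ℂ e) u :=
    (((innerSL ℂ e).hasFDerivAt (x := u)).sub_const (a : ℂ)).const_mul (k : ℂ)
  have hstep := ((hasDerivAt_complexSigmoid h).comp_hasFDerivAt u harg).smul
    ((hasFDerivAt_id (𝕜 := ℂ) u).sub_const ((a : ℂ) • e))
  refine ((hasFDerivAt_id (𝕜 := ℂ) u).sub hstep).congr_fderiv ?_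
  ext v
  simp only [axialCollapseDefect, sub_apply, add_apply, smul_apply, ContinuousLinearMap.id_apply,
    ContinuousLinearMap.smulRightL_apply_apply, ContinuousLinearMap.smulRight_apply,
    innerSL_apply_apply, smul_smul, Function.comp, id, smul_eq_mul]
  congr 4
  ring

lemma contDiffAt_axialCollapse (h : 1 + Complex.exp (-(k * (inner ℂ e u - a))) ≠ 0) :
    ContDiffAt ℂ 1 (axialCollapse e a k) u := by
  have harg : ContDiffAt ℂ 1 (fun u : V => (k : ℂ) * (inner ℂ e u - a)) u :=
    contDiffAt_const.mul (((innerSL ℂ e).contDiff.contDiffAt (x := u)).sub contDiffAt_const)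
  have hsigmoid : ContDiffAt ℂ 1 (fun u : V => complexSigmoid (k * (inner ℂ e u - a))) u :=
    (contDiffAt_complexSigmoid h).comp (f := fun u : V => (k : ℂ) * (inner ℂ e u - a)) u harg
  exact contDiffAt_id.sub (hsigmoid.smul (contDiffAt_id.sub contDiffAt_const))

lemma tendsto_prod_inner_sub (e : V) (a : ℝ) (x : V) :
    Tendsto (fun z : ℕ × V => (z.1, inner ℂ e z.2 - (a : ℂ))) (atTop ×ˢ 𝓝 x)
      (atTop ×ˢ 𝓝 (inner ℂ e x - (a : ℂ))) := by
  have hcont : Continuous fun u : V => inner ℂ e u - (a : ℂ) := by fun_prop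
  exact tendsto_id.prodMap (hcont.tendsto x)

section OffJunction

variable {W : Type*} [NormedAddCommGroup W] [NormedSpace ℂ W] [FiniteDimensional ℂ V]
  {L M : V →L[ℂ] W} {x : V}

lemma exists_isLocallyGluable_of_tendsto_complexSigmoid (K : Set V) {χ : ℂ}
    (hx : (inner ℂ e x).re ≠ a)
    (hsigmoid : Tendsto (fun z : ℕ × ℂ => complexSigmoid (z.1 * z.2))
      (atTop ×ˢ 𝓝 (inner ℂ e x - a)) (𝓝 χ))
    (hderiv : Tendsto (fun z : ℕ × ℂ => z.1 * complexSigmoidDeriv (z.1 * z.2))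
      (atTop ×ˢ 𝓝 (inner ℂ e x - a)) (𝓝 0))
    (hinj : Function.Injective ((1 - χ) • L + χ • M)) :
    ∃ c C, IsLocallyGluable (axialCollapse e a) L M K x (x - χ • (x - (a : ℂ) • e)) c C := by
  have harg := tendsto_prod_inner_sub e a x
  have hre : (inner ℂ e x - (a : ℂ)).re ≠ 0 := by simpa [sub_eq_zero] using hx
  have hne := harg.eventually (eventually_one_add_exp_neg_mul_ne_zero hre)
  have hsnd : Tendsto (fun z : ℕ × V => z.2) (atTop ×ˢ 𝓝 x) (𝓝 x) := tendsto_snd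
  have hsub := hsnd.sub_const ((a : ℂ) • e)
  have hdefect : Tendsto (fun z : ℕ × V => axialCollapseDefect e a z.1 z.2) (atTop ×ˢ 𝓝 x)
      (𝓝 (χ • ContinuousLinearMap.id ℂ V)) := by
    have hlim := ((hsigmoid.comp harg).smul_const (ContinuousLinearMap.id ℂ V)).add
      ((hderiv.comp harg).smul
        (((ContinuousLinearMap.smulRightL ℂ V V (innerSL ℂ e)).continuous.tendsto _).comp hsub))
    rwa [zero_smul, add_zero] at hlim
  refine exists_isLocallyGluable_of_tendsto_fderiv K
    (A := ContinuousLinearMap.id ℂ V - χ • ContinuousLinearMap.id ℂ V)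
    (hsnd.sub ((hsigmoid.comp harg).smul hsub))
    (hne.mono fun z hz => contDiffAt_axialCollapse hz)
    ((tendsto_const_nhds.sub hdefect).congr' (hne.mono fun z hz =>
      (hasFDerivAt_axialCollapse hz).fderiv.symm)) ?_
  convert hinj using 2
  ext v
  simp [sub_smul]

lemma exists_isLocallyGluable_of_re_inner_lt (K : Set V) (hx : (inner ℂ e x).re < a)
    (hL : Function.Injective L) : ∃ c C, IsLocallyGluable (axialCollapse e a) L M K x x c C := by
  have hre : (inner ℂ e x - (a : ℂ)).re < 0 := by simpa using hx
  simpa using exists_isLocallyGluable_of_tendsto_complexSigmoid (M := M) K hx.ne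
    (tendsto_complexSigmoid_of_re_neg hre) (tendsto_mul_complexSigmoidDeriv_of_re_neg hre)
    (by simpa using hL)

lemma exists_isLocallyGluable_of_lt_re_inner (K : Set V) (hx : a < (inner ℂ e x).re)
    (hM : Function.Injective M) :
    ∃ c C, IsLocallyGluable (axialCollapse e a) L M K x ((a : ℂ) • e) c C := by
  have hre : 0 < (inner ℂ e x - (a : ℂ)).re := by simpa using hx
  have hsigmoid := (tendsto_one_sub_complexSigmoid_of_re_pos hre).const_sub 1
  simp only [sub_sub_cancel, sub_zero] at hsigmoid
  simpa using exists_isLocallyGluable_of_tendsto_complexSigmoid (L := L) K hx.ne' hsigmoid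
    (tendsto_mul_complexSigmoidDeriv_of_re_pos hre) (by simpa using hM)

end OffJunction

end AxialCollapse

section Junction
open Set Filter Topology

variable {V W : Type*} [NormedAddCommGroup V] [InnerProductSpace ℂ V] [NormedAddCommGroup W]
  [InnerProductSpace ℂ W] {e : V} (he : ‖e‖ = 1) {a : ℝ} {k : ℕ}

lemma abs_sub_sigmoid_mul_sub_le (k : ℕ) (a t t' : ℝ) :
    |(t - Real.sigmoid (k * (t - a)) * (t - a)) - (t' - Real.sigmoid (k * (t' - a)) * (t' - a))| ≤
      3 * |t - t'| := by
  have hderiv : ∀ t : ℝ, HasDerivAt (fun t : ℝ => t - Real.sigmoid (k * (t - a)) * (t - a))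
      (1 - (Real.sigmoid (k * (t - a)) + (k * (t - a)) * (Real.sigmoid (k * (t - a)) *
        (1 - Real.sigmoid (k * (t - a)))))) t := fun t => by
    have harg : HasDerivAt (fun t : ℝ => (k : ℝ) * (t - a)) k t := by
      simpa using ((hasDerivAt_id t).sub_const a).const_mul (k : ℝ)
    have hsigmoid := (Real.hasDerivAt_sigmoid (k * (t - a))).comp t harg
    refine ((hasDerivAt_id t).sub (hsigmoid.mul ((hasDerivAt_id t).sub_const a))).congr_deriv ?_
    simp only [Function.comp, id]
    ring
  refine convex_univ.norm_image_sub_le_of_norm_hasDerivWithin_le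
    (fun t _ => (hderiv t).hasDerivWithinAt) (fun t _ => ?_) (mem_univ t') (mem_univ t)
  have hbound := abs_le.1 (abs_mul_sigmoid_mul_one_sub_sigmoid_le (k * (t - a)))
  have hpos := Real.sigmoid_pos (k * (t - a))
  have hlt := Real.sigmoid_lt_one (k * (t - a))
  rw [Real.norm_eq_abs, abs_le]
  constructor <;> linarith

/-- Two continuous linear maps which can be interpolated along the axis `e`: both have the normal
component `⟪n, L u⟫ = ⟪n, M u⟫ = c ⟪e, u⟫`, and the derivatives met by `axialCollapse` on the axis
do not degenerate. -/
structure IsAxiallyCompatible (e : V) (n : W) (c : ℝ) (L M : V →L[ℂ] W) : Prop where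
  norm_eq_one : ‖n‖ = 1
  pos : 0 < c
  inner_left : ∀ u, inner ℂ n (L u) = c * inner ℂ e u
  inner_right : ∀ u, inner ℂ n (M u) = c * inner ℂ e u
  injective : ∀ χ ∈ Icc (0 : ℝ) 1, ∀ κ : ℝ, Function.Injective
    (L.comp (ContinuousLinearMap.id ℂ V - junctionDefect e χ κ) + M.comp (junctionDefect e χ κ))

lemma IsAxiallyCompatible.injective_right {n : W} {c : ℝ} {L M : V →L[ℂ] W}
    (h : IsAxiallyCompatible e n c L M) : Function.Injective M := by
  have hdefect : junctionDefect e 1 0 = ContinuousLinearMap.id ℂ V := by simp [junctionDefect]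
  simpa [hdefect] using h.injective 1 (right_mem_Icc.2 zero_le_one) 0

include he

lemma norm_ofReal_smul_of_norm_eq_one (t : ℝ) : ‖(t : ℂ) • e‖ = |t| := by
  rw [norm_smul, he, mul_one, Complex.norm_real, Real.norm_eq_abs]

lemma inner_ofReal_smul_self (t : ℝ) : inner ℂ e ((t : ℂ) • e) = t := by
  simp [inner_self_eq_norm_sq_to_K, he]

lemma natCast_mul_inner_ofReal_smul_sub (k : ℕ) (t : ℝ) :
    (k : ℂ) * (inner ℂ e ((t : ℂ) • e) - a) = ((k * (t - a) : ℝ) : ℂ) := by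
  rw [inner_ofReal_smul_self he]
  push_cast
  rfl

lemma axialCollapse_ofReal_smul (t : ℝ) : axialCollapse e a k ((t : ℂ) • e) =
    ((t - Real.sigmoid (k * (t - a)) * (t - a) : ℝ) : ℂ) • e := by
  rw [axialCollapse, natCast_mul_inner_ofReal_smul_sub he, complexSigmoid_ofReal, ← sub_smul,
    smul_smul, ← sub_smul]
  push_cast
  rfl

lemma norm_axialCollapse_ofReal_smul_sub_le (t t' : ℝ) :
    ‖axialCollapse e a k ((t : ℂ) • e) - axialCollapse e a k ((t' : ℂ) • e)‖ ≤
      3 * ‖(t : ℂ) • e - (t' : ℂ) • e‖ := by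
  simp only [axialCollapse_ofReal_smul he, ← sub_smul, ← Complex.ofReal_sub,
    norm_ofReal_smul_of_norm_eq_one he]
  exact abs_sub_sigmoid_mul_sub_le k a t t'

lemma one_add_exp_neg_mul_inner_ne_zero (k : ℕ) (t : ℝ) :
    1 + Complex.exp (-(k * (inner ℂ e ((t : ℂ) • e) - a))) ≠ 0 := by
  rw [natCast_mul_inner_ofReal_smul_sub he]
  exact one_add_exp_neg_ofReal_ne_zero _

lemma axialCollapseDefect_ofReal_smul (t : ℝ) :
    axialCollapseDefect e a k ((t : ℂ) • e) = junctionDefect e (Real.sigmoid (k * (t - a)))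
      (k * (t - a) * (Real.sigmoid (k * (t - a)) * (1 - Real.sigmoid (k * (t - a))))) := by
  ext v
  rw [axialCollapseDefect, natCast_mul_inner_ofReal_smul_sub he, complexSigmoid_ofReal,
    complexSigmoidDeriv_ofReal, ← sub_smul, junctionDefect]
  simp only [add_apply, smul_apply, ContinuousLinearMap.id_apply,
    ContinuousLinearMap.smulRightL_apply_apply, ContinuousLinearMap.smulRight_apply,
    innerSL_apply_apply, smul_smul]
  congr 2
  push_cast
  ring

lemma norm_sub_junctionDefect_le {χ κ : ℝ} (hχ : χ ∈ Icc 0 1) (hκ : κ ∈ Icc (-1) 1) (v : V) :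
    ‖v - junctionDefect e χ κ v‖ ≤ 2 * ‖v‖ := by
  have hsplit : v - junctionDefect e χ κ v =
      ((1 - χ : ℝ) : ℂ) • v - ((κ : ℂ) * inner ℂ e v) • e := by
    simp only [junctionDefect, add_apply, smul_apply, ContinuousLinearMap.id_apply,
      ContinuousLinearMap.smulRight_apply, innerSL_apply_apply, smul_smul]
    push_cast
    rw [sub_smul, one_smul, sub_sub]
  have haxis : ‖((κ : ℂ) * inner ℂ e v) • e‖ ≤ 1 * ‖v‖ := by
    rw [norm_smul, he, mul_one, norm_mul, Complex.norm_real]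
    gcongr
    exacts [abs_le.2 hκ, norm_inner_le_of_norm_eq_one he v]
  have hscale : ‖((1 - χ : ℝ) : ℂ) • v‖ ≤ 1 * ‖v‖ := by
    rw [norm_smul, Complex.norm_real, Real.norm_eq_abs, abs_of_nonneg (by linarith [hχ.2])]
    gcongr
    linarith [hχ.1]
  rw [hsplit]
  linarith [norm_sub_le (((1 - χ : ℝ) : ℂ) • v) (((κ : ℂ) * inner ℂ e v) • e)]

lemma tendsto_axialCollapse_junction {K : Set V}
    (hK : ∀ᶠ u in 𝓝[K] ((a : ℂ) • e), ∃ t : ℝ, u = (t : ℂ) • e) :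
    Tendsto (fun z : ℕ × V => axialCollapse e a z.1 z.2) (atTop ×ˢ 𝓝[K] ((a : ℂ) • e))
      (𝓝 ((a : ℂ) • e)) := by
  have hlim : Tendsto (fun z : ℕ × V => 3 * ‖z.2 - (a : ℂ) • e‖) (atTop ×ˢ 𝓝[K] ((a : ℂ) • e))
      (𝓝 0) := by
    have hsnd : Tendsto (fun z : ℕ × V => z.2) (atTop ×ˢ 𝓝[K] ((a : ℂ) • e)) (𝓝 ((a : ℂ) • e)) :=
      tendsto_snd.mono_right nhdsWithin_le_nhds
    simpa using ((hsnd.sub_const ((a : ℂ) • e)).norm).const_mul 3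
  rw [tendsto_iff_norm_sub_tendsto_zero]
  refine squeeze_zero' (Eventually.of_forall fun _ => norm_nonneg _) ?_ hlim
  filter_upwards [hK.prod_inr atTop] with z ⟨t, ht⟩
  have hfix : axialCollapse e a z.1 ((a : ℂ) • e) = (a : ℂ) • e := by simp [axialCollapse]
  have hle := norm_axialCollapse_ofReal_smul_sub_le he (a := a) (k := z.1) t a
  rwa [hfix, ← ht] at hle

/-- The normal component `⟪n, L w⟫ = c ⟪e, w⟫` is shared by `L` and `M`, so it survives every
interpolation between them; this bounds the increments along the segment. -/
lemma IsAxiallyCompatible.mul_norm_sub_le {L M : V →L[ℂ] W} {n : W} {c : ℝ}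
    (h : IsAxiallyCompatible e n c L M) (t t' : ℝ) (w : V) :
    c * ‖(t : ℂ) • e - (t' : ℂ) • e‖ ≤ ‖L w + M ((t : ℂ) • e - (t' : ℂ) • e - w)‖ := by
  have hinner :
      inner ℂ n (L w + M ((t : ℂ) • e - (t' : ℂ) • e - w)) = ((c * (t - t') : ℝ) : ℂ) := by
    rw [inner_add_right, h.inner_left, h.inner_right, inner_sub_right e _ w,
      inner_sub_right, inner_ofReal_smul_self he, inner_ofReal_smul_self he]
    push_cast
    ring
  calc c * ‖(t : ℂ) • e - (t' : ℂ) • e‖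
      = ‖inner ℂ n (L w + M ((t : ℂ) • e - (t' : ℂ) • e - w))‖ := by
        rw [hinner, ← sub_smul, ← Complex.ofReal_sub, norm_ofReal_smul_of_norm_eq_one he,
          Complex.norm_real, Real.norm_eq_abs, abs_mul, abs_of_pos h.pos]
    _ ≤ ‖L w + M ((t : ℂ) • e - (t' : ℂ) • e - w)‖ := norm_inner_le_of_norm_eq_one h.norm_eq_one _

variable [FiniteDimensional ℂ V]

lemma exists_isLocallyGluable_junction {L M : V →L[ℂ] W} {K : Set V} {n : W} {c : ℝ}
    (h : IsAxiallyCompatible e n c L M)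
    (hK : ∀ᶠ u in 𝓝[K] ((a : ℂ) • e), ∃ t : ℝ, u = (t : ℂ) • e) :
    ∃ c C, IsLocallyGluable (axialCollapse e a) L M K ((a : ℂ) • e) ((a : ℂ) • e) c C := by
  obtain ⟨c₀, hc₀, hlower⟩ := exists_pos_forall_mul_norm_le_of_isCompact
    ((isCompact_Icc (a := (0 : ℝ)) (b := 1)).prod (isCompact_Icc (a := (-1 : ℝ)) (b := 1)))
    (T := fun w : ℝ × ℝ => L.comp (ContinuousLinearMap.id ℂ V - junctionDefect e w.1 w.2) +
      M.comp (junctionDefect e w.1 w.2)) (by unfold junctionDefect; fun_prop)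
    fun w hw => h.injective w.1 hw.1 w.2
  refine ⟨min c₀ c, 3, tendsto_axialCollapse_junction he hK, ?_, lt_min hc₀ h.pos, by norm_num,
    ?_, ?_⟩
  · filter_upwards [hK.prod_inr atTop] with z ⟨t, ht⟩
    rw [ht]
    exact contDiffAt_axialCollapse (one_add_exp_neg_mul_inner_ne_zero he _ t)
  · filter_upwards [hK.prod_inr atTop] with z ⟨t, ht⟩ v
    rw [ht, (hasFDerivAt_axialCollapse (one_add_exp_neg_mul_inner_ne_zero he _ t)).fderiv,
      axialCollapseDefect_ofReal_smul he, sub_apply, ContinuousLinearMap.id_apply, sub_sub_cancel]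
    have hχ : Real.sigmoid (z.1 * (t - a)) ∈ Icc 0 1 :=
      ⟨(Real.sigmoid_pos _).le, (Real.sigmoid_lt_one _).le⟩
    have hκ := abs_le.1 (abs_mul_sigmoid_mul_one_sub_sigmoid_le (z.1 * (t - a)))
    refine ⟨le_trans ?_ (hlower (_, _) ⟨hχ, hκ⟩ v),
      (norm_sub_junctionDefect_le he hχ hκ v).trans ?_⟩
    · gcongr
      exact min_le_left _ _
    · gcongr
      norm_num
  · have hpair : ∀ᶠ z : ℕ × V × V in atTop ×ˢ 𝓝[K ×ˢ K] ((a : ℂ) • e, (a : ℂ) • e),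
        (∃ t : ℝ, z.2.1 = (t : ℂ) • e) ∧ ∃ t : ℝ, z.2.2 = (t : ℂ) • e := by
      rw [nhdsWithin_prod_eq]
      exact (hK.prod_mk hK).prod_inr _
    filter_upwards [hpair] with z ⟨⟨t, ht⟩, t', ht'⟩
    rw [ht, ht']
    refine ⟨le_trans ?_ (h.mul_norm_sub_le he t t' _),
      norm_axialCollapse_ofReal_smul_sub_le he t t'⟩
    gcongr
    exact min_le_right _ _

end Junction

section GluedSkeleton
open Set Filter Topology

variable {V : Type*} [NormedAddCommGroup V] [InnerProductSpace ℂ V] {e : V} {s a b R : ℝ}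

/-- The limit of `axialCollapse e a k` as `k → ∞`: the identity up to the hyperplane
`Re ⟪e, x⟫ = a`, and the constant `a e` beyond it. -/
noncomputable def axialRetraction (e : V) (a : ℝ) (x : V) : V :=
  if (inner ℂ e x).re ≤ a then x else (a : ℂ) • e

lemma axialRetraction_of_re_inner_le {x : V} (hx : (inner ℂ e x).re ≤ a) :
    axialRetraction e a x = x := if_pos hx

lemma axialRetraction_of_lt_re_inner {x : V} (hx : a < (inner ℂ e x).re) :
    axialRetraction e a x = (a : ℂ) • e := if_neg hx.not_ge

lemma glue_axialRetraction_of_re_inner_le (F : V → V) (M : V →L[ℂ] V) {x : V}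
    (hx : (inner ℂ e x).re ≤ a) : glue F M (axialRetraction e a) x = F x := by
  rw [glue, axialRetraction_of_re_inner_le hx, sub_self, map_zero, add_zero]

lemma glue_axialRetraction_of_lt_re_inner (F : V → V) (M : V →L[ℂ] V) {x : V}
    (hx : a < (inner ℂ e x).re) :
    glue F M (axialRetraction e a) x = F ((a : ℂ) • e) + M (x - (a : ℂ) • e) := by
  rw [glue, axialRetraction_of_lt_re_inner hx]

variable (he : ‖e‖ = 1)
include he

lemma re_inner_ofReal_smul_self (t : ℝ) : (inner ℂ e ((t : ℂ) • e)).re = t := by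
  rw [inner_ofReal_smul_self he, Complex.ofReal_re]

lemma abs_re_inner_le_norm (u : V) : |(inner ℂ e u).re| ≤ ‖u‖ :=
  (Complex.abs_re_le_norm _).trans (norm_inner_le_of_norm_eq_one he u)

lemma le_re_inner_of_mem_closedBall {u : V} (hu : u ∈ closedBall (((b + R : ℝ) : ℂ) • e) R) :
    b ≤ (inner ℂ e u).re := by
  rw [mem_closedBall, dist_eq_norm] at hu
  have hre := (abs_re_inner_le_norm he _).trans hu
  rw [inner_sub_right, inner_ofReal_smul_self he, Complex.sub_re, Complex.ofReal_re] at hre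
  linarith [(abs_le.1 hre).1]

lemma dumbbellSkeleton_subset_insert (hs : 0 < s) (hsa : s < a) (hab : a < b) :
    dumbbellSkeleton e s b R ⊆ insert ((a : ℂ) • e) ({x | (inner ℂ e x).re < a} ∩ ball 0 a ∪
      {x | a < (inner ℂ e x).re}) := by
  rintro x (hx | ⟨t, ht, rfl⟩ | hx)
  · rw [mem_closedBall_zero_iff] at hx
    exact Or.inr (Or.inl ⟨((le_abs_self _).trans (abs_re_inner_le_norm he x)).trans_lt
      (hx.trans_lt hsa), mem_ball_zero_iff.2 (hx.trans_lt hsa)⟩)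
  · rcases lt_trichotomy t a with h | rfl | h
    · refine Or.inr (Or.inl ⟨?_, ?_⟩)
      · rwa [mem_ofPred_eq, re_inner_ofReal_smul_self he]
      · rwa [mem_ball_zero_iff, norm_ofReal_smul_of_norm_eq_one he, abs_of_pos (hs.trans_le ht.1)]
    · exact Or.inl rfl
    · refine Or.inr (Or.inr ?_)
      rwa [mem_ofPred_eq, re_inner_ofReal_smul_self he]
  · exact Or.inr (Or.inr (hab.trans_le (le_re_inner_of_mem_closedBall he hx)))

lemma norm_le_or_lt_re_inner_of_mem_dumbbellSkeleton (hs : 0 < s) (hsa : s < a) (hab : a < b)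
    {x : V} (hx : x ∈ dumbbellSkeleton e s b R) :
    (inner ℂ e x).re ≤ a ∧ ‖x‖ ≤ a ∨ a < (inner ℂ e x).re := by
  rcases dumbbellSkeleton_subset_insert he hs hsa hab hx with rfl | ⟨hre, hnorm⟩ | hre
  · rw [re_inner_ofReal_smul_self he, norm_ofReal_smul_of_norm_eq_one he,
      abs_of_pos (hs.trans hsa)]
    exact Or.inl ⟨le_rfl, le_rfl⟩
  · exact Or.inl ⟨le_of_lt hre, (mem_ball_zero_iff.1 hnorm).le⟩
  · exact Or.inr hre

lemma eventually_exists_ofReal_smul_of_mem_dumbbellSkeleton (hsa : s < a) (hab : a < b) :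
    ∀ᶠ u in 𝓝[dumbbellSkeleton e s b R] ((a : ℂ) • e), ∃ t : ℝ, u = (t : ℂ) • e := by
  have hre : ∀ᶠ u in 𝓝 ((a : ℂ) • e), (inner ℂ e u).re ∈ Ioo s b := by
    have hcont : Continuous fun u : V => (inner ℂ e u).re := by fun_prop
    refine hcont.continuousAt.eventually_mem ?_
    rw [re_inner_ofReal_smul_self he]
    exact Ioo_mem_nhds hsa hab
  filter_upwards [nhdsWithin_le_nhds hre, self_mem_nhdsWithin] with u hu huK
  rcases huK with hx | ⟨t, -, rfl⟩ | hx
  · rw [mem_closedBall_zero_iff] at hx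
    linarith [hu.1, (abs_le.1 (abs_re_inner_le_norm he u)).2]
  · exact ⟨t, rfl⟩
  · linarith [hu.2, le_re_inner_of_mem_closedBall he hx]

lemma norm_sub_ofReal_smul_lt_of_mem_dumbbellSkeleton (hsa : s < a) (hab : a < b)
    (hR : 0 ≤ R) {x : V} (hx : x ∈ dumbbellSkeleton e s b R) (hax : a < (inner ℂ e x).re) :
    ‖x - ((b + R : ℝ) : ℂ) • e‖ < b + R - a := by
  rcases hx with hx | ⟨t, ht, rfl⟩ | hx
  · have := (le_abs_self _).trans (abs_re_inner_le_norm he x)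
    have := mem_closedBall_zero_iff.1 hx
    linarith
  · rw [re_inner_ofReal_smul_self he] at hax
    beta_reduce
    rw [← sub_smul, ← Complex.ofReal_sub, norm_ofReal_smul_of_norm_eq_one he, abs_of_nonpos
      (by linarith [ht.2])]
    linarith
  · have := mem_closedBall_iff_norm.1 hx
    linarith

variable {F : V → V} {U : Set V} {M : V →L[ℂ] V}

lemma axialRetraction_mem_ball_of_mem_dumbbellSkeleton (hs : 0 < s) (hsa : s < a) (ha : a < 1)
    (hab : a < b) {x : V} (hx : x ∈ dumbbellSkeleton e s b R) :
    axialRetraction e a x ∈ ball 0 1 := by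
  rw [mem_ball_zero_iff]
  rcases norm_le_or_lt_re_inner_of_mem_dumbbellSkeleton he hs hsa hab hx with ⟨hre, hnorm⟩ | hre
  · rw [axialRetraction_of_re_inner_le hre]
    exact hnorm.trans_lt ha
  · rwa [axialRetraction_of_lt_re_inner hre, norm_ofReal_smul_of_norm_eq_one he,
      abs_of_pos (hs.trans hsa)]

lemma injOn_glue_axialRetraction (hF : IsHolomorphicEmbedding F (ball 0 1) U) (hs : 0 < s)
    (hsa : s < a) (ha : a < 1) (hab : a < b) (hM : Function.Injective M)
    (hA : ∀ x ∈ dumbbellSkeleton e s b R, a < (inner ℂ e x).re →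
      F ((a : ℂ) • e) + M (x - (a : ℂ) • e) ∈ U \ F '' closedBall 0 a) :
    InjOn (glue F M (axialRetraction e a)) (dumbbellSkeleton e s b R) := by
  have hball : closedBall (0 : V) a ⊆ ball 0 1 := closedBall_subset_ball ha
  intro x hx y hy hxy
  rcases norm_le_or_lt_re_inner_of_mem_dumbbellSkeleton he hs hsa hab hx with ⟨hxa, hnx⟩ | hxa <;>
    rcases norm_le_or_lt_re_inner_of_mem_dumbbellSkeleton he hs hsa hab hy with ⟨hya, hny⟩ | hya
  · rw [glue_axialRetraction_of_re_inner_le F M hxa,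
      glue_axialRetraction_of_re_inner_le F M hya] at hxy
    exact hF.injOn (hball (mem_closedBall_zero_iff.2 hnx)) (hball (mem_closedBall_zero_iff.2 hny))
      hxy
  · rw [glue_axialRetraction_of_re_inner_le F M hxa,
      glue_axialRetraction_of_lt_re_inner F M hya] at hxy
    exact absurd ⟨x, mem_closedBall_zero_iff.2 hnx, hxy⟩ (hA y hy hya).2
  · rw [glue_axialRetraction_of_lt_re_inner F M hxa,
      glue_axialRetraction_of_re_inner_le F M hya] at hxy
    exact absurd ⟨y, mem_closedBall_zero_iff.2 hny, hxy.symm⟩ (hA x hx hxa).2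
  · rw [glue_axialRetraction_of_lt_re_inner F M hxa,
      glue_axialRetraction_of_lt_re_inner F M hya] at hxy
    exact sub_left_injective (hM (add_left_cancel hxy))

lemma mapsTo_glue_axialRetraction (hF : IsHolomorphicEmbedding F (ball 0 1) U) (hs : 0 < s)
    (hsa : s < a) (ha : a < 1) (hab : a < b)
    (hA : ∀ x ∈ dumbbellSkeleton e s b R, a < (inner ℂ e x).re →
      F ((a : ℂ) • e) + M (x - (a : ℂ) • e) ∈ U) :
    MapsTo (glue F M (axialRetraction e a)) (dumbbellSkeleton e s b R) U := by
  intro x hx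
  rcases norm_le_or_lt_re_inner_of_mem_dumbbellSkeleton he hs hsa hab hx with ⟨hre, hnorm⟩ | hre
  · rw [glue_axialRetraction_of_re_inner_le F M hre]
    exact hF.mapsTo (mem_ball_zero_iff.2 (hnorm.trans_lt ha))
  · rw [glue_axialRetraction_of_lt_re_inner F M hre]
    exact hA x hx hre

variable [FiniteDimensional ℂ V] {n : V} {c : ℝ}

lemma exists_isLocallyGluable_dumbbellSkeleton (hF : IsHolomorphicEmbedding F (ball 0 1) U)
    (hs : 0 < s) (hsa : s < a) (ha : a < 1) (hab : a < b)
    (hM : IsAxiallyCompatible e n c (fderiv ℂ F ((a : ℂ) • e)) M)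
    {x : V} (hx : x ∈ dumbbellSkeleton e s b R) :
    ∃ c C, IsLocallyGluable (axialCollapse e a) (fderiv ℂ F (axialRetraction e a x)) M
      (dumbbellSkeleton e s b R) x (axialRetraction e a x) c C := by
  rcases dumbbellSkeleton_subset_insert he hs hsa hab hx with rfl | ⟨hre, hnorm⟩ | hre
  · rw [axialRetraction_of_re_inner_le (re_inner_ofReal_smul_self he a).le]
    exact exists_isLocallyGluable_junction he hM
      (eventually_exists_ofReal_smul_of_mem_dumbbellSkeleton he hsa hab)
  · rw [axialRetraction_of_re_inner_le (le_of_lt hre)]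
    exact exists_isLocallyGluable_of_re_inner_lt _ hre
      (hF.injective_fderiv x (ball_subset_ball ha.le hnorm))
  · rw [axialRetraction_of_lt_re_inner hre]
    exact exists_isLocallyGluable_of_lt_re_inner _ hre hM.injective_right

lemma exists_isHolomorphicEmbedding_dumbbellSkeleton (hU : IsOpen U)
    (hF : IsHolomorphicEmbedding F (ball 0 1) U) (hs : 0 < s) (hsa : s < a) (ha : a < 1)
    (hab : a < b) (hM : IsAxiallyCompatible e n c (fderiv ℂ F ((a : ℂ) • e)) M)
    (hA : ∀ x ∈ dumbbellSkeleton e s b R, a < (inner ℂ e x).re →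
      F ((a : ℂ) • e) + M (x - (a : ℂ) • e) ∈ U \ F '' closedBall 0 a) {η : ℝ} (hη : 0 < η) :
    ∃ G : V → V, IsHolomorphicEmbedding G (dumbbellSkeleton e s b R) U ∧
      (∀ x ∈ closedBall 0 s, dist (G x) (F x) < η) ∧
      ∀ x ∈ closedBall (((b + R : ℝ) : ℂ) • e) R,
        dist (G x) (F ((a : ℂ) • e) + M (x - (a : ℂ) • e)) < η := by
  have : ProperSpace V := FiniteDimensional.proper ℂ V
  have hcore : closedBall (0 : V) s ⊆ dumbbellSkeleton e s b R := subset_union_left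
  have hbulb : closedBall (((b + R : ℝ) : ℂ) • e) R ⊆ dumbbellSkeleton e s b R :=
    subset_union_right.trans subset_union_right
  have hlocal := fun x hx =>
    exists_isLocallyGluable_dumbbellSkeleton he (b := b) (R := R) hF hs hsa ha hab hM (x := x) hx
  have htendsto := fun x hx => (hlocal x hx).choose_spec.choose_spec.tendsto
  have hsmooth : ∀ x ∈ dumbbellSkeleton e s b R, ContDiffAt ℂ 1 F (axialRetraction e a x) :=
    fun x hx => hF.contDiffAt _
      (axialRetraction_mem_ball_of_mem_dumbbellSkeleton he hs hsa ha hab hx)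
  have hemb := eventually_isHolomorphicEmbedding_glue (isCompact_dumbbellSkeleton e s b R) hU
    hsmooth hlocal (injOn_glue_axialRetraction he hF hs hsa ha hab hM.injective_right hA)
    (mapsTo_glue_axialRetraction he hF hs hsa ha hab fun x hx hre => (hA x hx hre).1)
  have hcloseF := eventually_norm_glue_sub_lt hη (isCompact_closedBall _ _) hcore
    (fun x hx => (hsmooth x (hcore hx)).continuousAt) (fun x hx => htendsto x (hcore hx))
    (hF.continuousOn.mono (closedBall_subset_ball (hsa.trans ha)))
    fun x hx => glue_axialRetraction_of_re_inner_le F M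
      (((le_abs_self _).trans (abs_re_inner_le_norm he x)).trans
        ((mem_closedBall_zero_iff.1 hx).trans hsa.le))
  have hcloseA := eventually_norm_glue_sub_lt hη (isCompact_closedBall _ _) hbulb
    (fun x hx => (hsmooth x (hbulb hx)).continuousAt) (fun x hx => htendsto x (hbulb hx))
    (G := fun x => F ((a : ℂ) • e) + M (x - (a : ℂ) • e)) (by fun_prop)
    fun x hx => glue_axialRetraction_of_lt_re_inner F M
      (hab.trans_le (le_re_inner_of_mem_closedBall he hx))
  obtain ⟨k, hk, hkF, hkA⟩ := (hemb.and (hcloseF.and hcloseA)).exists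
  simp only [← dist_eq_norm] at hkF hkA
  exact ⟨_, hk, hkF, hkA⟩

end GluedSkeleton

/-! ### Nearest points and conformal maps with prescribed normal -/

section NearestPoint
open Set Filter Topology

lemma smul_eq_norm_smul_of_isMaxOn_inner_closedBall {E : Type*} [NormedAddCommGroup E]
    [InnerProductSpace ℝ E] {m q : E} {a : ℝ} (ha : 0 ≤ a) (hm : m ≠ 0) (hq : q ∈ closedBall 0 a)
    (hmax : IsMaxOn (inner ℝ m) (closedBall 0 a) q) : a • m = ‖m‖ • q := by
  have hm' : 0 < ‖m‖ := norm_pos_iff.2 hm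
  rw [mem_closedBall_zero_iff] at hq
  have hle : ‖m‖ * a ≤ inner ℝ m q := by
    have hmem : (a / ‖m‖) • m ∈ closedBall 0 a := by
      rw [mem_closedBall_zero_iff, norm_smul, Real.norm_of_nonneg (by positivity),
        div_mul_cancel₀ _ hm'.ne']
    have hmq : inner ℝ m ((a / ‖m‖) • m) ≤ inner ℝ m q := hmax hmem
    rwa [inner_smul_right, real_inner_self_eq_norm_sq, pow_two, ← mul_assoc,
      div_mul_cancel₀ _ hm'.ne', mul_comm] at hmq
  have hnorm : ‖q‖ = a :=
    hq.antisymm (le_of_mul_le_mul_left (hle.trans (real_inner_le_norm m q)) hm')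
  rw [← hnorm] at hle ⊢
  exact inner_eq_norm_mul_iff_real.1 ((real_inner_le_norm m q).antisymm hle)

variable {V W : Type*} [NormedAddCommGroup V] [InnerProductSpace ℂ V] [NormedAddCommGroup W]
  [InnerProductSpace ℂ W]

lemma re_inner_fderiv_nonpos_of_isMinOn {F : V → W} {M : V →L[ℂ] W} {S : Set V}
    (hS : Convex ℝ S) {x q : V} {y : W} (hx : x ∈ S) (hq : q ∈ S) (hF : HasFDerivAt F M q)
    (hmin : IsMinOn (fun x => ‖y - F x‖) S q) : (inner ℂ (y - F q) (M (x - q))).re ≤ 0 := by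
  let _ := InnerProductSpace.rclikeToReal ℂ W
  have hderiv := (((hF.restrictScalars ℝ).const_sub y).norm_sq).hasFDerivWithinAt (s := S)
  have hminSq : IsMinOn (fun x => ‖y - F x‖ ^ 2) S q :=
    fun x hx => pow_le_pow_left₀ (norm_nonneg _) (hmin hx) 2
  have hnonneg := hminSq.localize.hasFDerivWithinAt_nonneg hderiv
    (sub_mem_posTangentConeAt_of_segment_subset (hS.segment_subset hq hx))
  simp only [smul_apply, ContinuousLinearMap.comp_apply, innerSL_apply_apply, neg_apply,
    ContinuousLinearMap.coe_restrictScalars', inner_neg_right, real_inner_eq_re_inner ℂ,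
    RCLike.re_eq_complex_re, nsmul_eq_mul, Nat.cast_ofNat, Complex.neg_re] at hnonneg
  linarith

lemma exists_normal_of_isMinOn_closedBall [FiniteDimensional ℂ V] {F : V → V} {M : V →L[ℂ] V}
    {q y : V} {a : ℝ} (ha : 0 < a) (hF : HasFDerivAt F M q) (hM : Function.Injective M)
    (hq : q ∈ closedBall 0 a) (hy : y ≠ F q)
    (hmin : IsMinOn (fun x => ‖y - F x‖) (closedBall 0 a) q) :
    ∃ (e n : V) (c : ℝ), ‖e‖ = 1 ∧ ‖n‖ = 1 ∧ 0 < c ∧ q = (a : ℂ) • e ∧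
      y = F q + (‖y - F q‖ : ℂ) • n ∧ ∀ u, inner ℂ n (M u) = c * inner ℂ e u := by
  have : CompleteSpace V := FiniteDimensional.complete ℂ V
  have hd : 0 < ‖y - F q‖ := norm_pos_iff.2 (sub_ne_zero.2 hy)
  set m := ContinuousLinearMap.adjoint M (y - F q)
  have hadjoint : ∀ u, inner ℂ (y - F q) (M u) = inner ℂ m u := fun u =>
    (ContinuousLinearMap.adjoint_inner_left M u _).symm
  have hm0 : m ≠ 0 := fun h0 => by
    obtain ⟨u, hu⟩ := (LinearMap.injective_iff_surjective (f := (M : V →ₗ[ℂ] V))).1 hM (y - F q)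
    have hzero := hadjoint u
    rw [ContinuousLinearMap.coe_coe] at hu
    rw [hu, h0, inner_zero_left, inner_self_eq_zero, sub_eq_zero] at hzero
    exact hy hzero
  have hqm : a • m = ‖m‖ • q := by
    let _ := InnerProductSpace.rclikeToReal ℂ V
    refine smul_eq_norm_smul_of_isMaxOn_inner_closedBall ha.le hm0 hq fun x hx => ?_
    have hnonpos := re_inner_fderiv_nonpos_of_isMinOn (convex_closedBall 0 a) hx hq hF hmin
    rw [hadjoint, inner_sub_right, Complex.sub_re, sub_nonpos] at hnonpos
    simpa only [mem_ofPred_eq, real_inner_eq_re_inner ℂ, RCLike.re_eq_complex_re] using hnonpos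
  have hmc : (‖m‖ : ℂ) ≠ 0 := Complex.ofReal_ne_zero.2 (norm_ne_zero_iff.2 hm0)
  have hdc : (‖y - F q‖ : ℂ) ≠ 0 := Complex.ofReal_ne_zero.2 hd.ne'
  refine ⟨(‖m‖ : ℂ)⁻¹ • m, (‖y - F q‖ : ℂ)⁻¹ • (y - F q), ‖m‖ / ‖y - F q‖,
    norm_smul_inv_norm hm0, norm_smul_inv_norm (sub_ne_zero.2 hy),
    div_pos (norm_pos_iff.2 hm0) hd, ?_, ?_, fun u => ?_⟩
  · rw [smul_comm, Complex.coe_smul, hqm, ← Complex.coe_smul, inv_smul_smul₀ hmc]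
  · rw [smul_inv_smul₀ hdc, add_sub_cancel]
  · rw [inner_smul_left, inner_smul_left, hadjoint, ← Complex.ofReal_inv, ← Complex.ofReal_inv,
      Complex.conj_ofReal, Complex.conj_ofReal]
    push_cast
    field_simp

end NearestPoint

section EigenvaluePhase
open Set Module.End

variable {V : Type*} [AddCommGroup V] [Module ℂ V]

lemma exists_norm_eq_one_forall_pos_not_hasEigenvalue [FiniteDimensional ℂ V]
    (T : Module.End ℂ V) :
    ∃ ω : ℂ, ‖ω‖ = 1 ∧ ∀ τ : ℝ, 0 < τ → ¬ T.HasEigenvalue (-(τ * ω)) := by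
  have hfinite : ((fun μ : ℂ => -(((‖μ‖⁻¹ : ℝ) : ℂ) * μ)) '' {μ | T.HasEigenvalue μ}).Finite :=
    (finite_hasEigenvalue T).image _
  have hinfinite : (sphere (0 : ℂ) 1).Infinite :=
    (isPreconnected_sphere (by simp [Complex.rank_real_complex]) 0 1).infinite_of_nontrivial
      ⟨1, by simp, -1, by simp, by norm_num [Complex.ext_iff]⟩
  obtain ⟨ω, hω, hnotMem⟩ := hinfinite.exists_notMem_finite hfinite
  rw [mem_sphere_zero_iff_norm] at hω
  refine ⟨ω, hω, fun τ hτ hev => hnotMem ⟨_, hev, ?_⟩⟩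
  have hτ' : (τ : ℂ) ≠ 0 := Complex.ofReal_ne_zero.2 hτ.ne'
  change -(((‖-(τ * ω)‖⁻¹ : ℝ) : ℂ) * -(τ * ω)) = ω
  rw [norm_neg, norm_mul, Complex.norm_real, Real.norm_of_nonneg hτ.le, hω, mul_one,
    Complex.ofReal_inv, mul_neg, neg_neg, inv_mul_cancel_left₀ hτ']

lemma eq_zero_of_smul_add_smul_eq_zero {T : Module.End ℂ V} (hT : Function.Injective T) {ω : ℂ}
    (hω : ω ≠ 0) (hev : ∀ τ : ℝ, 0 < τ → ¬ T.HasEigenvalue (-(τ * ω))) {α β : ℝ} (hα : 0 ≤ α)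
    (hβ : 0 ≤ β) (hαβ : 0 < α + β) {u : V} (h : (α : ℂ) • T u + (β * ω) • u = 0) : u = 0 := by
  rcases hα.eq_or_lt with rfl | hα
  · rw [Complex.ofReal_zero, zero_smul, zero_add] at h
    rw [zero_add] at hαβ
    exact (smul_eq_zero.1 h).resolve_left (mul_ne_zero (Complex.ofReal_ne_zero.2 hαβ.ne') hω)
  have hαc : (α : ℂ) ≠ 0 := Complex.ofReal_ne_zero.2 hα.ne'
  rcases hβ.eq_or_lt with rfl | hβ
  · rw [Complex.ofReal_zero, zero_mul, zero_smul, add_zero, smul_eq_zero_iff_right hαc] at h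
    exact hT (h.trans (map_zero T).symm)
  by_contra hu
  refine hev (β / α) (by positivity) (hasEigenvalue_of_hasEigenvector
    (hasEigenvector_iff.2 ⟨mem_eigenspace_iff.2 ?_, hu⟩))
  refine smul_right_injective V hαc ?_
  simp only [smul_smul]
  rw [eq_neg_of_add_eq_zero_left h, ← neg_smul]
  congr 1
  push_cast
  field_simp

end EigenvaluePhase

section ConformalPartner
open Set

variable {V : Type*} [NormedAddCommGroup V] [InnerProductSpace ℂ V] [FiniteDimensional ℂ V]

lemma exists_linearIsometryEquiv_apply_eq {e n : V} (he : ‖e‖ = 1) (hn : ‖n‖ = 1) :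
    ∃ R : V ≃ₗᵢ[ℂ] V, R e = n := by
  let E := LinearIsometryEquiv.toSpanUnitSingleton (𝕜 := ℂ) e he
  let L := (LinearIsometry.toSpanSingleton ℂ V hn).comp E.symm.toLinearIsometry
  have hL : L (E 1) = n := by simp [L]
  refine ⟨L.extend.toLinearIsometryEquiv rfl, ?_⟩
  have hext := LinearIsometry.extend_apply L (E 1)
  rw [hL] at hext
  simpa [E] using hext

lemma exists_linearIsometryEquiv_smul_of_inner_eq_zero {e : V} (he : ‖e‖ = 1) {ω : ℂ}
    (hω : ‖ω‖ = 1) :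
    ∃ D : V ≃ₗᵢ[ℂ] V, D e = e ∧ ∀ u, inner ℂ e u = 0 → D u = ω • u := by
  let D : V →ₗ[ℂ] V := ω • LinearMap.id + (1 - ω) • (innerₛₗ ℂ e).smulRight e
  have hD : ∀ u, D u = ω • u + ((1 - ω) * inner ℂ e u) • e := fun u => by simp [D, smul_smul]
  have hee : inner ℂ e e = (1 : ℂ) := by simp [inner_self_eq_norm_sq_to_K, he]
  have hinner : ∀ u, inner ℂ e (D u) = inner ℂ e u := fun u => by
    rw [hD, inner_add_right, inner_smul_right, inner_smul_right, hee]
    ring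
  have hnorm : ∀ u, ‖D u‖ = ‖u‖ := fun u => by
    have hperp : D u - inner ℂ e (D u) • e = ω • (u - inner ℂ e u • e) := by
      rw [hinner, hD]
      module
    rw [← sq_eq_sq₀ (norm_nonneg _) (norm_nonneg _), norm_sq_eq_norm_inner_sq_add he (D u), hperp,
      hinner, norm_smul, hω, one_mul, ← norm_sq_eq_norm_inner_sq_add he u]
  refine ⟨(⟨D, hnorm⟩ : V →ₗᵢ[ℂ] V).toLinearIsometryEquiv rfl, ?_, fun u hu => ?_⟩
  · change D e = e
    rw [hD, hee]
    module
  · change D u = ω • u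
    rw [hD, hu, mul_zero, zero_smul, add_zero]

/-- The phase of the partner on the complement of `e` is chosen such that its multiples by positive
scalars never cancel a positive multiple of `M`. -/
lemma exists_isAxiallyCompatible_smul_isometry {M : V →L[ℂ] V} (hMi : Function.Injective M)
    {e n : V} (he : ‖e‖ = 1) (hn : ‖n‖ = 1) {c : ℝ} (hc : 0 < c)
    (hM : ∀ u, inner ℂ n (M u) = c * inner ℂ e u) :
    ∃ T : V ≃ₗᵢ[ℂ] V, T e = n ∧
      IsAxiallyCompatible e n c M ((c : ℂ) • (T.toContinuousLinearEquiv : V →L[ℂ] V)) := by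
  obtain ⟨R, hR⟩ := exists_linearIsometryEquiv_apply_eq he hn
  let N : Module.End ℂ V := (R.symm.toLinearEquiv : V →ₗ[ℂ] V) ∘ₗ (M : V →ₗ[ℂ] V)
  obtain ⟨ω, hω, hev⟩ := exists_norm_eq_one_forall_pos_not_hasEigenvalue N
  have hω0 : ω ≠ 0 := norm_ne_zero_iff.1 (hω ▸ one_ne_zero)
  obtain ⟨D, hDe, hD⟩ := exists_linearIsometryEquiv_smul_of_inner_eq_zero he hω
  have hcc : (c : ℂ) ≠ 0 := Complex.ofReal_ne_zero.2 hc.ne'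
  have hT : ∀ u, inner ℂ n (R (D u)) = inner ℂ e u := fun u => by
    rw [← hR, R.inner_map_map, ← D.inner_map_map e u, hDe]
  refine ⟨D.trans R, by simp [hDe, hR], hn, hc, hM, fun u => by simp [hT],
    fun χ hχ κ => (injective_iff_map_eq_zero _).2 fun u hu => ?_⟩
  simp only [add_apply, smul_apply, ContinuousLinearMap.comp_apply, sub_apply,
    ContinuousLinearMap.id_apply, ContinuousLinearEquiv.coe_coe,
    LinearIsometryEquiv.coe_toContinuousLinearEquiv, LinearIsometryEquiv.trans_apply] at hu
  have hperp : inner ℂ e u = 0 := by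
    have hnormal := congrArg (inner ℂ n) hu
    rw [inner_add_right, hM, inner_smul_right, hT, inner_sub_right, inner_zero_right, ← mul_add,
      sub_add_cancel] at hnormal
    exact (mul_eq_zero.1 hnormal).resolve_left hcc
  have hdefect : junctionDefect e χ κ u = (χ : ℂ) • u := by simp [junctionDefect, hperp]
  have hpos : 0 < 1 - χ + χ * c := by
    rcases hχ.2.eq_or_lt with rfl | hχ1
    · simpa using hc
    · exact add_pos_of_pos_of_nonneg (sub_pos.2 hχ1) (mul_nonneg hχ.1 hc.le)
  refine eq_zero_of_smul_add_smul_eq_zero (T := N) (R.symm.injective.comp hMi) hω0 hev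
    (sub_nonneg.2 hχ.2) (mul_nonneg hχ.1 hc.le) hpos (R.injective ?_)
  rw [hdefect, map_smul, hD u hperp, map_sub, map_smul] at hu
  rw [map_zero, ← hu, map_add, map_smul, map_smul, map_smul, map_smul,
    show R (N u) = M u from R.apply_symm_apply _]
  push_cast
  module

end ConformalPartner

/-! ### Engulfing a ball -/

section Engulfing
open Set

variable {V : Type*} [NormedAddCommGroup V] [InnerProductSpace ℂ V] {K U : Set V}

/-- `K` is contained in the image of a holomorphic embedding of the unit ball into `U`. -/
def IsEngulfed (K U : Set V) : Prop :=
  ∃ G : V → V, IsHolomorphicEmbedding G (ball 0 1) U ∧ K ⊆ G '' ball 0 1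

lemma IsEngulfed.mono {K' U' : Set V} (h : IsEngulfed K U) (hK : K' ⊆ K) (hU : U ⊆ U') :
    IsEngulfed K' U' := by
  obtain ⟨G, hG, hKG⟩ := h
  exact ⟨G, hG.mono subset_rfl hU, hK.trans hKG⟩

variable [FiniteDimensional ℂ V] {F : V → V}

lemma IsHolomorphicEmbedding.isEngulfed_image_closedBall {p : V} {s : ℝ}
    (hF : IsHolomorphicEmbedding F (closedBall p s) U) (hs : 0 < s) (hU : IsOpen U) :
    IsEngulfed (F '' closedBall p s) U := by
  have : ProperSpace V := FiniteDimensional.proper ℂ V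
  obtain ⟨N, hN, hsN, hFN⟩ := hF.exists_isOpen_superset (isCompact_closedBall p s) hU
  obtain ⟨δ, hδ, hδN⟩ := (isCompact_closedBall p s).exists_thickening_subset_open hN hsN
  rw [thickening_closedBall hδ hs.le] at hδN
  have hδs : 0 < δ + s := add_pos hδ hs
  have himage := image_ball_add_smul_linearIsometryEquiv (.refl ℂ V) hδs p 0 1
  rw [mul_one] at himage
  have hinj : Function.Injective (((δ + s : ℝ) : ℂ) •
      ((LinearIsometryEquiv.refl ℂ V).toContinuousLinearEquiv : V →L[ℂ] V)) :=
    smul_right_injective V (Complex.ofReal_ne_zero.2 hδs.ne')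
  have hdil := isHolomorphicEmbedding_add_apply_sub p 0 hinj (ball 0 1)
  refine ⟨_, (hFN.mono hδN subset_rfl).comp ⟨hdil.contDiffAt, hdil.injOn, hdil.injective_fderiv,
    mapsTo_iff_image_subset.2 himage.subset⟩, ?_⟩
  rw [image_comp, himage]
  exact image_mono (closedBall_subset_ball (lt_add_of_pos_left s hδ))

lemma IsHolomorphicEmbedding.exists_forall_dist_lt_image_ball_subset {p : V} {r R : ℝ}
    (hF : IsHolomorphicEmbedding F (closedBall p R) U) (hr : 0 < r) (hrR : r < R) :
    ∃ η > 0, ∀ H : V → V, IsHolomorphicEmbedding H (closedBall p R) univ →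
      (∀ x ∈ closedBall p R, dist (H x) (F x) < η) → F '' ball p r ⊆ H '' ball p R := by
  have : ProperSpace V := FiniteDimensional.proper ℂ V
  obtain ⟨η, hη, h⟩ := _root_.exists_forall_dist_lt_image_ball_subset hr hrR hF.continuousOn
    hF.injOn (hF.isOpen_image isOpen_ball (ball_subset_closedBall.trans
      (closedBall_subset_closedBall hrR.le)))
  exact ⟨η, hη, fun H hH =>
    h H hH.continuousOn (hH.isOpen_image isOpen_ball ball_subset_closedBall)⟩

variable {e n : V} {s a b c R : ℝ}

lemma IsHolomorphicEmbedding.isEngulfed_image_ball_union_ball (he : ‖e‖ = 1) (hU : IsOpen U)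
    (hs : 0 < s) (hsb : s < b) (hR : 0 < R)
    (hF : IsHolomorphicEmbedding F (dumbbellSkeleton e s b R) U) {s' R' : ℝ} (hs' : s' < s)
    (hR' : R' < R) :
    IsEngulfed (F '' (ball 0 s' ∪ ball (((b + R : ℝ) : ℂ) • e) R')) U := by
  obtain ⟨N, hN, hsN, hFN⟩ := hF.exists_isOpen_superset (isCompact_dumbbellSkeleton e s b R) hU
  obtain ⟨r, hr, hr1⟩ : ∃ r, max 0 (max (s' / s) (R' / R)) < r ∧ r < 1 := exists_between
    (max_lt one_pos (max_lt ((div_lt_one hs).2 hs') ((div_lt_one hR).2 hR')))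
  obtain ⟨hr0, hsr, hRr⟩ : 0 < r ∧ s' / s < r ∧ R' / R < r := by simpa only [max_lt_iff] using hr
  obtain ⟨Φ, hΦ, hsΦ, hRΦ⟩ := exists_dumbbell he hs hsb hR hr0 hr1 hN hsN
  refine ⟨F ∘ Φ, hFN.comp hΦ, ?_⟩
  rw [image_comp]
  exact image_mono (union_subset
    ((ball_subset_ball ((div_lt_iff₀' hs).1 hsr).le).trans (ball_subset_closedBall.trans hsΦ))
    ((ball_subset_ball ((div_lt_iff₀' hR).1 hRr).le).trans (ball_subset_closedBall.trans hRΦ)))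

lemma isEngulfed_image_ball_union_image_ball (he : ‖e‖ = 1) (hU : IsOpen U)
    (hF : IsHolomorphicEmbedding F (ball 0 1) U) (hsa : s < a) (ha : a < 1) (hab : a < b)
    {M : V →L[ℂ] V} (hM : IsAxiallyCompatible e n c (fderiv ℂ F ((a : ℂ) • e)) M)
    (hA : ∀ x ∈ dumbbellSkeleton e s b R, a < (inner ℂ e x).re →
      F ((a : ℂ) • e) + M (x - (a : ℂ) • e) ∈ U \ F '' closedBall 0 a)
    {s' R' : ℝ} (hs'0 : 0 < s') (hs' : s' < s) (hR'0 : 0 < R') (hR' : R' < R) :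
    IsEngulfed (F '' ball 0 s' ∪ (fun x => F ((a : ℂ) • e) + M (x - (a : ℂ) • e)) ''
      ball (((b + R : ℝ) : ℂ) • e) R') U := by
  set A : V → V := fun x => F ((a : ℂ) • e) + M (x - (a : ℂ) • e)
  set z : V := ((b + R : ℝ) : ℂ) • e
  obtain ⟨s₁, hs₁', hs₁⟩ := exists_between hs'
  obtain ⟨R₁, hR₁', hR₁⟩ := exists_between hR'
  have hs : 0 < s := hs'0.trans hs'
  have hFs : IsHolomorphicEmbedding F (closedBall 0 s₁) U :=
    hF.mono (closedBall_subset_ball (hs₁.trans (hsa.trans ha))) subset_rfl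
  have hAR : IsHolomorphicEmbedding A (closedBall z R₁) univ :=
    isHolomorphicEmbedding_add_apply_sub _ _ hM.injective_right _
  obtain ⟨η₁, hη₁, hcoverF⟩ := hFs.exists_forall_dist_lt_image_ball_subset hs'0 hs₁'
  obtain ⟨η₂, hη₂, hcoverA⟩ := hAR.exists_forall_dist_lt_image_ball_subset hR'0 hR₁'
  obtain ⟨H, hH, hHF, hHA⟩ :=
    exists_isHolomorphicEmbedding_dumbbellSkeleton he hU hF hs hsa ha hab hM hA (lt_min hη₁ hη₂)
  have hs₁s : closedBall (0 : V) s₁ ⊆ closedBall 0 s := closedBall_subset_closedBall hs₁.le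
  have hR₁R : closedBall z R₁ ⊆ closedBall z R := closedBall_subset_closedBall hR₁.le
  refine (hH.isEngulfed_image_ball_union_ball he hU hs (hsa.trans hab) (hR'0.trans hR') hs₁
    hR₁).mono ?_ subset_rfl
  rw [image_union]
  exact union_subset_union
    (hcoverF H (hH.mono (hs₁s.trans subset_union_left) (subset_univ U))
      fun x hx => (hHF x (hs₁s hx)).trans_le (min_le_left _ _))
    (hcoverA H (hH.mono (hR₁R.trans (subset_union_right.trans subset_union_right)) (subset_univ U))
      fun x hx => (hHA x (hR₁R hx)).trans_le (min_le_right _ _))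

lemma isEngulfed_image_closedBall_union_closedBall_add_smul (he : ‖e‖ = 1) (hU : IsOpen U)
    (hF : IsHolomorphicEmbedding F (ball 0 1) U) (ha0 : 0 < a) (ha : a < 1) (T : V ≃ₗᵢ[ℂ] V)
    (hM : IsAxiallyCompatible e (T e) c (fderiv ℂ F ((a : ℂ) • e))
      ((c : ℂ) • (T.toContinuousLinearEquiv : V →L[ℂ] V))) {d r : ℝ}
    (hball : ball (F ((a : ℂ) • e) + (d : ℂ) • T e) d ⊆ U \ F '' closedBall 0 a)
    (hs : s < a) (hr0 : 0 ≤ r) (hr : r < d) :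
    IsEngulfed (F '' closedBall 0 s ∪ closedBall (F ((a : ℂ) • e) + (d : ℂ) • T e) r) U := by
  have hc := hM.pos
  obtain ⟨s₁, hs₁, hs₁a⟩ := exists_between (max_lt ha0 hs)
  obtain ⟨s₂, hs₁₂, hs₂a⟩ := exists_between hs₁a
  obtain ⟨d₁, hrd₁, hd₁⟩ := exists_between hr
  obtain ⟨d₂, hd₁₂, hd₂⟩ := exists_between hd₁
  obtain ⟨hs₁0, hss₁⟩ := max_lt_iff.1 hs₁
  have hd₁0 : 0 < d₁ := hr0.trans_lt hrd₁
  set y := F ((a : ℂ) • e) + (d : ℂ) • T e with hy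
  set M : V →L[ℂ] V := (c : ℂ) • (T.toContinuousLinearEquiv : V →L[ℂ] V) with hMdef
  have hbR : a + (d - d₂) / c + d₂ / c = a + d / c := by ring
  have hab : a < a + (d - d₂) / c := lt_add_of_pos_right a (div_pos (sub_pos.2 hd₂) hc)
  have hstep : M (((d / c : ℝ) : ℂ) • e) = (d : ℂ) • T e := by
    rw [hMdef, smul_apply, map_smul, smul_smul, ← Complex.ofReal_mul, mul_div_cancel₀ _ hc.ne']
    rfl
  have haffine : ∀ x, F ((a : ℂ) • e) + M (x - (a : ℂ) • e) =
      y + M (x - ((a + d / c : ℝ) : ℂ) • e) := fun x => by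
    rw [Complex.ofReal_add, add_smul, ← sub_sub, map_sub M (x - _), hstep, hy]
    abel
  have himage : ∀ r, (fun x => y + M (x - ((a + d / c : ℝ) : ℂ) • e)) ''
      ball (((a + d / c : ℝ) : ℂ) • e) r = ball y (c * r) :=
    image_ball_add_smul_linearIsometryEquiv T hc _ _
  have hengulf := isEngulfed_image_ball_union_image_ball (R := d₂ / c) he hU hF hs₂a ha hab hM
    (fun x hx hax => ?_) hs₁0 hs₁₂ (div_pos hd₁0 hc) (div_lt_div_of_pos_right hd₁₂ hc)
  · simp only [haffine, hbR, himage, mul_div_cancel₀ _ hc.ne'] at hengulf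
    exact hengulf.mono (union_subset_union (image_mono (closedBall_subset_ball hss₁))
      (closedBall_subset_ball hrd₁)) subset_rfl
  · have hxd := norm_sub_ofReal_smul_lt_of_mem_dumbbellSkeleton he hs₂a hab
      (div_pos (hd₁0.trans hd₁₂) hc).le hx hax
    rw [hbR, add_sub_cancel_left, ← mem_ball_iff_norm] at hxd
    have hAx := (himage _).subset (mem_image_of_mem _ hxd)
    rw [mul_div_cancel₀ _ hc.ne'] at hAx
    exact hball (haffine x ▸ hAx)

lemma isEngulfed_image_closedBall_union_closedBall (hU : IsOpen U)
    (hF : IsHolomorphicEmbedding F (ball 0 1) U) (ha0 : 0 < a) (ha : a < 1) {q y : V}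
    (hq : q ∈ closedBall 0 a) (hmin : IsMinOn (fun x => ‖y - F x‖) (closedBall 0 a) q)
    (hyU : ball y ‖y - F q‖ ⊆ U) (hs : s < a) {r : ℝ} (hr0 : 0 ≤ r) (hr : r < ‖y - F q‖) :
    IsEngulfed (F '' closedBall 0 s ∪ closedBall y r) U := by
  have hball : ball y ‖y - F q‖ ⊆ U \ F '' closedBall 0 a := fun x hx => by
    refine ⟨hyU hx, ?_⟩
    rintro ⟨u, hu, rfl⟩
    exact (mem_ball_iff_norm'.1 hx).not_ge (hmin hu)
  have hq1 : q ∈ ball (0 : V) 1 := closedBall_subset_ball ha hq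
  obtain ⟨e, n, c, he, hn, hc, rfl, hy, hinner⟩ := exists_normal_of_isMinOn_closedBall ha0
    ((hF.contDiffAt q hq1).differentiableAt one_ne_zero).hasFDerivAt (hF.injective_fderiv q hq1) hq
    (sub_ne_zero.1 (norm_pos_iff.1 (hr0.trans_lt hr))) hmin
  obtain ⟨T, rfl, hM⟩ :=
    exists_isAxiallyCompatible_smul_isometry (hF.injective_fderiv _ hq1) he hn hc hinner
  generalize ‖y - F ((a : ℂ) • e)‖ = d at hy hball hr
  subst hy
  exact isEngulfed_image_closedBall_union_closedBall_add_smul he hU hF ha0 ha T hM hball hs hr0 hr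

lemma exists_isMinOn_norm_sub_closedBall (hF : ContinuousOn F (closedBall 0 a)) (ha : 0 ≤ a)
    (y : V) : ∃ q ∈ closedBall 0 a, IsMinOn (fun x => ‖y - F x‖) (closedBall 0 a) q := by
  have : ProperSpace V := FiniteDimensional.proper ℂ V
  exact (isCompact_closedBall (0 : V) a).exists_isMinOn ⟨0, mem_closedBall_self ha⟩
    (continuousOn_const.sub hF).norm

lemma IsHolomorphicEmbedding.isEngulfed_union_closedBall (hU : IsOpen U)
    (hF : IsHolomorphicEmbedding F (ball 0 1) U) (hK : IsCompact K) (hKF : K ⊆ F '' ball 0 1)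
    {y : V} {r ε : ℝ} (hyU : ball y ε ⊆ U) (hne : (F '' ball 0 1 ∩ ball y ε).Nonempty)
    (hr : 0 ≤ r) (hdisj : Disjoint (closedBall y r) (F '' ball 0 1)) :
    IsEngulfed (K ∪ closedBall y r) U := by
  obtain ⟨_, ⟨w, hw, rfl⟩, hwy⟩ := hne
  rw [mem_ball_iff_norm'] at hwy
  obtain ⟨t, ht0, ht1, hKt⟩ := hF.exists_lt_one_subset_image_ball hK hKF
  obtain ⟨a, hta, ha⟩ := exists_between (max_lt ht1 (mem_ball_zero_iff.1 hw))
  obtain ⟨hta, hwa⟩ := max_lt_iff.1 hta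
  have hsub : closedBall (0 : V) a ⊆ ball 0 1 := closedBall_subset_ball ha
  obtain ⟨q, hq, hmin⟩ :=
    exists_isMinOn_norm_sub_closedBall (hF.continuousOn.mono hsub) (ht0.trans hta).le y
  have hqε : ‖y - F q‖ < ε := (hmin (mem_closedBall_zero_iff.2 hwa.le)).trans_lt hwy
  have hrq : r < ‖y - F q‖ := not_le.1 fun h => disjoint_left.1 hdisj
    (mem_closedBall_iff_norm'.2 h) (mem_image_of_mem F (hsub hq))
  exact (isEngulfed_image_closedBall_union_closedBall hU hF (ht0.trans hta) ha hq hmin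
    ((ball_subset_ball hqε.le).trans hyU) hta hr hrq).mono (union_subset_union_left _
      (hKt.trans (image_mono ball_subset_closedBall))) subset_rfl

end Engulfing

/-! ### Engulfing finitely many disjoint balls -/

section Complement
open Set

lemma sdiff_subset_or_sdiff_subset {X : Type*} [TopologicalSpace X] {U B C u v : Set X}
    (hU : IsPreconnected U) (hB : IsOpen B) (hC : IsClosed C) (hCB : C ⊆ B) (hu : IsOpen u)
    (hv : IsOpen v) (hcover : U \ C ⊆ u ∪ v) (hdisj : (U \ C) ∩ (u ∩ v) = ∅) (hBu : B \ C ⊆ u) :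
    U \ C ⊆ u ∨ U \ C ⊆ v := by
  have hcover' : U ⊆ (u \ C ∪ B) ∪ (v \ C) := fun y hy => by
    by_cases hyC : y ∈ C
    · exact .inl (.inr (hCB hyC))
    · exact (hcover ⟨hy, hyC⟩).imp (fun h => .inl ⟨h, hyC⟩) fun h => ⟨h, hyC⟩
  have hdisj' : U ∩ ((u \ C ∪ B) ∩ (v \ C)) = ∅ := by
    refine eq_empty_of_forall_notMem ?_
    rintro y ⟨hyU, hyuB, hyv, hyC⟩
    exact hdisj.subset ⟨⟨hyU, hyC⟩, hyuB.elim And.left fun hyB => hBu ⟨hyB, hyC⟩, hyv⟩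
  refine (isPreconnected_iff_subset_of_disjoint.1 hU _ _ ((hu.sdiff hC).union hB) (hv.sdiff hC)
    hcover' hdisj').imp (fun h y hy => ?_) fun h y hy => (h hy.1).1
  exact (h hy.1).elim And.left fun hyB => hBu ⟨hyB, hy.2⟩

/-- A separation of `U \ C` would extend over `C`, as it does not separate the collar `B \ C`. -/
lemma isPreconnected_sdiff_of_collar {X : Type*} [TopologicalSpace X] {U B C : Set X}
    (hU : IsPreconnected U) (hB : IsOpen B) (hC : IsClosed C) (hCB : C ⊆ B) (hBU : B ⊆ U)
    (hBC : IsPreconnected (B \ C)) : IsPreconnected (U \ C) := by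
  rw [isPreconnected_iff_subset_of_disjoint] at hBC ⊢
  intro u v hu hv hcover hdisj
  have hsub : B \ C ⊆ U \ C := sdiff_subset_sdiff_left hBU
  rcases hBC u v hu hv (hsub.trans hcover)
    (subset_empty_iff.1 ((inter_subset_inter_left _ hsub).trans hdisj.subset)) with h | h
  · exact sdiff_subset_or_sdiff_subset hU hB hC hCB hu hv hcover hdisj h
  · exact (sdiff_subset_or_sdiff_subset hU hB hC hCB hv hu (by rwa [union_comm])
      (by rwa [inter_comm v]) h).symm

variable {V : Type*} [NormedAddCommGroup V] [NormedSpace ℝ V]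

lemma isPreconnected_ball_sdiff_closedBall (hV : 1 < Module.rank ℝ V) (x : V) {r : ℝ} (hr : 0 ≤ r)
    (R : ℝ) : IsPreconnected (ball x R \ closedBall x r) := by
  have hprod : IsPreconnected (sphere (0 : V) 1 ×ˢ Ioo r R) :=
    (isPreconnected_sphere hV 0 1).prod isPreconnected_Ioo
  convert hprod.image (fun p : V × ℝ => x + p.2 • p.1) (by fun_prop) using 1
  ext y
  constructor
  · rintro ⟨hyR, hyr⟩
    rw [mem_ball_iff_norm] at hyR
    rw [mem_closedBall_iff_norm, not_le] at hyr
    have hy : ‖y - x‖ ≠ 0 := (hr.trans_lt hyr).ne'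
    refine ⟨(‖y - x‖⁻¹ • (y - x), ‖y - x‖), ⟨?_, hyr, hyR⟩, ?_⟩
    · rw [mem_sphere_zero_iff_norm, norm_smul, norm_inv, norm_norm, inv_mul_cancel₀ hy]
    · beta_reduce
      rw [smul_inv_smul₀ hy, add_sub_cancel]
  · rintro ⟨⟨e, t⟩, ⟨he, hrt, htR⟩, rfl⟩
    have hnorm : ‖x + t • e - x‖ = t := by
      rw [add_sub_cancel_left, norm_smul, Real.norm_of_nonneg (hr.trans hrt.le),
        mem_sphere_zero_iff_norm.1 he, mul_one]
    rw [mem_sdiff, mem_ball_iff_norm, mem_closedBall_iff_norm, hnorm, not_le]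
    exact ⟨htR, hrt⟩

lemma isPreconnected_sdiff_closedBall (hV : 1 < Module.rank ℝ V) {U : Set V}
    (hU : IsPreconnected U) {x : V} {r R : ℝ} (hr : 0 ≤ r) (hrR : r < R) (hR : ball x R ⊆ U) :
    IsPreconnected (U \ closedBall x r) :=
  isPreconnected_sdiff_of_collar hU isOpen_ball isClosed_closedBall (closedBall_subset_ball hrR) hR
    (isPreconnected_ball_sdiff_closedBall hV x hr R)

lemma one_lt_rank_real_of_complex (E : Type*) [AddCommGroup E] [Module ℂ E] [Nontrivial E] :
    1 < Module.rank ℝ E := by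
  have hrank : 1 ≤ Module.rank ℂ E := Cardinal.one_le_iff_pos.2 rank_pos
  rw [rank_real_of_complex]
  calc (1 : Cardinal) < 2 * 1 := by norm_num
    _ ≤ 2 * Module.rank ℂ E := by gcongr

end Complement

section Absorption
open Set

variable {V : Type*} [NormedAddCommGroup V] [InnerProductSpace ℂ V] [FiniteDimensional ℂ V]
  {K U : Set V}

lemma IsEngulfed.isOpen_setOf_insert (K U : Set V) : IsOpen {y | IsEngulfed (insert y K) U} := by
  rw [isOpen_iff_mem_nhds]
  rintro y ⟨G, hG, hKG⟩
  rw [insert_subset_iff] at hKG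
  filter_upwards [(hG.isOpen_image isOpen_ball subset_rfl).mem_nhds hKG.1] with z hz
  exact ⟨G, hG, insert_subset hz hKG.2⟩

lemma IsEngulfed.insert (h : IsEngulfed K U) (hU : IsOpen U) (hUc : IsPreconnected U)
    (hK : IsCompact K) {p : V} (hp : p ∈ U) : IsEngulfed (insert p K) U := by
  obtain ⟨F, hF, hKF⟩ := h
  have h0 : (0 : V) ∈ ball 0 1 := mem_ball_self one_pos
  have hne : (U ∩ {y | IsEngulfed (Insert.insert y K) U}).Nonempty :=
    ⟨F 0, hF.mapsTo h0, F, hF, insert_subset (mem_image_of_mem F h0) hKF⟩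
  refine hUc.subset_of_closure_inter_subset (IsEngulfed.isOpen_setOf_insert K U) hne ?_ hp
  rintro y ⟨hy, hyU⟩
  by_contra hyK
  obtain ⟨ε, hε, hεU⟩ := Metric.isOpen_iff.1 hU y hyU
  obtain ⟨z, ⟨G, hG, hKG⟩, hz⟩ := Metric.mem_closure_iff.1 hy ε hε
  rw [insert_subset_iff] at hKG
  have hyG : y ∉ G '' ball 0 1 := fun hy => hyK ⟨G, hG, insert_subset hy hKG.2⟩
  refine hyK ((hG.isEngulfed_union_closedBall hU hK hKG.2 hεU ⟨z, hKG.1, mem_ball'.2 hz⟩ le_rfl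
    ?_).mono ?_ subset_rfl)
  · rwa [closedBall_zero, disjoint_singleton_left]
  · rw [closedBall_zero, union_singleton]

/-- The ball to be added is first protected by a larger closed ball, whose complement in `U` is
still connected; the image is then led close to it inside that complement. -/
lemma IsEngulfed.union_closedBall [Nontrivial V] {b : V} {r r₁ R : ℝ}
    (h : IsEngulfed K (U \ closedBall b r₁)) (hU : IsOpen U) (hUc : IsPreconnected U)
    (hK : IsCompact K) (hr : 0 ≤ r) (hrr₁ : r ≤ r₁) (hrR : r₁ < R) (hR : ball b R ⊆ U) :
    IsEngulfed (K ∪ closedBall b r) U := by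
  have hr₁ : 0 ≤ r₁ := hr.trans hrr₁
  obtain ⟨ρ, hr₁ρ, hρR⟩ := exists_between hrR
  let _ : NormedSpace ℝ V := .complexToReal
  obtain ⟨p, hp⟩ := (NormedSpace.sphere_nonempty (x := b)).2 (hr₁.trans hr₁ρ.le)
  rw [mem_sphere_iff_norm] at hp
  have hpR : p ∈ ball b R := mem_ball_iff_norm.2 (hp.trans_lt hρR)
  have hpr : p ∉ closedBall b r₁ := fun h => (hp ▸ mem_closedBall_iff_norm.1 h).not_gt hr₁ρ
  obtain ⟨G, hG, hKG⟩ := h.insert (hU.sdiff isClosed_closedBall)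
    (isPreconnected_sdiff_closedBall (one_lt_rank_real_of_complex V) hUc hr₁ hrR hR) hK
    ⟨hR hpR, hpr⟩
  rw [insert_subset_iff] at hKG
  have hdisj : Disjoint (closedBall b r) (G '' ball 0 1) :=
    (disjoint_sdiff_right.mono_left (closedBall_subset_closedBall hrr₁)).mono_right
      hG.mapsTo.image_subset
  exact (hG.mono subset_rfl sdiff_subset).isEngulfed_union_closedBall hU hK hKG.2 hR
    ⟨p, hKG.1, hpR⟩ hr hdisj

lemma exists_lt_lt_ball_subset_disjoint_closedBall {E : Type*} [NormedAddCommGroup E]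
    [NormedSpace ℝ E] [ProperSpace E] {U C : Set E} (hU : IsOpen U) (hC : IsClosed C) {b : E}
    {r : ℝ} (hr : 0 ≤ r) (hbU : closedBall b r ⊆ U) (hbC : Disjoint (closedBall b r) C) :
    ∃ r₁ R, r < r₁ ∧ r₁ < R ∧ ball b R ⊆ U ∧ Disjoint C (closedBall b r₁) := by
  obtain ⟨δ, hδ, hδUC⟩ := (isCompact_closedBall b r).exists_thickening_subset_open
    (hU.sdiff hC) (subset_sdiff.2 ⟨hbU, hbC⟩)
  rw [thickening_closedBall hδ hr, subset_sdiff] at hδUC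
  obtain ⟨r₁, hr₁, hr₁R⟩ := exists_between (lt_add_of_pos_left r hδ)
  exact ⟨r₁, δ + r, hr₁, hr₁R, hδUC.1,
    (hδUC.2.mono_left (closedBall_subset_ball hr₁R)).symm⟩

lemma IsHolomorphicEmbedding.isEngulfed_image_closedBall_union_biUnion [Nontrivial V] {F : V → V}
    {s : ℝ} (hs : 0 < s) (r : V → ℝ) (T : Finset V) (hU : IsOpen U) (hUc : IsPreconnected U)
    (hF : IsHolomorphicEmbedding F (closedBall 0 s) U) (hr : ∀ x ∈ T, 0 ≤ r x)
    (hTU : ∀ x ∈ T, closedBall x (r x) ⊆ U)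
    (hTF : ∀ x ∈ T, Disjoint (closedBall x (r x)) (F '' closedBall 0 s))
    (hT : (T : Set V).PairwiseDisjoint fun x => closedBall x (r x)) :
    IsEngulfed (F '' closedBall 0 s ∪ ⋃ x ∈ T, closedBall x (r x)) U := by
  classical
  have : ProperSpace V := FiniteDimensional.proper ℂ V
  let _ : NormedSpace ℝ V := .complexToReal
  induction T using Finset.induction_on generalizing U with
  | empty => simpa using hF.isEngulfed_image_closedBall hs hU
  | insert b T hb ih =>
    simp only [Finset.forall_mem_insert] at hr hTU hTF
    rw [Finset.coe_insert, pairwiseDisjoint_insert_of_notMem (by exact_mod_cast hb)] at hT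
    set K : Set V := F '' closedBall 0 s ∪ ⋃ x ∈ T, closedBall x (r x) with hKdef
    have hK : IsCompact K :=
      ((isCompact_closedBall 0 s).image_of_continuousOn hF.continuousOn).union
        (T.isCompact_biUnion fun x _ => isCompact_closedBall x (r x))
    have hbK : Disjoint (closedBall b (r b)) K :=
      hTF.1.union_right (disjoint_iUnion₂_right.2 hT.2)
    obtain ⟨r₁, R, hr₁, hr₁R, hRU, hKr₁⟩ :=
      exists_lt_lt_ball_subset_disjoint_closedBall hU hK.isClosed hr.1 hTU.1 hbK
    obtain ⟨hFr₁, hTr₁⟩ := disjoint_union_left.1 hKr₁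
    have hFU : IsHolomorphicEmbedding F (closedBall 0 s) (U \ closedBall b r₁) :=
      ⟨hF.contDiffAt, hF.injOn, hF.injective_fderiv, mapsTo_iff_image_subset.2
        (subset_sdiff.2 ⟨hF.mapsTo.image_subset, hFr₁⟩)⟩
    have hK' : IsEngulfed K (U \ closedBall b r₁) := ih (hU.sdiff isClosed_closedBall)
      (isPreconnected_sdiff_closedBall (one_lt_rank_real_of_complex V) hUc
        (hr.1.trans hr₁.le) hr₁R hRU) hFU hr.2
      (fun x hx => subset_sdiff.2 ⟨hTU.2 x hx, disjoint_iUnion₂_left.1 hTr₁ x hx⟩) hTF.2 hT.1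
    rw [Finset.set_biUnion_insert, union_left_comm, union_comm, ← hKdef]
    exact hK'.union_closedBall hU hUc hK hr.1 hr₁.le hr₁R hRU

end Absorption

/-! ### Exhaustion in measure -/

section FiniteSubcover
open Set Filter

lemma exists_finset_lt_measure_union_biUnion {X ι : Type*} [MeasurableSpace X] {μ : Measure X}
    {t : Set ι} (ht : t.Countable) (s : ι → Set X) (K : Set X) {c : ENNReal}
    (hc : c < μ (K ∪ ⋃ i ∈ t, s i)) :
    ∃ T : Finset ι, ↑T ⊆ t ∧ c < μ (K ∪ ⋃ i ∈ T, s i) := by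
  have : Countable t := ht
  have hmono : Monotone fun A : Finset t => K ∪ ⋃ i ∈ A, s i := fun A B hAB =>
    union_subset_union_right K (biUnion_mono hAB fun _ _ => subset_rfl)
  rw [biUnion_eq_iUnion, iUnion_eq_iUnion_finset, union_iUnion,
    hmono.directed_le.measure_iUnion] at hc
  obtain ⟨A, hA⟩ := lt_iSup_iff.1 hc
  refine ⟨A.map (.subtype _), by simp, ?_⟩
  simpa using hA

variable {X : Type*} [MetricSpace X] [SecondCountableTopology X] [MeasurableSpace X]
  [OpensMeasurableSpace X] [HasBesicovitchCovering X] {μ : Measure X} [SFinite μ]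

lemma exists_disjoint_closedBalls_lt_measure {O : Set X} (hO : IsOpen O) (K : Set X) {c : ENNReal}
    (hc : c < μ (K ∪ O)) :
    ∃ (T : Finset X) (r : X → ℝ), (∀ x ∈ T, 0 ≤ r x) ∧ (∀ x ∈ T, closedBall x (r x) ⊆ O) ∧
      (T : Set X).PairwiseDisjoint (fun x => closedBall x (r x)) ∧
      c < μ (K ∪ ⋃ x ∈ T, closedBall x (r x)) := by
  have hsmall : ∀ x ∈ O, ∀ δ > 0, ({ρ | closedBall x ρ ⊆ O} ∩ Ioo 0 δ).Nonempty := by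
    intro x hx δ hδ
    obtain ⟨ρ, hρ, hρO⟩ := nhds_basis_closedBall.mem_iff.1 (hO.mem_nhds hx)
    obtain ⟨η, hη0, hη⟩ := exists_between (lt_min hρ hδ)
    obtain ⟨hηρ, hηδ⟩ := lt_min_iff.1 hη
    exact ⟨η, (closedBall_subset_closedBall hηρ.le).trans hρO, hη0, hηδ⟩
  obtain ⟨t, r, ht, -, hr, hnull, hdisj⟩ :=
    Besicovitch.exists_disjoint_closedBall_covering_ae μ _ O hsmall 1 fun _ _ => one_pos
  have hle : μ (K ∪ O) ≤ μ (K ∪ ⋃ x ∈ t, closedBall x (r x)) :=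
    measure_mono_ae (ae_le_set_union EventuallyLE.rfl (ae_le_set.2 hnull))
  obtain ⟨T, hTt, hcT⟩ := exists_finset_lt_measure_union_biUnion ht _ K (hc.trans_le hle)
  exact ⟨T, r, fun x hx => (hr x (hTt hx)).2.1.le, fun x hx => (hr x (hTt hx)).1,
    hdisj.subset hTt, hcT⟩

end FiniteSubcover

section Exhaustion
open Set Filter Topology

variable {V : Type*} [NormedAddCommGroup V] [InnerProductSpace ℂ V] {U : Set V}

/-- A holomorphic embedding of the unit ball into `U`, together with the radius in `(0, 1)` of a
smaller concentric ball: one term of the sequence to be constructed. -/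
structure EmbeddedBall (U : Set V) where
  map : V → V
  radius : ℝ
  radius_pos : 0 < radius
  radius_lt_one : radius < 1
  isHolomorphicEmbedding : IsHolomorphicEmbedding map (ball 0 1) U

/-- The image of the smaller ball of an embedded ball. -/
def EmbeddedBall.image (S : EmbeddedBall U) : Set V := S.map '' ball 0 S.radius

lemma EmbeddedBall.image_subset (S : EmbeddedBall U) : S.image ⊆ U :=
  (S.isHolomorphicEmbedding.mapsTo.mono_left (ball_subset_ball S.radius_lt_one.le)).image_subset

variable [FiniteDimensional ℂ V]

lemma IsEngulfed.exists_embeddedBall {K : Set V} (h : IsEngulfed K U) (hK : IsCompact K) :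
    ∃ S : EmbeddedBall U, K ⊆ S.image := by
  obtain ⟨G, hG, hKG⟩ := h
  obtain ⟨t, ht0, ht1, hKt⟩ := hG.exists_lt_one_subset_image_ball hK hKG
  exact ⟨⟨G, t, ht0, ht1, hG⟩, hKt⟩

lemma EmbeddedBall.nonempty (hU : IsOpen U) (hne : U.Nonempty) : Nonempty (EmbeddedBall U) := by
  have : ProperSpace V := FiniteDimensional.proper ℂ V
  obtain ⟨w, hw⟩ := hne
  obtain ⟨ρ, hρ, hρU⟩ := nhds_basis_closedBall.mem_iff.1 (hU.mem_nhds hw)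
  have hid : IsHolomorphicEmbedding id (closedBall w ρ) U :=
    ⟨fun _ _ => contDiffAt_id, injOn_id _, fun x _ => by simpa using Function.injective_id, hρU⟩
  obtain ⟨S, -⟩ := (hid.isEngulfed_image_closedBall hρ hU).exists_embeddedBall
    ((isCompact_closedBall w ρ).image continuous_id)
  exact ⟨S⟩

variable [MeasurableSpace V] [BorelSpace V] {μ : Measure V} [SFinite μ]

lemma IsHolomorphicEmbedding.exists_isEngulfed_lt_measure {F : V → V} {s : ℝ}
    (hF : IsHolomorphicEmbedding F (closedBall 0 s) U) (hs : 0 < s) (hU : IsOpen U)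
    (hUc : IsPreconnected U) {c : ENNReal} (hc : c < μ U) :
    ∃ K, F '' closedBall 0 s ⊆ K ∧ IsCompact K ∧ IsEngulfed K U ∧ c < μ K := by
  have : ProperSpace V := FiniteDimensional.proper ℂ V
  have : FiniteDimensional ℝ V := FiniteDimensional.complexToReal V
  have hK := (isCompact_closedBall 0 s).image_of_continuousOn hF.continuousOn
  rcases subsingleton_or_nontrivial V with hV | hV
  · have hne : (F '' closedBall 0 s).Nonempty := ⟨F 0, 0, mem_closedBall_self hs.le, rfl⟩
    exact ⟨_, subset_rfl, hK, hF.isEngulfed_image_closedBall hs hU, hc.trans_le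
      (measure_mono ((subset_univ U).trans (Subsingleton.eq_univ_of_nonempty hne).superset))⟩
  · obtain ⟨T, r, hr, hTU, hT, hcT⟩ := exists_disjoint_closedBalls_lt_measure (μ := μ)
      (hU.sdiff hK.isClosed) (F '' closedBall 0 s)
      (hc.trans_le (measure_mono (subset_union_right.trans union_sdiff_self.superset)))
    exact ⟨_, subset_union_left, hK.union (T.isCompact_biUnion fun x _ => isCompact_closedBall _ _),
      hF.isEngulfed_image_closedBall_union_biUnion hs r T hU hUc hr
        (fun x hx => (hTU x hx).trans sdiff_subset)
        (fun x hx => disjoint_sdiff_left.mono_left (hTU x hx)) hT, hcT⟩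

lemma EmbeddedBall.exists_lt_measure (hU : IsOpen U) (hUc : IsPreconnected U) (S : EmbeddedBall U)
    {c : ENNReal} (hc : c < μ U) : ∃ S' : EmbeddedBall U, S.image ⊆ S'.image ∧ c < μ S'.image := by
  obtain ⟨K, hSK, hK, hKU, hcK⟩ := (S.isHolomorphicEmbedding.mono
    (closedBall_subset_ball S.radius_lt_one) subset_rfl).exists_isEngulfed_lt_measure
      S.radius_pos hU hUc hc
  obtain ⟨S', hKS'⟩ := hKU.exists_embeddedBall hK
  exact ⟨S', (image_mono ball_subset_closedBall).trans (hSK.trans hKS'),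
    hcK.trans_le (measure_mono hKS')⟩

lemma EmbeddedBall.exists_seq_tendsto_measure (μ : Measure V) [SFinite μ] (hU : IsOpen U)
    (hUc : IsConnected U) :
    ∃ S : ℕ → EmbeddedBall U, (∀ j, (S j).image ⊆ (S (j + 1)).image) ∧
      Tendsto (fun j => μ (S j).image) atTop (𝓝 (μ U)) := by
  obtain ⟨S₀⟩ := EmbeddedBall.nonempty hU hUc.nonempty
  have hstep (S : EmbeddedBall U) (c : ENNReal) :
      ∃ S' : EmbeddedBall U, S.image ⊆ S'.image ∧ (c < μ U → c < μ S'.image) := by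
    by_cases hc : c < μ U
    · exact (S.exists_lt_measure hU hUc.isPreconnected hc).imp fun S' h => ⟨h.1, fun _ => h.2⟩
    · exact ⟨S, subset_rfl, fun h => (hc h).elim⟩
  choose next hnext hmeasure using hstep
  set u := TopologicalSpace.denseSeq ENNReal
  let S : ℕ → EmbeddedBall U := fun j => Nat.rec S₀ (fun n S => next S (u n)) j
  have hS : ∀ j, (S j).image ⊆ (S (j + 1)).image := fun j => hnext (S j) (u j)
  refine ⟨S, hS, tendsto_order.2 ⟨fun c hc => ?_, fun c hc =>
    .of_forall fun j => (measure_mono (S j).image_subset).trans_lt hc⟩⟩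
  obtain ⟨_, ⟨n, rfl⟩, hcn, hn⟩ := (TopologicalSpace.denseRange_denseSeq ENNReal).exists_between hc
  filter_upwards [eventually_ge_atTop (n + 1)] with j hj
  exact hcn.trans ((hmeasure (S n) (u n) hn).trans_le
    (measure_mono (monotone_nat_of_le_succ hS hj)))

theorem exists_increasing_ball_images_volume_tendsto_general (μ : Measure V) [SFinite μ]
    (hU : IsOpen U) (hUc : IsConnected U) :
    ∃ (F : ℕ → V → V) (s : ℕ → ℝ),
      (∀ j, DifferentiableOn ℂ (F j) (ball 0 1)) ∧
      (∀ j, InjOn (F j) (ball 0 1)) ∧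
      (∀ j, F j '' ball 0 1 ⊆ U) ∧
      (∀ j, 0 < s j ∧ s j < 1) ∧
      (∀ j, F j '' ball 0 (s j) ⊆ F (j + 1) '' ball 0 (s (j + 1))) ∧
      Tendsto (fun j => μ (F j '' ball 0 (s j))) atTop (𝓝 (μ U)) := by
  obtain ⟨S, hS, hlim⟩ := EmbeddedBall.exists_seq_tendsto_measure μ hU hUc
  exact ⟨fun j => (S j).map, fun j => (S j).radius,
    fun j x hx => ((S j).isHolomorphicEmbedding.contDiffAt x hx).differentiableAt one_ne_zero
      |>.differentiableWithinAt,
    fun j => (S j).isHolomorphicEmbedding.injOn,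
    fun j => (S j).isHolomorphicEmbedding.mapsTo.image_subset,
    fun j => ⟨(S j).radius_pos, (S j).radius_lt_one⟩, hS, hlim⟩

end Exhaustion

/-- **Proposition 2.6.** For a bounded connected open set `U ⊆ ℂ^m` there are injective
holomorphic maps `F_j : B^m(0,1) → U` and numbers `0 < s_j < 1` with
`F_{j+1}(B^m(0,s_{j+1})) ⊇ F_j(B^m(0,s_j))` for all `j`, and
`vol(F_j(B^m(0,s_j))) → vol(U)` as `j → ∞`. -/
theorem exists_increasing_ball_images_volume_tendsto {m : ℕ}
    (U : Set (EuclideanSpace ℂ (Fin m))) (hUopen : IsOpen U) (hUconn : IsConnected U)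
    (hUbdd : Bornology.IsBounded U) :
    ∃ (F : ℕ → EuclideanSpace ℂ (Fin m) → EuclideanSpace ℂ (Fin m)) (s : ℕ → ℝ),
      (∀ j, DifferentiableOn ℂ (F j) (ball 0 1)) ∧
      (∀ j, Set.InjOn (F j) (ball 0 1)) ∧
      (∀ j, F j '' ball 0 1 ⊆ U) ∧
      (∀ j, 0 < s j ∧ s j < 1) ∧
      (∀ j, F j '' ball 0 (s j) ⊆ F (j + 1) '' ball 0 (s (j + 1))) ∧
      Filter.Tendsto (fun j => (volume (F j '' ball 0 (s j))).toReal)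
        Filter.atTop (nhds (volume U).toReal) := by
  obtain ⟨F, s, hF, hinj, hFU, hs, hmono, hlim⟩ :=
    exists_increasing_ball_images_volume_tendsto_general volume hUopen hUconn
  exact ⟨F, s, hF, hinj, hFU, hs, hmono,
    (ENNReal.tendsto_toReal hUbdd.measure_lt_top.ne).comp hlim⟩
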